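/- arXiv:2312.07140 — 6 statements merged into one kernel-verified Lean document; each statement's English description precedes it below -/
import Mathlib

section
/- For every fixed ε > 0 there exist constants α with 0 < α < 1 and C > 0 with the following property. Let 𝒢 = (G_1, …, G_ℓ) be a connected temporal graph with orbit number r = |𝒢/Aut(𝒢)| and let S be an orbit of Aut(𝒢). For any u ∈ S and any time step t with t + C·r·|S|^{1+ε} ≤ ℓ, there exists a temporal walk W starting at u at time step t that visits at least α·|S| vertices of S and spans at most C·r·|S|^{1+ε} time steps. -/
/-!
Let `S` be an orbit of size `N`, let `r` be the number of orbits and `Γ = Aut(𝒢)`.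

*Reaching many vertices.* From any vertex every orbit can be reached within `r` time steps
(`orbits_reached`). A double counting over `Γ` then shows that the set of vertices of `S` reachable
from a fixed vertex gains at least one vertex every `2r + 1` time steps until it is all of
`S` (`reach_grows`), so `d ≤ N` vertices of `S` are reachable within `(2r + 1) d` steps
(`reach_card`).

*Doubling.* By transitivity a walk that explores part of `S` can be moved by an automorphism to
start anywhere in `S`. After a first walk that visits `A ⊆ S`, wait until `d` start vertices are
available for a second one; on average over these start vertices and over the automorphisms
the second visited set `B` overlaps `A` in at most `|A| |B| / d` vertices (`exists_small_overlap`).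
Hence two explorations of about `2ᵏ` vertices combine to one of about `2ᵏ⁺¹` vertices, with relative
loss at most `2ᵏ / d` and `O(r d)` additional time steps (`Explores.double`).

*Choice of `d`.* Let `2ᴷ ≤ N < 2ᴷ⁺¹` and `d = (K - k)² 2ᵏ`, which is at most `N` as long as
`K - k ≥ 4`. The losses `1 / i²`, for `i = K, …, 5`, have a telescoping product bounded below by
a constant, and the total time is `O(r 2ᴷ K³)` (`explores_pow`). Since `K ≤ log₂ N`, this is
`O(r N (log N)³)`, which is at most `C r N^(1+ε)`.
-/

open scoped BigOperators

/-- A temporal graph on a finite vertex set `V`: a lifetime `ℓ` together with a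
snapshot graph `snap t` for every time step `t` (only `t ∈ [1, ℓ]` is relevant). -/
structure TemporalGraph (V : Type) [Fintype V] where
  lifetime : ℕ
  snap : ℕ → SimpleGraph V

namespace TemporalGraph

variable {V : Type} [Fintype V]

/-- A temporal graph is connected if every snapshot within its lifetime is connected. -/
def IsConnectedTG (𝒢 : TemporalGraph V) : Prop :=
  ∀ t, 1 ≤ t → t ≤ 𝒢.lifetime → (𝒢.snap t).Connected

/-- `W` is a temporal walk starting at time step `t` and ending at time step `t'`:
at each time step `s` with `t ≤ s < t'` it either waits or traverses an edge of
the snapshot `G_s`. -/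
def IsWalk (𝒢 : TemporalGraph V) (W : ℕ → V) (t t' : ℕ) : Prop :=
  1 ≤ t ∧ t ≤ t' ∧ t' ≤ 𝒢.lifetime ∧
    ∀ s, t ≤ s → s < t' → W (s + 1) = W s ∨ (𝒢.snap s).Adj (W s) (W (s + 1))

/-- The set of vertices visited by `W` between time steps `t` and `t'`. -/
def visited (W : ℕ → V) (t t' : ℕ) : Set V := W '' Set.Icc t t'

/-- `σ` is an automorphism of the temporal graph `𝒢`, i.e. an automorphism of
every snapshot within the lifetime. -/
def IsAut (𝒢 : TemporalGraph V) (σ : Equiv.Perm V) : Prop :=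
  ∀ t, 1 ≤ t → t ≤ 𝒢.lifetime →
    ∀ u v : V, (𝒢.snap t).Adj u v ↔ (𝒢.snap t).Adj (σ u) (σ v)

/-- The orbit of a vertex `u` under `Aut(𝒢)`. -/
def orbit (𝒢 : TemporalGraph V) (u : V) : Set V :=
  {v | ∃ σ : Equiv.Perm V, 𝒢.IsAut σ ∧ σ u = v}

/-- `S` is an orbit of `Aut(𝒢)`. -/
def IsOrbit (𝒢 : TemporalGraph V) (S : Set V) : Prop :=
  ∃ u : V, S = 𝒢.orbit u

/-- The orbit number of `𝒢`: the number of orbits of `Aut(𝒢)` on `V`. -/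
noncomputable def orbitNumber (𝒢 : TemporalGraph V) : ℕ :=
  (Set.range 𝒢.orbit).ncard

/-- Vertices reachable from `u` by a temporal walk starting at time step `t`
and ending at a time step at most `t'`. -/
def reachSet (𝒢 : TemporalGraph V) (u : V) (t t' : ℕ) : Set V :=
  {v | ∃ t'' ≤ t', ∃ W : ℕ → V, 𝒢.IsWalk W t t'' ∧ W t = u ∧ W t'' = v}

/-- `W` is a temporal walk that only traverses orbit boundary edges
(edges between two different orbits); waiting is allowed. -/
def IsBoundaryWalk (𝒢 : TemporalGraph V) (W : ℕ → V) (t t' : ℕ) : Prop :=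
  1 ≤ t ∧ t ≤ t' ∧ t' ≤ 𝒢.lifetime ∧
    ∀ s, t ≤ s → s < t' → W (s + 1) = W s ∨
      ((𝒢.snap s).Adj (W s) (W (s + 1)) ∧ 𝒢.orbit (W s) ≠ 𝒢.orbit (W (s + 1)))

/-- The lane `L_{t,t'}(X)`: all vertices reachable from some vertex of `X` by a
temporal walk starting at time step `t`, ending at a time step at most `t'`,
that only uses orbit boundary edges. -/
def lane (𝒢 : TemporalGraph V) (X : Set V) (t t' : ℕ) : Set V :=
  {v | ∃ u ∈ X, ∃ t'' ≤ t', ∃ W : ℕ → V, 𝒢.IsBoundaryWalk W t t'' ∧ W t = u ∧ W t'' = v}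

end TemporalGraph

namespace TemporalGraph

variable {V : Type} [Fintype V]

/-! ### Walks with prescribed visited vertices -/

/-- Some temporal walk goes from `x` at time step `s` to `y` at time step `s'` and visits all of
`A` on the way. With `A = ∅` this says that `y` is reachable from `x`; since waiting is allowed,
fixing the arrival time exactly loses nothing. -/
def Tour (𝒢 : TemporalGraph V) (s s' : ℕ) (x y : V) (A : Set V) : Prop :=
  ∃ W : ℕ → V, 𝒢.IsWalk W s s' ∧ W s = x ∧ W s' = y ∧ A ⊆ visited W s s'

theorem Tour.refl (𝒢 : TemporalGraph V) {s s' : ℕ} (h1 : 1 ≤ s) (hs : s ≤ s')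
    (h2 : s' ≤ 𝒢.lifetime) (x : V) : 𝒢.Tour s s' x x {x} := by
  refine ⟨fun _ => x, ⟨h1, hs, h2, fun _ _ _ => Or.inl rfl⟩, rfl, rfl, ?_⟩
  rintro _ rfl
  exact ⟨s, ⟨le_rfl, hs⟩, rfl⟩

theorem Tour.mono {𝒢 : TemporalGraph V} {s s' : ℕ} {x y : V} {A B : Set V}
    (h : 𝒢.Tour s s' x y A) (hBA : B ⊆ A) : 𝒢.Tour s s' x y B := by
  obtain ⟨W, h1, h2, h3, h4⟩ := h
  exact ⟨W, h1, h2, h3, hBA.trans h4⟩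

theorem Tour.trans {𝒢 : TemporalGraph V} {s s' s'' : ℕ} {x y z : V} {A B : Set V}
    (h : 𝒢.Tour s s' x y A) (h' : 𝒢.Tour s' s'' y z B) : 𝒢.Tour s s'' x z (A ∪ B) := by
  obtain ⟨W, ⟨a1, a2, a3, a4⟩, rfl, hy, hA⟩ := h
  obtain ⟨U, ⟨b1, b2, b3, b4⟩, hU, rfl, hB⟩ := h'
  have hUW : ∀ i, s' ≤ i → (if i ≤ s' then W i else U i) = U i := by
    intro i hi
    split_ifs with h
    · have : i = s' := le_antisymm h hi
      subst this
      rw [hy, hU]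
    · rfl
  refine ⟨fun i => if i ≤ s' then W i else U i, ⟨a1, a2.trans b2, b3, ?_⟩, ?_, hUW _ b2, ?_⟩
  · intro i hi hi'
    by_cases h : i < s'
    · have h1 : i ≤ s' := h.le
      have h2 : i + 1 ≤ s' := h
      simpa [h1, h2] using a4 i hi h
    · have h1 : s' ≤ i := not_lt.mp h
      have h2 : s' ≤ i + 1 := by omega
      simp only [hUW i h1, hUW (i + 1) h2]
      exact b4 i h1 hi'
  · simp [a2]
  · rintro v (hv | hv)
    · obtain ⟨i, ⟨hi1, hi2⟩, rfl⟩ := hA hv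
      exact ⟨i, ⟨hi1, hi2.trans b2⟩, by simp [hi2]⟩
    · obtain ⟨i, ⟨hi1, hi2⟩, rfl⟩ := hB hv
      exact ⟨i, ⟨a2.trans hi1, hi2⟩, hUW i hi1⟩

theorem Tour.step {𝒢 : TemporalGraph V} {s : ℕ} {x y : V} (h1 : 1 ≤ s)
    (h2 : s + 1 ≤ 𝒢.lifetime) (h : (𝒢.snap s).Adj x y) : 𝒢.Tour s (s + 1) x y ∅ := by
  refine ⟨fun i => if i ≤ s then x else y, ⟨h1, by omega, h2, ?_⟩, by simp, by simp, by simp⟩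
  intro i hi hi'
  obtain rfl : i = s := by omega
  right
  simpa using h

theorem Tour.reach_trans {𝒢 : TemporalGraph V} {s s' s'' : ℕ} {x y z : V}
    (h : 𝒢.Tour s s' x y ∅) (h' : 𝒢.Tour s' s'' y z ∅) : 𝒢.Tour s s'' x z ∅ := by
  simpa using h.trans h'

/-! ### The automorphism group -/

/-- `Aut(𝒢)` as a subgroup of the permutations of the vertex set. -/
def autGroup (𝒢 : TemporalGraph V) : Subgroup (Equiv.Perm V) where
  carrier := {σ | 𝒢.IsAut σ}
  mul_mem' := by
    intro a b ha hb t h1 h2 u v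
    rw [hb t h1 h2 u v, ha t h1 h2 (b u) (b v)]
    rfl
  one_mem' := fun _ _ _ _ _ => Iff.rfl
  inv_mem' := by
    intro a ha t h1 h2 u v
    rw [ha t h1 h2 (a⁻¹ u) (a⁻¹ v)]
    simp

theorem Tour.map {𝒢 : TemporalGraph V} {s s' : ℕ} {x y : V} {A : Set V}
    (h : 𝒢.Tour s s' x y A) (g : 𝒢.autGroup) : 𝒢.Tour s s' (g • x) (g • y) ((g • ·) '' A) := by
  obtain ⟨W, ⟨a1, a2, a3, a4⟩, rfl, rfl, hA⟩ := h
  refine ⟨fun i => g • W i, ⟨a1, a2, a3, ?_⟩, rfl, rfl, ?_⟩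
  · intro i hi hi'
    rcases a4 i hi hi' with h | h
    · left; simp only [h]
    · right
      exact (g.2 i (a1.trans hi) (by omega) _ _).1 h
  · rintro _ ⟨v, hv, rfl⟩
    obtain ⟨i, hi, rfl⟩ := hA hv
    exact ⟨i, hi, rfl⟩

theorem Tour.reach_map {𝒢 : TemporalGraph V} {s s' : ℕ} {x y : V}
    (h : 𝒢.Tour s s' x y ∅) (g : 𝒢.autGroup) : 𝒢.Tour s s' (g • x) (g • y) ∅ := by
  simpa using h.map g

theorem orbit_eq (𝒢 : TemporalGraph V) (u : V) : 𝒢.orbit u = MulAction.orbit 𝒢.autGroup u := by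
  ext v
  constructor
  · rintro ⟨σ, hσ, rfl⟩
    exact ⟨⟨σ, hσ⟩, rfl⟩
  · rintro ⟨⟨σ, hσ⟩, rfl⟩
    exact ⟨σ, hσ, rfl⟩

/-! ### Reaching many vertices of an orbit -/

/-- In each snapshot the quotient graph on the orbits is connected, and by symmetry an edge between
two orbits gives every vertex of the one a neighbour in the other. So the number of orbits
met by the reachable set grows in each time step until all orbits are met. -/
theorem orbits_reached (𝒢 : TemporalGraph V) (hc : 𝒢.IsConnectedTG) (x : V) {s : ℕ} (h1 : 1 ≤ s)
    (j : ℕ) (hj : s + j ≤ 𝒢.lifetime) :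
    𝒢.orbit '' {y | 𝒢.Tour s (s + j) x y ∅} = Set.range 𝒢.orbit ∨
      j + 1 ≤ (𝒢.orbit '' {y | 𝒢.Tour s (s + j) x y ∅}).ncard := by
  have hfin : ∀ Q : Set (Set V), Q.Finite := fun Q => Set.toFinite Q
  induction j with
  | zero =>
    right
    have : 0 < (𝒢.orbit '' {y | 𝒢.Tour s (s + 0) x y ∅}).ncard := by
      rw [Set.ncard_pos (hfin _)]
      exact ⟨_, x, (Tour.refl 𝒢 h1 le_rfl hj x).mono (Set.empty_subset _), rfl⟩
    omega
  | succ j ih =>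
    have ih := ih (by omega)
    set Q := 𝒢.orbit '' {y | 𝒢.Tour s (s + j) x y ∅} with hQ
    set Q' := 𝒢.orbit '' {y | 𝒢.Tour s (s + (j + 1)) x y ∅} with hQ'
    have hQQ' : Q ⊆ Q' := by
      rintro _ ⟨y, hy, rfl⟩
      refine ⟨y, ?_, rfl⟩
      exact Tour.reach_trans hy ((Tour.refl 𝒢 (by omega) (by omega) hj y).mono
        (Set.empty_subset _))
    by_cases hall : Q = Set.range 𝒢.orbit
    · left
      refine Set.Subset.antisymm (Set.image_subset_range _ _) ?_
      rw [← hall]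
      exact hQQ'
    · right
      have ih := ih.resolve_left hall
      obtain ⟨v, hv⟩ : ∃ v, 𝒢.orbit v ∉ Q := by
        by_contra! hcon
        apply hall
        refine Set.Subset.antisymm (Set.image_subset_range _ _) ?_
        rintro _ ⟨v, rfl⟩
        exact hcon v
      have hx : 𝒢.orbit x ∈ Q :=
        ⟨x, (Tour.refl 𝒢 h1 (by omega) (by omega) x).mono (Set.empty_subset _), rfl⟩
      obtain ⟨p⟩ := (hc (s + j) (by omega) (by omega)).preconnected x v
      obtain ⟨e, -, he1, he2⟩ := p.exists_boundary_dart {w | 𝒢.orbit w ∈ Q} hx hv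
      obtain ⟨y, hy, hye⟩ := he1
      obtain ⟨g, hg⟩ : y ∈ MulAction.orbit 𝒢.autGroup e.fst := by
        rw [← orbit_eq, ← hye, orbit_eq]
        exact MulAction.mem_orbit_self y
      have hadj : (𝒢.snap (s + j)).Adj y (g • e.snd) := by
        rw [← hg]
        exact (g.2 (s + j) (by omega) (by omega) _ _).1 e.adj
      have hnew : 𝒢.orbit e.snd ∈ Q' := by
        refine ⟨g • e.snd, Tour.reach_trans hy (Tour.step (by omega) (by omega) hadj), ?_⟩
        rw [orbit_eq, orbit_eq, MulAction.orbit_smul]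
      have hsub : insert (𝒢.orbit e.snd) Q ⊆ Q' := Set.insert_subset hnew hQQ'
      have h3 := Set.ncard_le_ncard hsub (hfin _)
      rw [Set.ncard_insert_of_notMem (show 𝒢.orbit e.snd ∉ Q from he2) (hfin _)] at h3
      omega

theorem exists_reach_orbit (𝒢 : TemporalGraph V) (hc : 𝒢.IsConnectedTG) (x v : V) {s : ℕ}
    (h1 : 1 ≤ s) (hs : s + 𝒢.orbitNumber ≤ 𝒢.lifetime) :
    ∃ g : 𝒢.autGroup, 𝒢.Tour s (s + 𝒢.orbitNumber) x (g • v) ∅ := by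
  have hall : 𝒢.orbit '' {y | 𝒢.Tour s (s + 𝒢.orbitNumber) x y ∅} = Set.range 𝒢.orbit := by
    refine (orbits_reached 𝒢 hc x h1 _ hs).resolve_right fun h => ?_
    have := h.trans (Set.ncard_le_ncard (Set.image_subset_range _ _) (Set.toFinite _))
    rw [orbitNumber] at this
    omega
  have hv : 𝒢.orbit v ∈ Set.range 𝒢.orbit := ⟨v, rfl⟩
  rw [← hall] at hv
  obtain ⟨y, hy, hyv⟩ := hv
  obtain ⟨g, hg⟩ : y ∈ MulAction.orbit 𝒢.autGroup v := by
    rw [← orbit_eq, ← hyv, orbit_eq]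
    exact MulAction.mem_orbit_self y
  exact ⟨g, by rw [show g • v = y from hg]; exact hy⟩

/-- The set of vertices of an orbit reached from `x` gains a vertex within `2r + 1` time steps.

Otherwise let `A` be the part of the orbit `o` of `u` reached, `B` the rest of it, `F` the set of
vertices reached at time `s₁ + r`, and `P` the set of vertices from which `B` can be reached from
time `s₁ + r + 1` on, so that `F` and `P` are disjoint. A vertex `v` is reachable within the first
`r` steps from some `x₀ ∈ o`, and reaches some `x₁ ∈ o` within the last `r` steps. Every
automorphism `g` with `g x₀ ∈ A` puts `g v` into `F`, hence `g x₁` into `A`; as equally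
many `g` move `x₀` and `x₁` into `A`, the two conditions are equivalent, and `g = 1` shows that `v`
lies in `F` or in `P`. So an edge of the connected snapshot at time `s₁ + r` leads from `F` to `P`,
a contradiction. -/
theorem reach_grows (𝒢 : TemporalGraph V) (hc : 𝒢.IsConnectedTG) (u x w : V) {s s₁ : ℕ}
    (h1 : 1 ≤ s) (hss : s ≤ s₁) (hs : s₁ + (2 * 𝒢.orbitNumber + 1) ≤ 𝒢.lifetime)
    (hw : w ∈ 𝒢.orbit u) (hwA : ¬ 𝒢.Tour s s₁ x w ∅) :
    ∃ y ∈ 𝒢.orbit u, ¬ 𝒢.Tour s s₁ x y ∅ ∧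
      𝒢.Tour s (s₁ + (2 * 𝒢.orbitNumber + 1)) x y ∅ := by
  classical
  by_contra! hcon
  set r := 𝒢.orbitNumber with hr
  have htot : s₁ + (2 * r + 1) = s₁ + r + 1 + r := by ring
  rw [htot] at hcon hs
  have hkey : ∀ v, 𝒢.Tour s (s₁ + r) x v ∅ ∨
      ∃ y ∈ 𝒢.orbit u, ¬ 𝒢.Tour s s₁ x y ∅ ∧ 𝒢.Tour (s₁ + r + 1) (s₁ + r + 1 + r) v y ∅ := by
    intro v
    obtain ⟨g₀, hg₀⟩ := exists_reach_orbit 𝒢 hc u v (s := s₁) (by omega) (by omega)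
    obtain ⟨g₁, hg₁⟩ := exists_reach_orbit 𝒢 hc v u (s := s₁ + r + 1) (by omega) (by omega)
    have hx₀ : 𝒢.Tour s₁ (s₁ + r) (g₀⁻¹ • u) v ∅ := by
      simpa using hg₀.reach_map g₀⁻¹
    -- `Z h` collects the automorphisms that move `h • u` into the reached part of the orbit.
    let Z : 𝒢.autGroup → Finset 𝒢.autGroup := fun h =>
      Finset.univ.filter fun g => 𝒢.Tour s s₁ x (g • h • u) ∅
    have hcard : ∀ h, (Z h).card = (Z 1).card := by
      intro h
      refine Finset.card_bij (fun g _ => g * h) ?_ ?_ ?_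
      · intro g hg
        simpa [Z, mul_smul] using hg
      · intro a _ b _ hab
        exact mul_right_cancel hab
      · intro b hb
        refine ⟨b * h⁻¹, ?_, by simp⟩
        simpa [Z, mul_smul] using hb
    have hsub : Z g₀⁻¹ ⊆ Z g₁ := by
      intro g hg
      simp only [Z, Finset.mem_filter, Finset.mem_univ, true_and] at hg ⊢
      by_contra hcon'
      refine hcon (g • g₁ • u) ?_ hcon' ?_
      · rw [orbit_eq, ← mul_smul]
        exact MulAction.mem_orbit _ _
      · have hwait : 𝒢.Tour (s₁ + r) (s₁ + r + 1) (g • v) (g • v) ∅ :=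
          (Tour.refl 𝒢 (by omega) (by omega) (by omega) _).mono (Set.empty_subset _)
        exact ((hg.reach_trans (hx₀.reach_map g)).reach_trans hwait).reach_trans
          (hg₁.reach_map g)
    have heq : Z g₀⁻¹ = Z g₁ := Finset.eq_of_subset_of_card_le hsub (by rw [hcard, hcard g₀⁻¹])
    by_cases hA : 𝒢.Tour s s₁ x (g₁ • u) ∅
    · left
      have : (1 : 𝒢.autGroup) ∈ Z g₀⁻¹ := by
        rw [heq]
        simpa [Z] using hA
      have : 𝒢.Tour s s₁ x (g₀⁻¹ • u) ∅ := by simpa [Z] using this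
      exact this.reach_trans hx₀
    · right
      refine ⟨g₁ • u, ?_, hA, hg₁⟩
      rw [orbit_eq]
      exact MulAction.mem_orbit _ _
  -- `w` lies outside of `F`: waiting there would reach it in time.
  have hwF : ¬ 𝒢.Tour s (s₁ + r) x w ∅ := fun h =>
    hcon w hw hwA (h.reach_trans
      ((Tour.refl 𝒢 (by omega) (by omega) hs w).mono (Set.empty_subset _)))
  have hxF : 𝒢.Tour s (s₁ + r) x x ∅ :=
    (Tour.refl 𝒢 h1 (by omega) (by omega) x).mono (Set.empty_subset _)
  obtain ⟨p⟩ := (hc (s₁ + r) (by omega) (by omega)).preconnected x w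
  obtain ⟨e, -, he1, he2⟩ := p.exists_boundary_dart {v | 𝒢.Tour s (s₁ + r) x v ∅} hxF hwF
  obtain ⟨y, hy, hyA, hey⟩ := (hkey e.snd).resolve_left he2
  exact hcon y hy hyA
    ((Tour.reach_trans he1 (Tour.step (by omega) (by omega) e.adj)).reach_trans hey)

theorem reach_card (𝒢 : TemporalGraph V) (hc : 𝒢.IsConnectedTG) (u x : V) {s : ℕ}
    (h1 : 1 ≤ s) (d : ℕ) (hd : d ≤ (𝒢.orbit u).ncard)
    (hs : s + d * (2 * 𝒢.orbitNumber + 1) ≤ 𝒢.lifetime) :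
    d ≤ {y | y ∈ 𝒢.orbit u ∧ 𝒢.Tour s (s + d * (2 * 𝒢.orbitNumber + 1)) x y ∅}.ncard := by
  induction d with
  | zero => exact Nat.zero_le _
  | succ d ih =>
    have hmul : (d + 1) * (2 * 𝒢.orbitNumber + 1)
        = d * (2 * 𝒢.orbitNumber + 1) + (2 * 𝒢.orbitNumber + 1) := by ring
    rw [hmul, ← add_assoc] at hs ⊢
    have ih := ih (by omega) (by omega)
    set s₁ := s + d * (2 * 𝒢.orbitNumber + 1) with hs₁
    have hsub : {y | y ∈ 𝒢.orbit u ∧ 𝒢.Tour s s₁ x y ∅} ⊆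
        {y | y ∈ 𝒢.orbit u ∧ 𝒢.Tour s (s₁ + (2 * 𝒢.orbitNumber + 1)) x y ∅} := by
      rintro y ⟨hy, hy'⟩
      exact ⟨hy, hy'.reach_trans
        ((Tour.refl 𝒢 (by omega) (by omega) hs y).mono (Set.empty_subset _))⟩
    by_cases hall : ∀ w ∈ 𝒢.orbit u, 𝒢.Tour s s₁ x w ∅
    · refine hd.trans (Set.ncard_le_ncard ?_ (Set.toFinite _))
      exact fun w hw => hsub ⟨hw, hall w hw⟩
    · push Not at hall
      obtain ⟨w, hw, hwA⟩ := hall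
      obtain ⟨y, hy, hyA, hy'⟩ := reach_grows 𝒢 hc u x w h1 (by omega) hs hw hwA
      have hlt := Set.ncard_lt_ncard
        (s := {y | y ∈ 𝒢.orbit u ∧ 𝒢.Tour s s₁ x y ∅})
        ((Set.ssubset_iff_of_subset hsub).2 ⟨y, ⟨hy, hy'⟩, fun h => hyA h.2⟩) (Set.toFinite _)
      omega

/-! ### Combining explorations -/

/-- Averaging over a finite group acting transitively: if `A`, `B`, `X` lie in one orbit, then
some group element moves `x₀` into `X` and `B` to a set that overlaps `A` in at most
`|A| |B| / |X|` points. -/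
theorem exists_small_overlap {Γ Ω : Type} [Group Γ] [Fintype Γ] [DecidableEq Ω] [MulAction Γ Ω]
    (x₀ : Ω) (A B X : Finset Ω) (hA : ∀ a ∈ A, a ∈ MulAction.orbit Γ x₀)
    (hB : ∀ a ∈ B, a ∈ MulAction.orbit Γ x₀) (hX : ∀ a ∈ X, a ∈ MulAction.orbit Γ x₀)
    (hne : X.Nonempty) :
    ∃ g : Γ, g • x₀ ∈ X ∧ (A ∩ B.image (g • ·)).card * X.card ≤ A.card * B.card := by
  -- the number of group elements taking `b` to `a` is the same for all points of the orbit
  let n : Ω → Ω → ℕ := fun b a => (Finset.univ.filter fun g : Γ => g • b = a).card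
  have hn : ∀ b ∈ MulAction.orbit Γ x₀, ∀ a ∈ MulAction.orbit Γ x₀, n b a = n x₀ x₀ := by
    rintro _ ⟨h, rfl⟩ _ ⟨k, rfl⟩
    refine Finset.card_bij (fun g _ => k⁻¹ * g * h) ?_ ?_ ?_
    · intro g hg
      simp only [Finset.mem_filter, Finset.mem_univ, true_and] at hg ⊢
      rw [mul_smul, mul_smul, hg, inv_smul_smul]
    · intro a _ b _ hab
      simpa using hab
    · intro g hg
      refine ⟨k * g * h⁻¹, ?_, by group⟩
      simp only [Finset.mem_filter, Finset.mem_univ, true_and] at hg ⊢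
      rw [mul_smul, mul_smul, inv_smul_smul, hg]
  have hpos : 0 < n x₀ x₀ := Finset.card_pos.2 ⟨1, by simp⟩
  have hx₀ : x₀ ∈ MulAction.orbit Γ x₀ := MulAction.mem_orbit_self _
  set G := Finset.univ.filter fun g : Γ => g • x₀ ∈ X with hG
  have hGcard : G.card = X.card * n x₀ x₀ := by
    rw [Finset.card_eq_sum_card_fiberwise (f := fun g : Γ => g • x₀) (t := X)
      (by intro g hg; simpa [G] using hg), ← smul_eq_mul, ← Finset.sum_const]
    refine Finset.sum_congr rfl fun a ha => ?_
    rw [← hn x₀ hx₀ a (hX a ha)]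
    congr 1
    ext g
    simp only [G, Finset.mem_filter, Finset.mem_univ, true_and, and_iff_right_iff_imp]
    rintro rfl
    exact ha
  have hsum : ∑ g : Γ, (A ∩ B.image (g • ·)).card = A.card * B.card * n x₀ x₀ := by
    have h1 : ∀ g : Γ, (A ∩ B.image (g • ·)).card
        = ∑ a ∈ A, ∑ b ∈ B, if g • b = a then 1 else 0 := by
      intro g
      rw [← Finset.filter_mem_eq_inter, Finset.card_filter]
      refine Finset.sum_congr rfl fun a _ => ?_
      rw [← Finset.card_filter]
      split_ifs with h
      · obtain ⟨b, hb, rfl⟩ := Finset.mem_image.1 h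
        symm
        rw [Finset.card_eq_one]
        refine ⟨b, ?_⟩
        ext c
        simp only [Finset.mem_filter, Finset.mem_singleton, smul_left_cancel_iff]
        constructor
        · exact fun h => h.2
        · rintro rfl; exact ⟨hb, rfl⟩
      · symm
        rw [Finset.card_eq_zero, Finset.filter_eq_empty_iff]
        intro b hb hba
        exact h (Finset.mem_image.2 ⟨b, hb, hba⟩)
    simp_rw [h1]
    rw [Finset.sum_comm]
    have h2 : ∀ a ∈ A, ∑ g : Γ, ∑ b ∈ B, (if g • b = a then 1 else 0) = B.card * n x₀ x₀ := by
      intro a ha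
      rw [Finset.sum_comm, ← smul_eq_mul, ← Finset.sum_const]
      refine Finset.sum_congr rfl fun b hb => ?_
      rw [← Finset.card_filter]
      exact hn b (hB b hb) a (hA a ha)
    rw [Finset.sum_congr rfl h2, Finset.sum_const, smul_eq_mul, mul_assoc]
  by_contra! hcon
  have h3 : G.card * (A.card * B.card + 1) ≤ (A.card * B.card * n x₀ x₀) * X.card := by
    rw [← hsum, Finset.sum_mul, ← smul_eq_mul, ← Finset.sum_const]
    calc ∑ _g ∈ G, (A.card * B.card + 1)
        ≤ ∑ g ∈ G, (A ∩ B.image (g • ·)).card * X.card :=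
          Finset.sum_le_sum fun g hg => hcon g (by simpa [G] using hg)
      _ ≤ ∑ g : Γ, (A ∩ B.image (g • ·)).card * X.card :=
          Finset.sum_le_sum_of_subset (Finset.subset_univ _)
  have h4 : 0 < X.card * n x₀ x₀ := Nat.mul_pos hne.card_pos hpos
  rw [hGcard] at h3
  nlinarith

/-- Starting at time step `s`, every vertex of the orbit of `u` has a tour over `T` time steps that
ends in the orbit and visits between `m` and `M` of its vertices. -/
def Explores (𝒢 : TemporalGraph V) (u : V) (s T : ℕ) (m : ℝ) (M : ℕ) : Prop :=
  ∀ x ∈ 𝒢.orbit u, ∃ y ∈ 𝒢.orbit u, ∃ A : Finset V, (∀ a ∈ A, a ∈ 𝒢.orbit u) ∧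
    m ≤ A.card ∧ A.card ≤ M ∧ 𝒢.Tour s (s + T) x y A

/-- Two explorations are joined by a stretch in which `d` vertices of the orbit are reachable;
continuing from the best of them, the two visited sets overlap in at most an `M / d` fraction. -/
theorem Explores.double {𝒢 : TemporalGraph V} (hc : 𝒢.IsConnectedTG) {u : V} {s T M d D : ℕ}
    {m : ℝ} (h1 : 1 ≤ s) (hd0 : 0 < d) (hMd : M ≤ d) (hd : d ≤ (𝒢.orbit u).ncard)
    (hD : d * (2 * 𝒢.orbitNumber + 1) ≤ D) (hs : s + (2 * T + D) ≤ 𝒢.lifetime)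
    (hfst : 𝒢.Explores u s T m M) (hsnd : 𝒢.Explores u (s + T + D) T m M) :
    𝒢.Explores u s (2 * T + D) (m * (2 - M / d)) (2 * M) := by
  classical
  intro x hx
  obtain ⟨y, hy, A, hA, hmA, hAM, htA⟩ := hfst x hx
  have huu : u ∈ 𝒢.orbit u := by rw [orbit_eq]; exact MulAction.mem_orbit_self _
  obtain ⟨z, hz, B, hB, hmB, hBM, htB⟩ := hsnd u huu
  have hcard := reach_card 𝒢 hc u y (s := s + T) (by omega) d hd (by omega)
  set X := Finset.univ.filter fun w => w ∈ 𝒢.orbit u ∧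
    𝒢.Tour (s + T) (s + T + d * (2 * 𝒢.orbitNumber + 1)) y w ∅ with hX
  have hXd : d ≤ X.card := by
    rw [← Set.ncard_coe_finset]
    simpa [X] using hcard
  obtain ⟨g, hgX, hg⟩ := exists_small_overlap (Γ := 𝒢.autGroup) u A B X
    (fun a ha => by rw [← orbit_eq]; exact hA a ha)
    (fun a ha => by rw [← orbit_eq]; exact hB a ha)
    (fun a ha => by rw [← orbit_eq]; exact (Finset.mem_filter.1 ha).2.1)
    (Finset.card_pos.1 (by omega))
  have hsmul : ∀ a ∈ 𝒢.orbit u, g • a ∈ 𝒢.orbit u := by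
    intro a ha
    rw [orbit_eq] at ha ⊢
    exact (MulAction.orbit_eq_iff.2 ha) ▸ MulAction.mem_orbit a g
  refine ⟨g • z, hsmul z hz, A ∪ B.image (g • ·), ?_, ?_, ?_, ?_⟩
  · intro a ha
    rcases Finset.mem_union.1 ha with h | h
    · exact hA a h
    · obtain ⟨b, hb, rfl⟩ := Finset.mem_image.1 h
      exact hsmul b (hB b hb)
  · have hBi : (B.image (g • ·)).card = B.card :=
      Finset.card_image_of_injective _ (MulAction.injective g)
    have hui := Finset.card_union_add_card_inter A (B.image (g • ·))
    rw [hBi] at hui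
    have hov : (A ∩ B.image (g • ·)).card * d ≤ A.card * M :=
      (Nat.mul_le_mul_left _ hXd).trans (hg.trans (Nat.mul_le_mul_left _ hBM))
    have hdR : (0 : ℝ) < d := by exact_mod_cast hd0
    have hovR : ((A ∩ B.image (g • ·)).card : ℝ) ≤ A.card * (M / d) := by
      rw [← mul_div_assoc, le_div_iff₀ hdR]
      exact_mod_cast hov
    have huiR : ((A ∪ B.image (g • ·)).card : ℝ) + (A ∩ B.image (g • ·)).card
        = A.card + B.card := by exact_mod_cast hui
    have hfrac : (M : ℝ) / d ≤ 1 := by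
      rw [div_le_one hdR]
      exact_mod_cast hMd
    nlinarith [mul_le_mul_of_nonneg_right hmA (sub_nonneg.2 hfrac)]
  · have h2 := Finset.card_union_le A (B.image (g • ·))
    have h3 := Finset.card_image_le (s := B) (f := (g • ·))
    omega
  · have hr : 𝒢.Tour (s + T) (s + T + D) y (g • u) ∅ :=
      (Finset.mem_filter.1 hgX).2.2.reach_trans
        ((Tour.refl 𝒢 (by omega) (by omega) (by omega) _).mono (Set.empty_subset _))
    have hend : s + (2 * T + D) = s + T + D + T := by ring
    rw [hend]
    have := (htA.trans hr).trans (htB.map g)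
    simpa using this

theorem sq_le_two_pow {i : ℕ} (hi : 4 ≤ i) : i ^ 2 ≤ 2 ^ i := by
  induction i, hi using Nat.le_induction with
  | base => norm_num
  | succ i hi ih =>
    rw [pow_succ 2 i]
    nlinarith

/-- Doubling `k` times, with `d = (K - k)² 2ᵏ` in step `k`. The relative losses are at most
`1 / i²` for `i = K - k`, and `i / (i + 1) * (1 - 1 / i²) = (i - 1) / i` makes their product
telescope, so that a constant fraction of `2ᵏ` survives. -/
theorem explores_pow {𝒢 : TemporalGraph V} (hc : 𝒢.IsConnectedTG) {u : V} {K : ℕ}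
    (hr : 1 ≤ 𝒢.orbitNumber) (hK : 2 ^ K ≤ (𝒢.orbit u).ncard) (k : ℕ) :
    ∀ i s : ℕ, k + i = K → 3 ≤ i → 1 ≤ s →
      s + 2 * 𝒢.orbitNumber * 2 ^ k * k * K ^ 2 ≤ 𝒢.lifetime →
      𝒢.Explores u s (2 * 𝒢.orbitNumber * 2 ^ k * k * K ^ 2) (2 ^ k * (i / (i + 1))) (2 ^ k) := by
  induction k with
  | zero =>
    intro i s hi hi3 h1 hs x hx
    refine ⟨x, hx, {x}, by simpa using hx, ?_, by simp, ?_⟩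
    · have : (0 : ℝ) < i + 1 := by positivity
      simp only [pow_zero, one_mul, Finset.card_singleton, Nat.cast_one]
      rw [div_le_one this]
      linarith
    · simpa using Tour.refl 𝒢 h1 (by omega) hs x
  | succ k ih =>
    intro i s hi hi3 h1 hs
    set r := 𝒢.orbitNumber with hr'
    set T := 2 * r * 2 ^ k * k * K ^ 2 with hT
    set D := 4 * r * 2 ^ k * K ^ 2 with hD
    have htime : 2 * r * 2 ^ (k + 1) * (k + 1) * K ^ 2 = 2 * T + D := by
      rw [hT, hD]; ring
    have hd : (i + 1) ^ 2 * 2 ^ k ≤ 2 ^ K := by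
      rw [← hi, show k + 1 + i = (i + 1) + k by ring, pow_add]
      exact Nat.mul_le_mul_right _ (sq_le_two_pow (by omega))
    have hDle : (i + 1) ^ 2 * 2 ^ k * (2 * r + 1) ≤ D := by
      calc (i + 1) ^ 2 * 2 ^ k * (2 * r + 1) ≤ K ^ 2 * 2 ^ k * (4 * r) := by
            gcongr <;> omega
        _ = D := by rw [hD]; ring
    rw [htime] at hs ⊢
    have hdbl := Explores.double hc h1 (d := (i + 1) ^ 2 * 2 ^ k) (by positivity)
      (Nat.le_mul_of_pos_left _ (by positivity)) (hd.trans hK) hDle hs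
      (ih (i + 1) s (by omega) (by omega) h1 (by omega))
      (ih (i + 1) (s + T + D) (by omega) (by omega) (by omega) (by omega))
    intro x hx
    obtain ⟨y, hy, A, hA, hmA, hAM, ht⟩ := hdbl x hx
    refine ⟨y, hy, A, hA, le_trans ?_ hmA, by rw [pow_succ]; omega, ht⟩
    have hi0 : (0 : ℝ) ≤ i := by positivity
    push_cast
    have h2k : (0 : ℝ) < 2 ^ k := by positivity
    have hfrac : (2 : ℝ) ^ k / (((i : ℝ) + 1) ^ 2 * 2 ^ k) = 1 / ((i : ℝ) + 1) ^ 2 := by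
      field_simp
    rw [hfrac, pow_succ, mul_assoc, mul_assoc]
    refine mul_le_mul_of_nonneg_left ?_ h2k.le
    have hdiff : ((i : ℝ) + 1) / (i + 1 + 1) * (2 - 1 / ((i : ℝ) + 1) ^ 2) - 2 * (i / (i + 1))
        = 1 / ((i + 1) * (i + 2)) := by
      field_simp
      ring
    have : (0 : ℝ) ≤ 1 / ((i + 1) * (i + 2)) := by positivity
    linarith

end TemporalGraph

/-- Corollary 4.6: for every fixed `ε > 0` there are constants
`0 < α < 1` and `C > 0` such that in any connected temporal graph with orbit number
`r`, for any orbit `S`, any `u ∈ S` and suitable start time `t`, there is a temporal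
walk starting at `u` at time `t` visiting at least `α·|S|` vertices of `S` and spanning
at most `C·r·|S|^{1+ε}` time steps. -/
theorem constant_fraction_orbit_exploration (ε : ℝ) (hε : 0 < ε) :
    ∃ α C : ℝ, 0 < α ∧ α < 1 ∧ 0 < C ∧
      ∀ (V : Type) [Fintype V], ∀ 𝒢 : TemporalGraph V, 𝒢.IsConnectedTG →
      ∀ r : ℕ, r = 𝒢.orbitNumber →
      ∀ S : Set V, 𝒢.IsOrbit S →
      ∀ u ∈ S, ∀ t : ℕ, 1 ≤ t →
      (t : ℝ) + C * r * (S.ncard : ℝ) ^ ((1 : ℝ) + ε) ≤ (𝒢.lifetime : ℝ) →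
      ∃ t' : ℕ, t ≤ t' ∧
        (t' : ℝ) - (t : ℝ) ≤ C * r * (S.ncard : ℝ) ^ ((1 : ℝ) + ε) ∧
        ∃ W : ℕ → V, 𝒢.IsWalk W t t' ∧ W t = u ∧
          α * (S.ncard : ℝ) ≤ ((TemporalGraph.visited W t t' ∩ S).ncard : ℝ) := by
  have hlog2 : 0 < Real.log 2 := Real.log_pos (by norm_num)
  refine ⟨1 / 40, 2 * (1 / (Real.log 2 * (ε / 3))) ^ 3, by norm_num, by norm_num, by positivity, ?_⟩
  intro V _ 𝒢 hc r hr S hS u hu t ht hlife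
  obtain ⟨v, rfl⟩ := hS
  set N := (𝒢.orbit v).ncard with hN
  have hN0 : 0 < N := (Set.ncard_pos (Set.toFinite _)).2 ⟨u, hu⟩
  set C : ℝ := 2 * (1 / (Real.log 2 * (ε / 3))) ^ 3 with hC
  have hC0 : 0 < C := by positivity
  have hrange : (Set.range 𝒢.orbit).Nonempty := ⟨_, v, rfl⟩
  have hr1 : 1 ≤ 𝒢.orbitNumber := (Set.ncard_pos (Set.toFinite _)).2 hrange
  have hNR : (1 : ℝ) ≤ N := by exact_mod_cast hN0
  have hbound : 0 ≤ C * r * (N : ℝ) ^ ((1 : ℝ) + ε) := by positivity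
  by_cases hsmall : N < 16
  · -- a single vertex is already a constant fraction
    have htl : t ≤ 𝒢.lifetime := by
      have : (t : ℝ) ≤ 𝒢.lifetime := by linarith
      exact_mod_cast this
    refine ⟨t, le_rfl, by simpa using hbound, fun _ => u,
      ⟨ht, le_rfl, htl, fun _ _ _ => Or.inl rfl⟩, rfl, ?_⟩
    have hpos : 0 < (TemporalGraph.visited (fun _ => u) t t ∩ 𝒢.orbit v).ncard :=
      (Set.ncard_pos (Set.toFinite _)).2 ⟨u, ⟨t, ⟨le_rfl, le_rfl⟩, rfl⟩, hu⟩
    have h1 : (1 : ℝ) ≤ ((TemporalGraph.visited (fun _ => u) t t ∩ 𝒢.orbit v).ncard : ℝ) := by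
      exact_mod_cast hpos
    have h2 : (N : ℝ) < 16 := by exact_mod_cast hsmall
    linarith
  · set K := Nat.log 2 N with hKdef
    have hKN : 2 ^ K ≤ N := Nat.pow_log_le_self 2 hN0.ne'
    have hNK : N < 2 ^ (K + 1) := Nat.lt_pow_succ_log_self (by norm_num) N
    have hK4 : 4 ≤ K := by
      by_contra hK
      have : 2 ^ (K + 1) ≤ 2 ^ 4 := Nat.pow_le_pow_right (by norm_num) (by omega)
      omega
    obtain ⟨k, hk⟩ : ∃ k, k + 4 = K := ⟨K - 4, by omega⟩
    set T := 2 * 𝒢.orbitNumber * 2 ^ k * k * K ^ 2 with hT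
    have hTle : (T : ℝ) ≤ C * r * (N : ℝ) ^ ((1 : ℝ) + ε) := by
      have h1 : T ≤ 2 * r * N * K ^ 3 := by
        have h2k : 2 ^ k ≤ N := (Nat.pow_le_pow_right (by norm_num) (by omega)).trans hKN
        calc T ≤ 2 * 𝒢.orbitNumber * N * K * K ^ 2 := by
              rw [hT]; gcongr; omega
          _ = 2 * r * N * K ^ 3 := by rw [hr]; ring
      have hKlog : (K : ℝ) * Real.log 2 ≤ (N : ℝ) ^ (ε / 3) / (ε / 3) := by
        refine le_trans ?_ (Real.log_le_rpow_div (by positivity) (by positivity))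
        rw [← Real.log_pow]
        exact Real.log_le_log (by positivity) (by exact_mod_cast hKN)
      have hKle : (K : ℝ) ≤ 1 / (Real.log 2 * (ε / 3)) * (N : ℝ) ^ (ε / 3) := by
        rw [← le_div_iff₀ hlog2] at hKlog
        refine hKlog.trans (le_of_eq ?_)
        field_simp
      have hK3 : (K : ℝ) ^ 3 ≤ (1 / (Real.log 2 * (ε / 3))) ^ 3 * (N : ℝ) ^ ε := by
        refine (pow_le_pow_left₀ (by positivity) hKle 3).trans (le_of_eq ?_)
        rw [mul_pow, ← Real.rpow_mul_natCast (by positivity)]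
        congr 2
        push_cast
        ring
      have h1R : (T : ℝ) ≤ 2 * r * N * K ^ 3 := by exact_mod_cast h1
      refine h1R.trans ?_
      rw [Real.rpow_add (by positivity), Real.rpow_one, hC]
      calc 2 * (r : ℝ) * N * K ^ 3
          ≤ 2 * r * N * ((1 / (Real.log 2 * (ε / 3))) ^ 3 * (N : ℝ) ^ ε) := by gcongr
        _ = _ := by ring
    have hlifeT : t + T ≤ 𝒢.lifetime := by
      have : (t : ℝ) + T ≤ 𝒢.lifetime := by linarith
      exact_mod_cast this
    obtain ⟨y, -, A, hA, hmA, -, W, hW, hWt, -, hAW⟩ :=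
      TemporalGraph.explores_pow hc hr1 hKN k 4 t hk (by norm_num) ht hlifeT u hu
    refine ⟨t + T, by omega, by push_cast; linarith, W, hW, hWt, ?_⟩
    have hsub : (A : Set V) ⊆ TemporalGraph.visited W t (t + T) ∩ 𝒢.orbit v :=
      fun a ha => ⟨hAW ha, hA a ha⟩
    have hle := Set.ncard_le_ncard hsub (Set.toFinite _)
    rw [Set.ncard_coe_finset] at hle
    have hleR : (A.card : ℝ) ≤ ((TemporalGraph.visited W t (t + T) ∩ 𝒢.orbit v).ncard : ℝ) := by
      exact_mod_cast hle
    have hNK' : (N : ℝ) ≤ 2 ^ k * 32 := by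
      have : N ≤ 2 ^ k * 32 := by
        rw [← hk, show k + 4 + 1 = k + 5 by ring, pow_add] at hNK
        omega
      exact_mod_cast this
    norm_num at hmA
    linarith
end

section
/- For every fixed ε > 0 there exists a constant C > 0 with the following property. Let 𝒢 = (G_1, …, G_ℓ) be a connected temporal graph with n vertices and orbit number r = |𝒢/Aut(𝒢)|, and let S be an orbit of Aut(𝒢) with |S| ≥ 2. For any vertex u and any time step t with t + C·(r·|S|^{1+ε} + n·log |S|) ≤ ℓ, there exists a temporal walk W starting at u at time step t that visits all vertices of S and spans at most C·(r·|S|^{1+ε} + n·log |S|) time steps. -/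
/-!
The exploration is possible in `O(r * |S| ^ (1 + ε))` steps, by averaging over `Γ = Aut(𝒢)`.

*Growth of the reachable part of `S`.* For a set `X` of vertices and an orbit `O` consider the
density `|X ∩ O| / |O|`, encoded as the number of `g ∈ Γ` with `g • v ∈ X` for `v ∈ O` (`hits`). If
a snapshot has an edge between two orbits, then moving along its translates carries the density of
`X` in the first orbit to the second. As the quotient of a snapshot is connected, after `r` steps
every orbit has at least the density that any given orbit had before (`hits_spread`). If the density
in `S` stayed at `d` for `2r + 1` steps, all densities would be `d` after `r` and after `r + 1`
steps, so the reachable set would not grow in between, which is impossible in a connected snapshot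
unless it is everything (`hits_grow`). Hence `m (2r + 1)` steps reach at least `min(m, |S|)` vertices
of `S` (`card_reach_inter`).

*A constant fraction.* Given two walks visiting `a` vertices of `S` in consecutive time windows,
leave a gap of `K a (2r + 1)` steps between them. Then at least `K a` starting points for translates
of the second walk are available, and by averaging some translate repeats at most `a / K` vertices
(`Visits.merge`). Iterating, `(2 - 1/K) ^ j` vertices are visited in `O(r * 2 ^ j)` steps until a
`1 / K` fraction of `S` is visited; for large `K` this takes `O(r * |S| ^ (1 + ε/2))` steps
(`visits_fraction`).

*Exhaustion.* A uniformly random translate of that walk visits on average a `1 / K` fraction of the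
vertices of `S` not yet visited, and the start of a suitable translate is reached in `|S| (2r + 1)`
steps. So `O(log |S|)` rounds suffice (`rounds`), and the logarithm is absorbed by `|S| ^ (ε/2)`.
-/

open scoped BigOperators

/-! ### Temporal walks and reachable sets -/

namespace OrbitExploration

open Finset

set_option linter.unusedSectionVars false

section Walks

variable {V : Type} [DecidableEq V]

/-- Some temporal walk goes from `u` at time `t` to `v` at time `t'` in the infinite sequence of
snapshots `G` and visits every vertex of `A` on the way. -/
def Trip (G : ℕ → SimpleGraph V) (t t' : ℕ) (u v : V) (A : Finset V) : Prop :=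
  ∃ W : ℕ → V, (∀ s, t ≤ s → s < t' → W (s + 1) = W s ∨ (G s).Adj (W s) (W (s + 1))) ∧
    W t = u ∧ W t' = v ∧ ∀ a ∈ A, ∃ s, t ≤ s ∧ s ≤ t' ∧ W s = a

variable {G : ℕ → SimpleGraph V}

lemma Trip.refl (t : ℕ) (u : V) : Trip G t t u u {u} :=
  ⟨fun _ => u, fun _ _ _ => Or.inl rfl, rfl, rfl, fun _ ha =>
    ⟨t, le_rfl, le_rfl, (Finset.mem_singleton.1 ha).symm⟩⟩

lemma Trip.mono {t t' : ℕ} {u v : V} {A B : Finset V} (h : Trip G t t' u v A) (hB : B ⊆ A) :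
    Trip G t t' u v B := by
  obtain ⟨W, h1, h2, h3, h4⟩ := h
  exact ⟨W, h1, h2, h3, fun a ha => h4 a (hB ha)⟩

lemma Trip.trans {t t₁ t₂ : ℕ} {u v w : V} {A B : Finset V} (ht : t ≤ t₁) (ht' : t₁ ≤ t₂)
    (h : Trip G t t₁ u v A) (h' : Trip G t₁ t₂ v w B) : Trip G t t₂ u w (A ∪ B) := by
  obtain ⟨W, h1, h2, h3, h4⟩ := h
  obtain ⟨W', h1', h2', h3', h4'⟩ := h'
  have key : ∀ s, t₁ ≤ s → (if s ≤ t₁ then W s else W' s) = W' s := by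
    intro s hs
    split_ifs with h
    · obtain rfl : s = t₁ := le_antisymm h hs
      rw [h3, h2']
    · rfl
  refine ⟨fun s => if s ≤ t₁ then W s else W' s, ?_, ?_, ?_, ?_⟩
  · intro s hs hs'
    by_cases hst : s < t₁
    · have e1 : s ≤ t₁ := hst.le
      have e2 : s + 1 ≤ t₁ := hst
      simpa only [e1, e2, if_true] using h1 s hs hst
    · have e1 := key s (by omega)
      have e2 := key (s + 1) (by omega)
      simp only [e1, e2]
      exact h1' s (by omega) hs'
  · simp [ht, h2]
  · simpa only [key t₂ ht'] using h3'
  · intro a ha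
    rcases Finset.mem_union.1 ha with ha | ha
    · obtain ⟨s, hs, hs', e⟩ := h4 a ha
      exact ⟨s, hs, hs'.trans ht', by simp [hs', e]⟩
    · obtain ⟨s, hs, hs', e⟩ := h4' a ha
      exact ⟨s, ht.trans hs, hs', by simpa only [key s hs] using e⟩

lemma Trip.step (t : ℕ) {u v : V} (h : v = u ∨ (G t).Adj u v) : Trip G t (t + 1) u v ∅ := by
  refine ⟨fun s => if s ≤ t then u else v, ?_, by simp, by simp, by simp⟩
  intro s hs hs'
  obtain rfl : s = t := by omega
  simpa using h

open scoped Classical in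
/-- The vertices at which a walk starting in `X` at time `t` can be after `m` time steps. -/
noncomputable def reach [Fintype V] (G : ℕ → SimpleGraph V) (t : ℕ) (X : Finset V) :
    ℕ → Finset V
  | 0 => X
  | m + 1 => univ.filter fun w => ∃ x ∈ reach G t X m, w = x ∨ (G (t + m)).Adj x w

variable [Fintype V]

lemma mem_reach_succ {t m : ℕ} {X : Finset V} {w : V} :
    w ∈ reach G t X (m + 1) ↔ ∃ x ∈ reach G t X m, w = x ∨ (G (t + m)).Adj x w := by
  simp [reach]

lemma reach_subset_succ (t : ℕ) (X : Finset V) (m : ℕ) :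
    reach G t X m ⊆ reach G t X (m + 1) := fun w hw => mem_reach_succ.2 ⟨w, hw, Or.inl rfl⟩

lemma reach_mono (t : ℕ) (X : Finset V) : Monotone (reach G t X) :=
  monotone_nat_of_le_succ (reach_subset_succ t X)

lemma reach_add (t : ℕ) (X : Finset V) (m m' : ℕ) :
    reach G t X (m + m') = reach G (t + m) (reach G t X m) m' := by
  induction m' with
  | zero => rfl
  | succ m' ih =>
    ext w
    rw [← add_assoc, mem_reach_succ, mem_reach_succ, ih, add_assoc]

lemma trip_of_mem_reach {t m : ℕ} {u w : V} (h : w ∈ reach G t {u} m) :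
    Trip G t (t + m) u w ∅ := by
  induction m generalizing w with
  | zero =>
    obtain rfl : w = u := by simpa [reach] using h
    exact (Trip.refl t w).mono (by simp)
  | succ m ih =>
    obtain ⟨x, hx, hw⟩ := mem_reach_succ.1 h
    exact ((ih hx).trans (by omega) (by omega) (Trip.step (t + m) hw)).mono (by simp)

lemma exists_adj_of_connected {H : SimpleGraph V} (hH : H.Connected) {X : Finset V}
    (hX : X.Nonempty) (hX' : X ≠ univ) : ∃ a ∈ X, ∃ b ∉ X, H.Adj a b := by
  obtain ⟨a, ha⟩ := hX
  obtain ⟨b, hb⟩ : ∃ b, b ∉ X := by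
    by_contra! hcon
    exact hX' (Finset.eq_univ_iff_forall.2 hcon)
  obtain ⟨p⟩ := hH.preconnected a b
  obtain ⟨d, -, h1, h2⟩ := p.exists_boundary_dart (X : Set V) (by simpa using ha) (by simpa using hb)
  exact ⟨d.fst, by simpa using h1, d.snd, by simpa using h2, d.adj⟩

end Walks

/-! ### Averaging over the automorphism group -/

section Averaging

variable {V : Type} [DecidableEq V] {Γ : Type} [Group Γ] [Fintype Γ] [MulAction Γ V]

/-- The number of group elements that move `v` into `X`. Up to the factor `|Γ|`, this is the density
of `X` in the orbit of `v`; unlike the density, it needs no reference to the orbit itself. -/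
def hits (Γ : Type) [Group Γ] [Fintype Γ] [MulAction Γ V] (X : Finset V) (v : V) : ℕ :=
  #{g : Γ | g • v ∈ X}

lemma hits_smul (X : Finset V) (g : Γ) (v : V) : hits Γ X (g • v) = hits Γ X v := by
  unfold hits
  refine Finset.card_bij (fun h _ => h * g) ?_ ?_ ?_
  · intro h hh
    simpa [mul_smul] using hh
  · intro a _ b _ hab
    exact mul_right_cancel hab
  · intro b hb
    exact ⟨b * g⁻¹, by simpa [mul_smul] using hb, by simp⟩

lemma hits_mono {X Y : Finset V} (h : X ⊆ Y) (v : V) : hits Γ X v ≤ hits Γ Y v :=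
  Finset.card_le_card fun g hg => by
    simp only [Finset.mem_filter, Finset.mem_univ, true_and] at hg ⊢
    exact h hg

lemma hits_lt {X Y : Finset V} (h : X ⊆ Y) {v : V} (hv : v ∈ Y) (hv' : v ∉ X) :
    hits Γ X v < hits Γ Y v := by
  refine Finset.card_lt_card ⟨fun g hg => ?_, fun hcon => ?_⟩
  · simp only [Finset.mem_filter, Finset.mem_univ, true_and] at hg ⊢
    exact h hg
  · have := @hcon 1 (by simpa using hv)
    exact hv' (by simpa using this)

/-- `S` is an orbit of `Γ`, or empty. -/
def OrbitSet (Γ : Type) [Group Γ] [MulAction Γ V] (S : Finset V) : Prop :=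
  ∀ x ∈ S, ∀ y, y ∈ S ↔ ∃ g : Γ, g • x = y

/-- A uniformly random group element moves `x ∈ S` to a uniformly distributed point of the
orbit `S`. -/
lemma hits_mul_card {S : Finset V} (hS : OrbitSet Γ S) (X : Finset V) {x : V} (hx : x ∈ S) :
    hits Γ X x * #S = #(X ∩ S) * Fintype.card Γ := by
  have h1 : ∑ y ∈ S, hits Γ X y = hits Γ X x * #S := by
    rw [Finset.sum_congr rfl (g := fun _ => hits Γ X x), Finset.sum_const, smul_eq_mul, mul_comm]
    intro y hy
    obtain ⟨g, rfl⟩ := (hS x hx y).1 hy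
    exact hits_smul X g x
  have h2 : ∑ y ∈ S, hits Γ X y = ∑ g : Γ, #{y ∈ S | g • y ∈ X} := by
    simp only [hits, Finset.card_filter]
    exact Finset.sum_comm
  have h3 : ∀ g : Γ, #{y ∈ S | g • y ∈ X} = #(X ∩ S) := by
    intro g
    refine Finset.card_bij (fun y _ => g • y) ?_ ?_ ?_
    · intro y hy
      rw [Finset.mem_filter] at hy
      exact Finset.mem_inter.2 ⟨hy.2, (hS y hy.1 _).2 ⟨g, rfl⟩⟩
    · intro a _ b _ hab
      exact MulAction.injective g hab
    · intro b hb
      rw [Finset.mem_inter] at hb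
      exact ⟨g⁻¹ • b, by simpa using ⟨(hS b hb.2 _).2 ⟨g⁻¹, rfl⟩, hb.1⟩, by simp⟩
  rw [← h1, h2, Finset.sum_congr rfl fun g _ => h3 g, Finset.sum_const, smul_eq_mul, mul_comm,
    Finset.card_univ]

lemma sum_overlap {S A B : Finset V} (hS : OrbitSet Γ S) (hA : A ⊆ S) (hB : B ⊆ S) :
    (∑ g : Γ, #{b ∈ B | g • b ∈ A}) * #S = #A * #B * Fintype.card Γ := by
  have h2 : ∑ b ∈ B, hits Γ A b = ∑ g : Γ, #{y ∈ B | g • y ∈ A} := by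
    simp only [hits, Finset.card_filter]
    exact Finset.sum_comm
  rw [← h2, Finset.sum_mul, Finset.sum_congr rfl fun b hb => hits_mul_card hS A (hB hb),
    Finset.sum_const, smul_eq_mul, Finset.inter_eq_left.2 hA]
  ring

/-- Among the translates of `B` that bring `w` into `R`, some translate meets `A` in at most
`|A||B|/|R|` points. -/
lemma exists_small_overlap {S A B R : Finset V} (hS : OrbitSet Γ S) (hA : A ⊆ S) (hB : B ⊆ S)
    (hR : R ⊆ S) (hR0 : R.Nonempty) {w : V} (hw : w ∈ S) :
    ∃ g : Γ, g • w ∈ R ∧ #{b ∈ B | g • b ∈ A} * #R ≤ #A * #B := by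
  by_contra! hcon
  have hRpos : 0 < #R := hR0.card_pos
  have hSpos : 0 < #S := Finset.card_pos.2 ⟨w, hw⟩
  have hΓ : 0 < Fintype.card Γ := Fintype.card_pos
  have hw' := hits_mul_card (Γ := Γ) hS R hw
  rw [Finset.inter_eq_left.2 hR] at hw'
  have hne : ({g : Γ | g • w ∈ R} : Finset Γ).Nonempty := by
    rw [← Finset.card_pos]
    have : 0 < hits Γ R w * #S := by rw [hw']; positivity
    exact Nat.pos_of_mul_pos_right this
  have h1 : hits Γ R w * (#A * #B) < ∑ g ∈ {g : Γ | g • w ∈ R}, #{b ∈ B | g • b ∈ A} * #R := by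
    have := Finset.sum_lt_sum_of_nonempty hne (f := fun _ => #A * #B)
      (g := fun g : Γ => #{b ∈ B | g • b ∈ A} * #R) (fun g hg => hcon g (by simpa using hg))
    rwa [Finset.sum_const, smul_eq_mul] at this
  have h2 : ∑ g ∈ {g : Γ | g • w ∈ R}, #{b ∈ B | g • b ∈ A} * #R
      ≤ (∑ g : Γ, #{b ∈ B | g • b ∈ A}) * #R := by
    rw [Finset.sum_mul]
    exact Finset.sum_le_sum_of_subset (Finset.subset_univ _)
  have h3 := Nat.mul_lt_mul_of_pos_right (h1.trans_le h2) hSpos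
  have h4 : hits Γ R w * (#A * #B) * #S = #R * Fintype.card Γ * (#A * #B) := by
    rw [← hw']; ring
  have h5 : (∑ g : Γ, #{b ∈ B | g • b ∈ A}) * #R * #S = #A * #B * Fintype.card Γ * #R := by
    rw [← sum_overlap (Γ := Γ) hS hA hB]; ring
  rw [h4, h5] at h3
  exact h3.ne (by ring)

/-- Some translate of `B` meets `A` in at least `|A||B|/|S|` points. -/
lemma exists_large_overlap {S A B : Finset V} (hS : OrbitSet Γ S) (hA : A ⊆ S) (hB : B ⊆ S) :
    ∃ g : Γ, #A * #B ≤ #{b ∈ B | g • b ∈ A} * #S := by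
  by_contra! hcon
  have := Finset.sum_lt_sum_of_nonempty (Finset.univ_nonempty (α := Γ))
    (fun g _ => hcon g)
  rw [← Finset.sum_mul, sum_overlap hS hA hB, Finset.sum_const, smul_eq_mul, Finset.card_univ,
    mul_comm] at this
  exact lt_irrefl _ this

lemma card_smul_inter (g : Γ) (A B : Finset V) :
    #(A ∩ B.image (g • ·)) = #{b ∈ B | g • b ∈ A} := by
  symm
  refine Finset.card_bij (fun b _ => g • b) ?_ ?_ ?_
  · intro b hb
    rw [Finset.mem_filter] at hb
    exact Finset.mem_inter.2 ⟨hb.2, Finset.mem_image_of_mem _ hb.1⟩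
  · intro a _ b _ hab
    exact MulAction.injective g hab
  · intro x hx
    obtain ⟨hx, hx'⟩ := Finset.mem_inter.1 hx
    obtain ⟨b, hb, rfl⟩ := Finset.mem_image.1 hx'
    exact ⟨b, Finset.mem_filter.2 ⟨hb, hx⟩, rfl⟩

end Averaging

/-! ### Growth of the reachable part of an orbit -/

section Growth

variable {V : Type} [DecidableEq V] [Fintype V] {Γ : Type} [Group Γ] [Fintype Γ] [MulAction Γ V]
  {G : ℕ → SimpleGraph V}

/-- `Γ` acts on every snapshot by automorphisms. -/
def Acts (Γ : Type) [Group Γ] [MulAction Γ V] (G : ℕ → SimpleGraph V) : Prop :=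
  ∀ (t : ℕ) (g : Γ) (u v : V), (G t).Adj u v → (G t).Adj (g • u) (g • v)

lemma Trip.smul (hG : Acts Γ G) (g : Γ) {t t' : ℕ} {u v : V} {A : Finset V}
    (h : Trip G t t' u v A) : Trip G t t' (g • u) (g • v) (A.image (g • ·)) := by
  obtain ⟨W, h1, rfl, rfl, h4⟩ := h
  refine ⟨fun s => g • W s, fun s hs hs' => ?_, rfl, rfl, ?_⟩
  · exact (h1 s hs hs').imp (fun e => congrArg (g • ·) e) (hG s g _ _)
  · intro a ha
    obtain ⟨b, hb, rfl⟩ := Finset.mem_image.1 ha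
    obtain ⟨s, hs, hs', rfl⟩ := h4 b hb
    exact ⟨s, hs, hs', rfl⟩

lemma hits_le_of_adj (hG : Acts Γ G) {t m : ℕ} {X : Finset V} {a b : V}
    (hab : (G (t + m)).Adj a b) :
    hits Γ (reach G t X m) a ≤ hits Γ (reach G t X (m + 1)) b :=
  Finset.card_le_card fun g hg => by
    simp only [Finset.mem_filter, Finset.mem_univ, true_and] at hg ⊢
    exact mem_reach_succ.2 ⟨_, hg, Or.inr (hG _ g _ _ hab)⟩

/-- Density is transported between orbits: within `r` steps (`r` bounding the number of orbits) the
density of the reachable set is, in every orbit, at least the density of `X` in the orbit of `x`.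
The set of orbits where this already holds gains an orbit in every step, because the snapshot has
an edge leaving their union. -/
lemma hits_spread (hG : Acts Γ G) (hconn : ∀ t, (G t).Connected) {ι : Type} [DecidableEq ι]
    (orb : V → ι) (horb : ∀ x y, orb x = orb y → ∃ g : Γ, g • x = y) {r : ℕ}
    (hr : #(univ.image orb) ≤ r) (t : ℕ) (X : Finset V) (x y : V) :
    hits Γ X x ≤ hits Γ (reach G t X r) y := by
  set Q : ℕ → Finset V := fun m => univ.filter fun y => hits Γ X x ≤ hits Γ (reach G t X m) y
    with hQ
  have memQ : ∀ m y, y ∈ Q m ↔ hits Γ X x ≤ hits Γ (reach G t X m) y := by simp [hQ]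
  have hx : ∀ m, x ∈ Q m := fun m =>
    (memQ m x).2 (hits_mono (reach_mono (G := G) t X (Nat.zero_le m)) x)
  have hQm : ∀ m, Q m ⊆ Q (m + 1) := fun m z hz =>
    (memQ _ z).2 (((memQ m z).1 hz).trans (hits_mono (reach_subset_succ t X m) z))
  have key : ∀ m, Q m = univ ∨ m + 1 ≤ #((Q m).image orb) := by
    intro m
    induction m with
    | zero => exact Or.inr (Finset.card_pos.2 ⟨_, Finset.mem_image_of_mem orb (hx 0)⟩)
    | succ m ih =>
      by_cases hu : Q m = univ
      · left
        exact Finset.univ_subset_iff.1 (hu ▸ hQm m)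
      · right
        obtain ⟨a, ha, b, hb, hab⟩ := exists_adj_of_connected (hconn (t + m)) ⟨x, hx m⟩ hu
        have hb' : b ∈ Q (m + 1) :=
          (memQ _ b).2 (((memQ m a).1 ha).trans (hits_le_of_adj hG hab))
        have hnot : orb b ∉ (Q m).image orb := by
          intro hmem
          obtain ⟨c, hc, hcb⟩ := Finset.mem_image.1 hmem
          obtain ⟨g, rfl⟩ := horb c b hcb
          exact hb ((memQ m _).2 (by rw [hits_smul]; exact (memQ m c).1 hc))
        have hsub : insert (orb b) ((Q m).image orb) ⊆ (Q (m + 1)).image orb := by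
          intro i hi
          rcases Finset.mem_insert.1 hi with rfl | hi
          · exact Finset.mem_image_of_mem _ hb'
          · exact Finset.image_subset_image (hQm m) hi
        have := Finset.card_le_card hsub
        rw [Finset.card_insert_of_notMem hnot] at this
        have := ih.resolve_left hu
        omega
  have hu : Q r = univ := by
    refine (key r).resolve_right fun h => ?_
    have := Finset.card_le_card (Finset.image_subset_image (f := orb) (Finset.subset_univ (Q r)))
    omega
  exact (memQ r y).1 (hu ▸ Finset.mem_univ y)

/-- If `2r + 1` steps did not raise the density in the orbit of `x`, then by `hits_spread` all
orbits would have that same density both after `r` and after `r + 1` steps, so the reachable set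
would not have changed in between, which connectedness only allows if it is everything. -/
lemma hits_grow (hG : Acts Γ G) (hconn : ∀ t, (G t).Connected) {ι : Type} [DecidableEq ι]
    (orb : V → ι) (horb : ∀ x y, orb x = orb y → ∃ g : Γ, g • x = y) {r : ℕ}
    (hr : #(univ.image orb) ≤ r) (t : ℕ) {X : Finset V} (hX : X.Nonempty) (x : V) :
    hits Γ X x < hits Γ (reach G t X (2 * r + 1)) x ∨ reach G t X (2 * r + 1) = univ := by
  by_contra! hcon
  obtain ⟨hle, hne⟩ := hcon
  have h1 : ∀ y, hits Γ X x ≤ hits Γ (reach G t X r) y :=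
    hits_spread hG hconn orb horb hr t X x
  have h2 : ∀ y, hits Γ (reach G t X (r + 1)) y ≤ hits Γ X x := by
    intro y
    have := hits_spread hG hconn orb horb hr (t + (r + 1)) (reach G t X (r + 1)) y x
    rw [← reach_add, show r + 1 + r = 2 * r + 1 by ring] at this
    exact this.trans hle
  have hXr : (reach G t X r).Nonempty := hX.mono (reach_mono (G := G) t X (Nat.zero_le r))
  have hne' : reach G t X r ≠ univ := fun h =>
    hne (Finset.univ_subset_iff.1 (h ▸ reach_mono (G := G) t X (show r ≤ 2 * r + 1 by omega)))
  obtain ⟨a, ha, b, hb, hab⟩ := exists_adj_of_connected (hconn (t + r)) hXr hne'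
  have := hits_lt (Γ := Γ) (reach_subset_succ t X r) (mem_reach_succ.2 ⟨a, ha, Or.inr hab⟩) hb
  exact absurd (this.trans_le (h2 b)) (not_lt.2 (h1 b))

lemma card_reach_inter (hG : Acts Γ G) (hconn : ∀ t, (G t).Connected) {ι : Type} [DecidableEq ι]
    (orb : V → ι) (horb : ∀ x y, orb x = orb y → ∃ g : Γ, g • x = y) {r : ℕ}
    (hr : #(univ.image orb) ≤ r) {S : Finset V} (hS : OrbitSet Γ S) (t : ℕ) (u : V) (m : ℕ)
    (hm : m ≤ #S) : m ≤ #(reach G t {u} (m * (2 * r + 1)) ∩ S) := by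
  induction m with
  | zero => simp
  | succ m ih =>
    have ih := ih (by omega)
    obtain ⟨x, hx⟩ : S.Nonempty := Finset.card_pos.1 (by omega)
    have hne : (reach G t {u} (m * (2 * r + 1))).Nonempty :=
      (Finset.singleton_nonempty u).mono (reach_mono (G := G) t {u} (Nat.zero_le _))
    have := hits_grow hG hconn orb horb hr (t + m * (2 * r + 1)) hne x
    rw [← reach_add, show m * (2 * r + 1) + (2 * r + 1) = (m + 1) * (2 * r + 1) by ring] at this
    rcases this with h | h
    · have h1 := hits_mul_card (Γ := Γ) hS (reach G t {u} (m * (2 * r + 1))) hx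
      have h2 := hits_mul_card (Γ := Γ) hS (reach G t {u} ((m + 1) * (2 * r + 1))) hx
      have h3 := Nat.mul_lt_mul_of_pos_right h (Finset.card_pos.2 ⟨x, hx⟩)
      rw [h1, h2] at h3
      have := Nat.lt_of_mul_lt_mul_right h3
      omega
    · rw [h, Finset.univ_inter]
      exact hm

/-! ### Visiting a constant fraction of the orbit -/

/-- From every time step some walk spanning `T` steps starts in `S` and visits at least `a`
vertices of `S`. -/
def Visits (G : ℕ → SimpleGraph V) (S : Finset V) (a T : ℕ) : Prop :=
  ∀ t, ∃ u ∈ S, ∃ v, ∃ A ⊆ S, #A = a ∧ Trip G t (t + T) u v A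

lemma visits_one {S : Finset V} (hS : S.Nonempty) : Visits G S 1 0 := by
  intro t
  obtain ⟨u, hu⟩ := hS
  exact ⟨u, hu, u, {u}, by simpa using hu, by simp, Trip.refl t u⟩

/-- Two walks visiting `a` vertices each are joined. In the time between them, `K * a` possible
starting points for the second walk become reachable, and a good choice of the translate makes the
second walk repeat at most `a / K` vertices. -/
lemma Visits.merge (hG : Acts Γ G) (hconn : ∀ t, (G t).Connected) {ι : Type} [DecidableEq ι]
    (orb : V → ι) (horb : ∀ x y, orb x = orb y → ∃ g : Γ, g • x = y) {r : ℕ}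
    (hr : #(univ.image orb) ≤ r) {S : Finset V} (hS : OrbitSet Γ S) {a a' T K : ℕ}
    (h : Visits G S a T) (ha : 0 < a) (hK : 0 < K) (hKa : K * a ≤ #S)
    (ha' : ∀ c, c * K ≤ a → a' + c ≤ 2 * a) :
    Visits G S a' (T + K * a * (2 * r + 1) + T) := by
  intro t
  obtain ⟨u, hu, v, A, hA, hAa, hW⟩ := h t
  obtain ⟨w, hw, z, B, hB, hBa, hW'⟩ := h (t + (T + K * a * (2 * r + 1)))
  set R := reach G (t + T) {v} (K * a * (2 * r + 1)) ∩ S with hRdef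
  have hR : K * a ≤ #R := card_reach_inter hG hconn orb horb hr hS (t + T) v (K * a) hKa
  have hR0 : R.Nonempty := Finset.card_pos.1 (lt_of_lt_of_le (by positivity) hR)
  obtain ⟨g, hgR, hg⟩ := exists_small_overlap hS hA hB Finset.inter_subset_right hR0 hw
  rw [hAa, hBa] at hg
  have hc : #{b ∈ B | g • b ∈ A} * K ≤ a := by
    have := (Nat.mul_le_mul_left #{b ∈ B | g • b ∈ A} hR).trans hg
    rw [← mul_assoc] at this
    exact Nat.le_of_mul_le_mul_right this ha
  have hcard : a' ≤ #(A ∪ B.image (g • ·)) := by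
    have h1 := Finset.card_union_add_card_inter A (B.image (g • ·))
    rw [card_smul_inter, Finset.card_image_of_injective _ (MulAction.injective g), hAa, hBa] at h1
    have := ha' _ hc
    omega
  have hsub : A ∪ B.image (g • ·) ⊆ S := by
    refine Finset.union_subset hA fun x hx => ?_
    obtain ⟨b, hb, rfl⟩ := Finset.mem_image.1 hx
    exact (hS b (hB hb) _).2 ⟨g, rfl⟩
  obtain ⟨D, hD, hDa⟩ := Finset.exists_subset_card_eq hcard
  refine ⟨u, hu, g • z, D, hD.trans hsub, hDa, ?_⟩
  have t2 := trip_of_mem_reach (Finset.mem_inter.1 hgR).1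
  have t3 := Trip.smul hG g hW'
  have t12 := hW.trans (by omega) (by omega) t2
  rw [add_assoc t T] at t12
  have t123 := t12.trans (by omega) (by omega) t3
  rw [add_assoc t] at t123
  exact t123.mono (hD.trans (by simp))

/-- Iterated merging: with `lam = 2 - 1 / K`, after `j` merges `lam ^ j` vertices are visited in time
`O(r * 2 ^ j)`. -/
lemma visits_iterate (hG : Acts Γ G) (hconn : ∀ t, (G t).Connected) {ι : Type} [DecidableEq ι]
    (orb : V → ι) (horb : ∀ x y, orb x = orb y → ∃ g : Γ, g • x = y) {r : ℕ}
    (hr : #(univ.image orb) ≤ r) {S : Finset V} (hS : OrbitSet Γ S) (hS0 : S.Nonempty)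
    {K : ℕ} (hK : 0 < K) {lam : ℝ} (hlam : lam = 2 - 1 / (K : ℝ)) (j : ℕ)
    (hj : ∀ i < j, K * ⌈lam ^ i⌉₊ ≤ #S) :
    ∃ T : ℕ, (T : ℝ) ≤ 2 * (K : ℝ) ^ 2 * (2 * r + 1) * (2 ^ j - lam ^ j) ∧
      Visits G S ⌈lam ^ j⌉₊ T := by
  have hK1 : (1 : ℝ) ≤ K := by exact_mod_cast hK
  have hlam1 : 1 ≤ lam := by
    have : 1 / (K : ℝ) ≤ 1 := by rw [div_le_one (by positivity)]; exact hK1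
    rw [hlam]; linarith
  induction j with
  | zero => exact ⟨0, by simp, by simpa using visits_one hS0⟩
  | succ j ih =>
    obtain ⟨T, hT, hV⟩ := ih fun i hi => hj i (by omega)
    have hpow : 1 ≤ lam ^ j := one_le_pow₀ hlam1
    have ha : 0 < ⌈lam ^ j⌉₊ := Nat.ceil_pos.2 (by linarith)
    have hceil : lam ^ j ≤ (⌈lam ^ j⌉₊ : ℝ) := Nat.le_ceil _
    have hceil' : (⌈lam ^ j⌉₊ : ℝ) ≤ 2 * lam ^ j := by
      have := Nat.ceil_lt_add_one (show 0 ≤ lam ^ j by linarith)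
      linarith
    refine ⟨_, ?_, hV.merge hG hconn orb horb hr hS (a' := ⌈lam ^ (j + 1)⌉₊) ha hK
      (hj j (by omega)) ?_⟩
    · push_cast
      have h1 : (K : ℝ) * ⌈lam ^ j⌉₊ * (2 * r + 1) ≤ K * (2 * lam ^ j) * (2 * r + 1) := by
        gcongr
      have h2 : 2 * (K : ℝ) ^ 2 * (2 * r + 1) * (2 ^ (j + 1) - lam ^ (j + 1))
          = 2 * (2 * (K : ℝ) ^ 2 * (2 * r + 1) * (2 ^ j - lam ^ j))
            + K * (2 * lam ^ j) * (2 * r + 1) := by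
        rw [pow_succ lam, show lam ^ j * lam = lam ^ j * (2 - 1 / (K : ℝ)) by rw [hlam]]
        field_simp
        ring
      linarith
    · intro c hc
      have hc' : (c : ℝ) * K ≤ ⌈lam ^ j⌉₊ := by exact_mod_cast hc
      have h1 : (c : ℝ) ≤ ⌈lam ^ j⌉₊ / (K : ℝ) := by rwa [le_div_iff₀ (by positivity)]
      have h2 : lam ^ (j + 1) ≤ 2 * (⌈lam ^ j⌉₊ : ℝ) - ⌈lam ^ j⌉₊ / (K : ℝ) := by
        have e : 2 * (⌈lam ^ j⌉₊ : ℝ) - ⌈lam ^ j⌉₊ / (K : ℝ) = ⌈lam ^ j⌉₊ * lam := by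
          rw [hlam]; ring
        rw [e, pow_succ]
        gcongr
      have h3 : c ≤ 2 * ⌈lam ^ j⌉₊ := by
        have : c * 1 ≤ c * K := Nat.mul_le_mul_left c hK
        omega
      have h4 : ⌈lam ^ (j + 1)⌉₊ ≤ 2 * ⌈lam ^ j⌉₊ - c := by
        refine Nat.ceil_le.2 ?_
        rw [Nat.cast_sub h3]
        push_cast
        linarith
      omega

/-- Some walk visits a `1 / K` fraction of `S` in time `O(r * |S| ^ δ)`, provided
`2 ≤ (2 - 1 / K) ^ δ`. -/
lemma visits_fraction (hG : Acts Γ G) (hconn : ∀ t, (G t).Connected) {ι : Type} [DecidableEq ι]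
    (orb : V → ι) (horb : ∀ x y, orb x = orb y → ∃ g : Γ, g • x = y) {r : ℕ}
    (hr : #(univ.image orb) ≤ r) {S : Finset V} (hS : OrbitSet Γ S) (hS0 : S.Nonempty)
    {K : ℕ} (hK : 2 ≤ K) {δ : ℝ} (hδ : 0 ≤ δ) (hKδ : 2 ≤ (2 - 1 / (K : ℝ)) ^ δ) :
    ∃ a T : ℕ, (T : ℝ) ≤ 2 * (K : ℝ) ^ 2 * (2 * r + 1) * (2 * #S : ℝ) ^ δ ∧
      #S ≤ K * a ∧ Visits G S a T := by
  obtain ⟨lam, hlam⟩ : ∃ lam : ℝ, lam = 2 - 1 / (K : ℝ) := ⟨_, rfl⟩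
  have hK2 : (2 : ℝ) ≤ K := by exact_mod_cast hK
  have hKinv : 1 / (K : ℝ) ≤ 1 / 2 := one_div_le_one_div_of_le (by norm_num) hK2
  have hKinv' : 0 < 1 / (K : ℝ) := by positivity
  have hlam1 : 1 < lam := by linarith
  have hlam2 : lam ≤ 2 := by linarith
  have hS1 : (1 : ℝ) ≤ #S := by exact_mod_cast hS0.card_pos
  have hex : ∃ j : ℕ, #S < K * ⌈lam ^ j⌉₊ := by
    obtain ⟨j, hj⟩ := pow_unbounded_of_one_lt (#S : ℝ) hlam1
    refine ⟨j, ?_⟩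
    have h1 : #S < ⌈lam ^ j⌉₊ := Nat.lt_ceil.2 hj
    nlinarith
  classical
  -- The first number of merges that produces the desired fraction.
  obtain ⟨J, hJ, hmin⟩ : ∃ J : ℕ, #S < K * ⌈lam ^ J⌉₊ ∧ ∀ i < J, K * ⌈lam ^ i⌉₊ ≤ #S :=
    ⟨Nat.find hex, Nat.find_spec hex, fun i hi => not_lt.1 (Nat.find_min hex hi)⟩
  obtain ⟨T, hT, hV⟩ := visits_iterate hG hconn orb horb hr hS hS0 (by omega) hlam J hmin
  refine ⟨_, T, hT.trans ?_, hJ.le, hV⟩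
  have hJle : lam ^ J ≤ 2 * #S := by
    cases J with
    | zero => simp; linarith
    | succ i =>
      have h1 := hmin i (by omega)
      have h2 : ⌈lam ^ i⌉₊ ≤ #S := by nlinarith
      have h3 : lam ^ i ≤ #S := Nat.ceil_le.1 h2
      rw [pow_succ]
      have : 0 < lam ^ i := by positivity
      nlinarith
  have h2J : (2 : ℝ) ^ J ≤ (2 * #S : ℝ) ^ δ := by
    calc (2 : ℝ) ^ J ≤ (lam ^ δ) ^ J := by
          rw [← hlam] at hKδ
          gcongr
      _ = (lam ^ J) ^ δ := by
          rw [← Real.rpow_natCast, ← Real.rpow_natCast, ← Real.rpow_mul (by linarith),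
            ← Real.rpow_mul (by linarith), mul_comm]
      _ ≤ _ := by gcongr
  have : 0 < lam ^ J := by positivity
  gcongr
  linarith

/-! ### Exhausting the orbit -/

/-- Every round moves to the start of a suitable translate of the walk given by `Visits G S a T`
and follows it; this visits a `1 / K` fraction of the vertices of `S` that are still missing. -/
lemma rounds (hG : Acts Γ G) (hconn : ∀ t, (G t).Connected) {ι : Type} [DecidableEq ι]
    (orb : V → ι) (horb : ∀ x y, orb x = orb y → ∃ g : Γ, g • x = y) {r : ℕ}
    (hr : #(univ.image orb) ≤ r) {S : Finset V} (hS : OrbitSet Γ S) (hS0 : S.Nonempty)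
    {K a T : ℕ} (hK : 0 < K) (hKa : #S ≤ K * a) (hV : Visits G S a T) (t : ℕ) (u : V) (q : ℕ) :
    ∃ v, ∃ A ⊆ S, Trip G t (t + q * (#S * (2 * r + 1) + T)) u v A ∧
      (#(S \ A) : ℝ) ≤ (1 - 1 / (K : ℝ)) ^ q * #S := by
  have hK1 : (1 : ℝ) ≤ K := by exact_mod_cast hK
  have hKinv : 1 / (K : ℝ) ≤ 1 := by rw [div_le_one (by positivity)]; exact hK1
  induction q with
  | zero => exact ⟨u, ∅, by simp, by simpa using (Trip.refl t u).mono (by simp), by simp⟩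
  | succ q ih =>
    obtain ⟨v, A, hA, hW, hcard⟩ := ih
    set t₁ := t + q * (#S * (2 * r + 1) + T) with ht₁
    obtain ⟨w, hw, z, B, hB, hBa, hW'⟩ := hV (t₁ + #S * (2 * r + 1))
    obtain ⟨g, hg⟩ := exists_large_overlap hS (A := S \ A) Finset.sdiff_subset hB
    have hfull : S ⊆ reach G t₁ {v} (#S * (2 * r + 1)) := by
      have := card_reach_inter hG hconn orb horb hr hS t₁ v #S le_rfl
      exact Finset.inter_eq_right.1 (Finset.eq_of_subset_of_card_le Finset.inter_subset_right this)
    have hgB : B.image (g • ·) ⊆ S := by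
      intro x hx
      obtain ⟨b, hb, rfl⟩ := Finset.mem_image.1 hx
      exact (hS b (hB hb) _).2 ⟨g, rfl⟩
    have t2 := trip_of_mem_reach (hfull ((hS w hw _).2 ⟨g, rfl⟩))
    have t3 := (hW.trans (by omega) (by omega) t2).trans (by omega) (by omega) (Trip.smul hG g hW')
    refine ⟨g • z, A ∪ B.image (g • ·), Finset.union_subset hA hgB, ?_, ?_⟩
    · have e : t + (q + 1) * (#S * (2 * r + 1) + T) = t₁ + #S * (2 * r + 1) + T := by
        rw [ht₁]; ring
      rw [e]
      simpa using t3
    · have hS1 : 0 < #S := hS0.card_pos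
      have ha : 0 < a := Nat.pos_of_ne_zero (by rintro rfl; omega)
      have h1 : #(S \ A) ≤ #{b ∈ B | g • b ∈ S \ A} * K := by
        rw [hBa] at hg
        have := hg.trans (Nat.mul_le_mul_left _ hKa)
        rw [← mul_assoc] at this
        exact Nat.le_of_mul_le_mul_right this ha
      have h2 : #(S \ (A ∪ B.image (g • ·))) + #{b ∈ B | g • b ∈ S \ A} = #(S \ A) := by
        rw [← card_smul_inter, ← Finset.sup_eq_union, ← sdiff_sdiff_left, add_comm]
        exact Finset.card_inter_add_card_sdiff _ _
      have h1' : (#(S \ A) : ℝ) / K ≤ #{b ∈ B | g • b ∈ S \ A} := by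
        rw [div_le_iff₀ (by positivity)]
        exact_mod_cast h1
      have h2' : (#(S \ (A ∪ B.image (g • ·))) : ℝ) + #{b ∈ B | g • b ∈ S \ A} = #(S \ A) := by
        exact_mod_cast h2
      calc (#(S \ (A ∪ B.image (g • ·))) : ℝ) ≤ (1 - 1 / (K : ℝ)) * #(S \ A) := by
            rw [sub_mul, one_mul, one_div_mul_eq_div]; linarith
        _ ≤ (1 - 1 / (K : ℝ)) * ((1 - 1 / (K : ℝ)) ^ q * #S) := by
            gcongr
        _ = _ := by ring

end Growth

lemma exists_branching {δ : ℝ} (hδ : 1 < δ) : ∃ K : ℕ, 2 ≤ K ∧ 2 ≤ (2 - 1 / (K : ℝ)) ^ δ := by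
  have h1 : Filter.Tendsto (fun K : ℕ => (2 - 1 / (K : ℝ)) ^ δ) Filter.atTop
      (nhds (((2 : ℝ) - 0) ^ δ)) := by
    refine Filter.Tendsto.rpow_const ?_ (Or.inr (by linarith))
    exact tendsto_const_nhds.sub tendsto_one_div_atTop_nhds_zero_nat
  have h2 : (2 : ℝ) < (2 - 0) ^ δ := by
    rw [sub_zero]
    simpa using Real.rpow_lt_rpow_of_exponent_lt (show (1 : ℝ) < 2 by norm_num) hδ
  obtain ⟨K, hK, hK'⟩ :=
    ((h1.eventually (lt_mem_nhds h2)).and (Filter.eventually_ge_atTop 2)).exists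
  exact ⟨K, hK', hK.le⟩

/-- The exploration bound for an infinite sequence of connected snapshots; the term `n * log |S|` is
not needed. -/
theorem explore (ε : ℝ) (hε : 0 < ε) : ∃ C : ℝ, 0 < C ∧
    ∀ (V : Type) [DecidableEq V] [Fintype V] (Γ : Type) [Group Γ] [Fintype Γ] [MulAction Γ V]
      (G : ℕ → SimpleGraph V), Acts Γ G → (∀ t, (G t).Connected) →
    ∀ (ι : Type) [DecidableEq ι] (orb : V → ι), (∀ x y, orb x = orb y → ∃ g : Γ, g • x = y) →
    ∀ r : ℕ, 1 ≤ r → #(univ.image orb) ≤ r →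
    ∀ S : Finset V, OrbitSet Γ S → S.Nonempty → ∀ (u : V) (t : ℕ),
    ∃ L : ℕ, (L : ℝ) ≤ C * (r * (#S : ℝ) ^ (1 + ε)) ∧ ∃ v, Trip G t (t + L) u v S := by
  obtain ⟨K, hK, hKδ⟩ := exists_branching (show 1 < 1 + ε / 2 by linarith)
  have hK2 : (2 : ℝ) ≤ K := by exact_mod_cast hK
  refine ⟨(K / (ε / 2) + 2) * (3 + 6 * K ^ 2 * 2 ^ (1 + ε / 2)), by positivity, ?_⟩
  intro V _ _ Γ _ _ _ G hG hconn ι _ orb horb r hr1 hr S hS hS0 u t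
  obtain ⟨a, T, hT, hKa, hV⟩ :=
    visits_fraction hG hconn orb horb hr hS hS0 hK (by linarith) hKδ
  set k : ℝ := (#S : ℝ) with hk
  have hk1 : 1 ≤ k := Nat.one_le_cast.2 hS0.card_pos
  have hlog : 0 ≤ Real.log k := Real.log_nonneg hk1
  set q : ℕ := ⌈K * Real.log k⌉₊ + 1 with hq
  have hqlow : K * Real.log k < q := by
    have := Nat.le_ceil (K * Real.log k)
    rw [hq]; push_cast; linarith
  have hqup : (q : ℝ) ≤ (K / (ε / 2) + 2) * k ^ (ε / 2) := by
    have h1 := Nat.ceil_lt_add_one (show 0 ≤ K * Real.log k by positivity)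
    have h2 : Real.log k ≤ k ^ (ε / 2) / (ε / 2) :=
      Real.log_le_rpow_div (by linarith) (by linarith)
    have h3 : 1 ≤ k ^ (ε / 2) := Real.one_le_rpow hk1 (by linarith)
    have h4 : K * Real.log k ≤ K * (k ^ (ε / 2) / (ε / 2)) := by gcongr
    have h5 : K * (k ^ (ε / 2) / (ε / 2)) = K / (ε / 2) * k ^ (ε / 2) := by ring
    rw [hq]; push_cast; linarith
  obtain ⟨v, A, hA, hW, hcard⟩ :=
    rounds hG hconn orb horb hr hS hS0 (by omega) hKa hV t u q
  have hlt : (1 - 1 / (K : ℝ)) ^ q * k < 1 := by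
    have hKinv : 1 / (K : ℝ) ≤ 1 := by rw [div_le_one (by positivity)]; linarith
    have h1 : (1 - 1 / (K : ℝ)) ^ q ≤ Real.exp (-(q / K)) := by
      calc (1 - 1 / (K : ℝ)) ^ q ≤ (Real.exp (-(1 / (K : ℝ)))) ^ q := by
            gcongr
            exact Real.one_sub_le_exp_neg _
        _ = _ := by rw [← Real.exp_nat_mul]; ring_nf
    have h2 : Real.log k < q / K := by
      rw [lt_div_iff₀ (by positivity)]; linarith
    calc (1 - 1 / (K : ℝ)) ^ q * k ≤ Real.exp (-(q / K)) * Real.exp (Real.log k) := by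
          rw [Real.exp_log (by linarith)]; gcongr
      _ = Real.exp (Real.log k - q / K) := by rw [← Real.exp_add]; ring_nf
      _ < 1 := by rw [Real.exp_lt_one_iff]; linarith
  have hSA : S ⊆ A := by
    have : #(S \ A) < 1 := by exact_mod_cast hcard.trans_lt hlt
    exact Finset.sdiff_eq_empty_iff_subset.1 (Finset.card_eq_zero.1 (by omega))
  refine ⟨_, ?_, v, hW.mono hSA⟩
  have hr1' : (1 : ℝ) ≤ r := by exact_mod_cast hr1
  have hT' : ((#S * (2 * r + 1) + T : ℕ) : ℝ)
      ≤ (3 + 6 * K ^ 2 * 2 ^ (1 + ε / 2)) * (r * k ^ (1 + ε / 2)) := by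
    push_cast
    rw [← hk]
    have h1 : k ≤ k ^ (1 + ε / 2) := by
      simpa using Real.rpow_le_rpow_of_exponent_le hk1 (show 1 ≤ 1 + ε / 2 by linarith)
    have h2 : k * (2 * r + 1) ≤ k ^ (1 + ε / 2) * (3 * r) := by
      gcongr; linarith
    rw [Real.mul_rpow (by norm_num) (by linarith)] at hT
    have h3 : 2 * (K : ℝ) ^ 2 * (2 * r + 1) * (2 ^ (1 + ε / 2) * k ^ (1 + ε / 2))
        ≤ 2 * (K : ℝ) ^ 2 * (3 * r) * (2 ^ (1 + ε / 2) * k ^ (1 + ε / 2)) := by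
      gcongr; linarith
    linarith
  have hpow : k ^ (1 + ε) = k ^ (ε / 2) * k ^ (1 + ε / 2) := by
    rw [← Real.rpow_add (by linarith)]; ring_nf
  rw [Nat.cast_mul, hpow]
  calc (q : ℝ) * ((#S * (2 * r + 1) + T : ℕ) : ℝ)
      ≤ ((K / (ε / 2) + 2) * k ^ (ε / 2))
        * ((3 + 6 * K ^ 2 * 2 ^ (1 + ε / 2)) * (r * k ^ (1 + ε / 2))) := by gcongr
    _ = _ := by ring

/-! ### Finite lifetime -/

/-- The automorphism group of a temporal graph. -/
def autGroup {V : Type} [Fintype V] (𝒢 : TemporalGraph V) : Subgroup (Equiv.Perm V) where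
  carrier := {σ | 𝒢.IsAut σ}
  one_mem' := fun _ _ _ _ _ => Iff.rfl
  mul_mem' := fun {σ τ} hσ hτ t h1 h2 u v => (hτ t h1 h2 u v).trans (hσ t h1 h2 _ _)
  inv_mem' := fun {σ} hσ t h1 h2 u v => by
    have := hσ t h1 h2 (σ⁻¹ u) (σ⁻¹ v)
    simpa using this.symm

open scoped Classical in
/-- The snapshots of a temporal graph, continued by complete graphs outside of its lifetime. -/
noncomputable def extSnap {V : Type} [Fintype V] (𝒢 : TemporalGraph V) (t : ℕ) : SimpleGraph V :=
  if 1 ≤ t ∧ t ≤ 𝒢.lifetime then 𝒢.snap t else ⊤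

end OrbitExploration

/-- Theorem 4.7: for every fixed `ε > 0` there is a constant `C > 0`
such that in any connected temporal graph with `n` vertices and orbit number `r`, any
orbit `S` with `|S| ≥ 2` can be fully visited by a temporal walk starting at any vertex
`u` at any suitable time step `t`, spanning at most `C·(r·|S|^{1+ε} + n·log₂ |S|)`
time steps. -/
theorem full_orbit_exploration (ε : ℝ) (hε : 0 < ε) :
    ∃ C : ℝ, 0 < C ∧
      ∀ (V : Type) [Fintype V], ∀ 𝒢 : TemporalGraph V, 𝒢.IsConnectedTG →
      ∀ n r : ℕ, n = Fintype.card V → r = 𝒢.orbitNumber →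
      ∀ S : Set V, 𝒢.IsOrbit S → 2 ≤ S.ncard →
      ∀ u : V, ∀ t : ℕ, 1 ≤ t →
      (t : ℝ) + C * ((r : ℝ) * (S.ncard : ℝ) ^ ((1 : ℝ) + ε)
            + (n : ℝ) * Real.logb 2 (S.ncard : ℝ))
          ≤ (𝒢.lifetime : ℝ) →
      ∃ t' : ℕ, t ≤ t' ∧
        (t' : ℝ) - (t : ℝ)
          ≤ C * ((r : ℝ) * (S.ncard : ℝ) ^ ((1 : ℝ) + ε)
              + (n : ℝ) * Real.logb 2 (S.ncard : ℝ)) ∧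
        ∃ W : ℕ → V, 𝒢.IsWalk W t t' ∧ W t = u ∧ S ⊆ TemporalGraph.visited W t t' := by
  classical
  obtain ⟨C, hC, hmain⟩ := OrbitExploration.explore ε hε
  refine ⟨C, hC, ?_⟩
  intro V _ 𝒢 hconn n r hn hr S hS hS2 u t ht hlife
  have hfin : S.Finite := Set.toFinite S
  have horb : ∀ x y, 𝒢.orbit x = 𝒢.orbit y →
      ∃ g : OrbitExploration.autGroup 𝒢, g • x = y := by
    intro x y hxy
    have hy : y ∈ 𝒢.orbit y := ⟨1, (OrbitExploration.autGroup 𝒢).one_mem, rfl⟩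
    rw [← hxy] at hy
    obtain ⟨σ, hσ, e⟩ := hy
    exact ⟨⟨σ, hσ⟩, e⟩
  have hacts : OrbitExploration.Acts (OrbitExploration.autGroup 𝒢)
      (OrbitExploration.extSnap 𝒢) := by
    intro s g x y hxy
    unfold OrbitExploration.extSnap at hxy ⊢
    split_ifs at hxy ⊢ with h
    · exact (g.2 s h.1 h.2 x y).1 hxy
    · rw [SimpleGraph.top_adj] at hxy ⊢
      exact fun e => hxy (MulAction.injective g e)
  have hconn' : ∀ s, (OrbitExploration.extSnap 𝒢 s).Connected := by
    intro s
    unfold OrbitExploration.extSnap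
    split_ifs with h
    · exact hconn s h.1 h.2
    · have : Nonempty V := ⟨u⟩
      exact SimpleGraph.connected_top
  have hr' : (Finset.univ.image 𝒢.orbit).card = r := by
    rw [hr, TemporalGraph.orbitNumber, ← Set.ncard_coe_finset]
    simp
  have hr1 : 1 ≤ r := by
    rw [← hr']
    exact Finset.card_pos.2 ⟨_, Finset.mem_image_of_mem _ (Finset.mem_univ u)⟩
  have hSorb : OrbitExploration.OrbitSet (OrbitExploration.autGroup 𝒢) hfin.toFinset := by
    obtain ⟨x₀, rfl⟩ := hS
    intro x hx y
    obtain ⟨σ, hσ, rfl⟩ := hfin.mem_toFinset.1 hx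
    rw [hfin.mem_toFinset]
    constructor
    · rintro ⟨τ, hτ, rfl⟩
      exact ⟨⟨τ, hτ⟩ * ⟨σ, hσ⟩⁻¹, by simp [Subgroup.smul_def]⟩
    · rintro ⟨g, rfl⟩
      exact ⟨g.1 * σ, (OrbitExploration.autGroup 𝒢).mul_mem g.2 hσ, rfl⟩
  have hcard : hfin.toFinset.card = S.ncard := (Set.ncard_eq_toFinset_card S hfin).symm
  have hne : hfin.toFinset.Nonempty := Finset.card_pos.1 (by omega)
  obtain ⟨L, hL, v, W, hW, hWu, -, hWS⟩ :=
    hmain V (OrbitExploration.autGroup 𝒢) (OrbitExploration.extSnap 𝒢) hacts hconn' (Set V)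
      𝒢.orbit horb r hr1 hr'.le hfin.toFinset hSorb hne u t
  rw [hcard] at hL
  have hlog : 0 ≤ (n : ℝ) * Real.logb 2 (S.ncard : ℝ) :=
    mul_nonneg (Nat.cast_nonneg n)
      (Real.logb_nonneg (by norm_num) (by exact_mod_cast (by omega : 1 ≤ S.ncard)))
  have hL' : (L : ℝ) ≤ C * ((r : ℝ) * (S.ncard : ℝ) ^ ((1 : ℝ) + ε)
      + (n : ℝ) * Real.logb 2 (S.ncard : ℝ)) :=
    hL.trans (mul_le_mul_of_nonneg_left (by linarith) hC.le)
  have hend : t + L ≤ 𝒢.lifetime := by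
    have : ((t + L : ℕ) : ℝ) ≤ (𝒢.lifetime : ℝ) := by push_cast; linarith
    exact_mod_cast this
  refine ⟨t + L, by omega, by push_cast; linarith, W, ⟨ht, by omega, hend, ?_⟩, hWu, ?_⟩
  · intro s hs hs'
    have h := hW s hs hs'
    rwa [OrbitExploration.extSnap, if_pos ⟨by omega, by omega⟩] at h
  · intro a ha
    obtain ⟨s, hs, hs', e⟩ := hWS a (hfin.mem_toFinset.2 ha)
    exact ⟨s, ⟨hs, hs'⟩, e⟩
end

section
/- For every fixed ε > 0 there exists a constant C > 0 with the following property. Let 𝒢 = (G_1, …, G_ℓ) be a connected temporal graph with n ≥ 2 vertices and orbit number r = |𝒢/Aut(𝒢)|, and suppose ℓ ≥ 1 + C·r·n^{1+ε}. Then for any start vertex u there exists a temporal walk W starting at u at time step 1 that visits all vertices of 𝒢 and spans at most C·r·n^{1+ε} time steps. -/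
/-!
The proof gives a walk with `16 * K ^ 4 * r * n` steps, where `K = Nat.log 2 n + 1`; the
polylogarithmic factor is at most a constant times `n ^ ε`.

Automorphic images of temporal walks are temporal walks, and a uniformly random automorphism
moves a vertex to a uniformly random vertex of its orbit. Fix an orbit `O` with `N` vertices. By
induction on `j`, a walk from any vertex at any time visits almost `2 ^ j` vertices of `O` in about
`2 ^ j * (r + j * K * n / N)` steps (`level`).

* For `j = 0`: every snapshot induces a connected graph on the set of orbits, so `O` can be entered
  within `r` steps (`visits_orbit`).
* For the step from `j` to `j + 1`: take a walk of level `j`, visiting a set `X` of at most `2 ^ j`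
  vertices of `O`. In about `K * 2 ^ j * n / N` further steps at least `K * 2 ^ j * n / N` vertices
  are reachable (`card_reach`), so by pigeonhole a fraction `K * 2 ^ j / N` of some orbit `C` is
  reachable. Now take a level `j` walk starting in `C`. Averaging over the automorphisms that move
  its start vertex into the reachable part of `C` yields an image meeting `X` in at most
  `2 ^ j / K` vertices (`exists_small_overlap`). Hence only a fraction `1 / (2 * K)` is lost per
  level, and at most half over the `j ≤ K` levels.

With `2 ^ j` of order `N / K` this gives a walk of `N * r + K * (K + 1) * n` steps that visits at
least `N / (4 * K)` vertices of `O` (`dense_walk`). Since any vertex can be reached within `n`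
steps, averaging once more shows that a suitable image of this walk catches a `1 / (4 * K)`
fraction of the unvisited vertices of `O` (`exists_large_overlap`, `orbit_rounds`), so `4 * K ^ 2`
rounds explore `O`. Treating the orbits one after another and summing, with the orbit sizes adding
up to `n`, yields the bound.
-/

open scoped BigOperators

namespace TemporalExploration

open Finset

/-- `Visits G t v T w A`: some temporal walk starts at `v` at time step `t`, spans `T` time
steps, ends at `w`, and visits every vertex of `A` (and possibly others). -/
def Visits {V : Type} (G : ℕ → SimpleGraph V) (t : ℕ) (v : V) (T : ℕ) (w : V)
    (A : Finset V) : Prop :=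
  ∃ W : ℕ → V, (∀ s, t ≤ s → s < t + T → W (s + 1) = W s ∨ (G s).Adj (W s) (W (s + 1))) ∧
    W t = v ∧ W (t + T) = w ∧ ∀ a ∈ A, ∃ s, t ≤ s ∧ s ≤ t + T ∧ W s = a

/-- An infinite sequence of connected graphs together with a group `Γ` of common automorphisms
whose orbits are exactly the fibers of the surjection `f`, so that `β` indexes the orbits. -/
structure SymmetricSystem {V β : Type} (G : ℕ → SimpleGraph V)
    (Γ : Subgroup (Equiv.Perm V)) (f : V → β) : Prop where
  conn : ∀ t, (G t).Connected
  adj : ∀ g ∈ Γ, ∀ t u v, (G t).Adj u v → (G t).Adj (g u) (g v)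
  orb : ∀ x y, f x = f y ↔ ∃ g ∈ Γ, g x = y
  surj : Function.Surjective f

/-- The orbit with index `b`. -/
def fib {V β : Type} [Fintype V] [DecidableEq β] (f : V → β) (b : β) : Finset V :=
  univ.filter (fun x => f x = b)

/-! ### Operations on temporal walks -/

section Walks

variable {V : Type} {G : ℕ → SimpleGraph V}

lemma Visits.refl (t : ℕ) (v : V) : Visits G t v 0 v {v} :=
  ⟨fun _ => v, fun _ _ _ => Or.inl rfl, rfl, rfl, fun a ha => ⟨t, by simp_all⟩⟩

lemma Visits.mono {t T : ℕ} {v w : V} {A B : Finset V} (h : Visits G t v T w A) (hB : B ⊆ A) :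
    Visits G t v T w B := by
  obtain ⟨W, h1, h2, h3, h4⟩ := h
  exact ⟨W, h1, h2, h3, fun a ha => h4 a (hB ha)⟩

lemma Visits.trans [DecidableEq V] {t T₁ T₂ : ℕ} {v w x : V} {A B : Finset V}
    (h : Visits G t v T₁ w A) (h' : Visits G (t + T₁) w T₂ x B) :
    Visits G t v (T₁ + T₂) x (A ∪ B) := by
  obtain ⟨W, h1, h2, h3, h4⟩ := h
  obtain ⟨W', h1', h2', h3', h4'⟩ := h'
  refine ⟨fun s => if s ≤ t + T₁ then W s else W' s, ?_, ?_, ?_, ?_⟩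
  · intro s hs hs'
    rcases lt_trichotomy s (t + T₁) with hlt | heq | hgt
    · have := h1 s hs hlt
      simpa [show s ≤ t + T₁ by omega, show s + 1 ≤ t + T₁ by omega] using this
    · subst heq
      have := h1' (t + T₁) le_rfl (by omega)
      simpa [h3, h2'] using this
    · have := h1' s (by omega) (by omega)
      simpa [show ¬ s ≤ t + T₁ by omega, show ¬ s + 1 ≤ t + T₁ by omega] using this
  · simpa using h2
  · by_cases h0 : T₂ = 0
    · subst h0
      simp only [add_zero] at h3' ⊢
      simp [h3, ← h3', h2']
    · simp only [show ¬ t + (T₁ + T₂) ≤ t + T₁ by omega, if_false]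
      rw [← add_assoc]; exact h3'
  · intro a ha
    rcases Finset.mem_union.1 ha with ha | ha
    · obtain ⟨s, hs, hs', e⟩ := h4 a ha
      exact ⟨s, hs, by omega, by simpa [hs'] using e⟩
    · obtain ⟨s, hs, hs', e⟩ := h4' a ha
      refine ⟨s, by omega, by omega, ?_⟩
      by_cases hle : s ≤ t + T₁
      · obtain rfl : s = t + T₁ := by omega
        simp [h3, ← e, h2']
      · simpa [hle] using e

lemma Visits.wait (t : ℕ) (v : V) (T : ℕ) : Visits G t v T v ∅ :=
  ⟨fun _ => v, fun _ _ _ => Or.inl rfl, rfl, rfl, by simp⟩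

lemma Visits.longer [DecidableEq V] {t T T' : ℕ} {v w : V} {A : Finset V}
    (h : Visits G t v T w A) (hT : T ≤ T') : Visits G t v T' w A := by
  have := h.trans (Visits.wait (t + T) w (T' - T))
  simpa [Nat.add_sub_cancel' hT] using this

lemma Visits.step {t : ℕ} {v w : V} (h : (G t).Adj v w) : Visits G t v 1 w ∅ := by
  refine ⟨fun s => if s ≤ t then v else w, ?_, by simp, by simp, by simp⟩
  intro s hs hs'
  obtain rfl : s = t := by omega
  right; simpa using h

lemma Visits.image [DecidableEq V] {t T : ℕ} {v w : V} {A : Finset V} (g : Equiv.Perm V)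
    (hg : ∀ t u v, (G t).Adj u v → (G t).Adj (g u) (g v)) (h : Visits G t v T w A) :
    Visits G t (g v) T (g w) (A.image g) := by
  obtain ⟨W, h1, h2, h3, h4⟩ := h
  refine ⟨fun s => g (W s), ?_, by simp [h2], by simp [h3], ?_⟩
  · intro s hs hs'
    rcases h1 s hs hs' with e | e
    · left; simp [e]
    · right; exact hg _ _ _ e
  · intro a ha
    obtain ⟨b, hb, rfl⟩ := Finset.mem_image.1 ha
    obtain ⟨s, hs, hs', e⟩ := h4 b hb
    exact ⟨s, hs, hs', by simp [e]⟩

end Walks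

/-! ### Reachability -/

/-- A connected graph has an edge leaving any proper nonempty vertex set. -/
lemma exists_crossing {V : Type} {G : SimpleGraph V} (hG : G.Connected) (P : V → Prop)
    {x y : V} (hx : P x) (hy : ¬ P y) : ∃ a b, G.Adj a b ∧ P a ∧ ¬ P b := by
  obtain ⟨p⟩ := hG.preconnected x y
  induction p with
  | nil => exact absurd hx hy
  | @cons u v w huv p ih =>
    by_cases hv : P v
    · exact ih hv hy
    · exact ⟨u, v, huv, hx, hv⟩

open Classical in
/-- The set of vertices at which a walk from `v` at time `t` can be after `s` steps. -/
noncomputable def reach {V : Type} [Fintype V] (G : ℕ → SimpleGraph V) (t : ℕ) (v : V) (s : ℕ) :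
    Finset V := univ.filter (fun w => Visits G t v s w ∅)

lemma mem_reach {V : Type} [Fintype V] {G : ℕ → SimpleGraph V} {t s : ℕ} {v w : V} :
    w ∈ reach G t v s ↔ Visits G t v s w ∅ := by
  simp [reach]

/-- If each edge `x y` lifts along `f` to an edge at any other vertex with the same label as
`x`, then every time step reaches a new label, until all labels are reached. It is used for the
orbit map and for the identity. -/
lemma card_image_reach {V β : Type} [Fintype V] [Fintype β] [DecidableEq β]
    {G : ℕ → SimpleGraph V} (f : V → β) (hG : ∀ t, (G t).Connected)
    (hsurj : Function.Surjective f)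
    (hf : ∀ t x y x', (G t).Adj x y → f x = f x' → ∃ y', (G t).Adj x' y' ∧ f y' = f y)
    (t : ℕ) (v : V) (s : ℕ) :
    Fintype.card β ≤ #((reach G t v s).image f) ∨ s + 1 ≤ #((reach G t v s).image f) := by
  classical
  induction s with
  | zero =>
    right
    have : v ∈ reach G t v 0 := mem_reach.2 (Visits.wait t v 0)
    exact Finset.card_pos.2 ⟨f v, Finset.mem_image_of_mem f this⟩
  | succ s ih =>
    have hsub : (reach G t v s).image f ⊆ (reach G t v (s + 1)).image f :=
      Finset.image_subset_image fun w hw =>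
        mem_reach.2 ((mem_reach.1 hw).longer (Nat.le_succ s))
    have hle := Finset.card_le_card hsub
    by_cases hall : ∀ b, b ∈ (reach G t v s).image f
    · left
      have : (reach G t v s).image f = univ := Finset.eq_univ_iff_forall.2 hall
      rw [this, Finset.card_univ] at hle
      exact hle
    · push Not at hall
      obtain ⟨b, hb⟩ := hall
      obtain ⟨y, rfl⟩ := hsurj b
      have hv : f v ∈ (reach G t v s).image f :=
        Finset.mem_image_of_mem f
          (mem_reach.2 ((Visits.wait t v 0).longer (Nat.zero_le s)))
      obtain ⟨x, z, hxz, hx, hz⟩ := exists_crossing (hG (t + s))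
        (fun x => f x ∈ (reach G t v s).image f) hv hb
      obtain ⟨x', hx', e⟩ := Finset.mem_image.1 hx
      obtain ⟨z', hz', e'⟩ := hf _ x z x' hxz e.symm
      have hz'' : z' ∈ reach G t v (s + 1) := by
        have := (mem_reach.1 hx').trans (Visits.step hz')
        exact mem_reach.2 (by simpa using this)
      have hlt := Finset.card_lt_card ((Finset.ssubset_iff_of_subset hsub).2
        ⟨f z, by rw [← e']; exact Finset.mem_image_of_mem f hz'', hz⟩)
      have hc : #((reach G t v (s + 1)).image f) ≤ Fintype.card β := Finset.card_le_univ _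
      omega

lemma card_reach {V : Type} [Fintype V]
    {G : ℕ → SimpleGraph V} (hG : ∀ t, (G t).Connected) (t : ℕ) (v : V) (s : ℕ) :
    Fintype.card V ≤ #(reach G t v s) ∨ s + 1 ≤ #(reach G t v s) := by
  classical
  have := card_image_reach (G := G) (fun x : V => x) hG Function.surjective_id
    (fun t x y x' h e => ⟨y, by subst e; exact h, rfl⟩) t v s
  simpa using this

lemma visits_all {V : Type} [Fintype V]
    {G : ℕ → SimpleGraph V} (hG : ∀ t, (G t).Connected) (t : ℕ) (v w : V) :
    Visits G t v (Fintype.card V) w ∅ := by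
  have h := card_reach hG t v (Fintype.card V)
  have h' : #(reach G t v (Fintype.card V)) ≤ Fintype.card V := Finset.card_le_univ _
  have : reach G t v (Fintype.card V) = univ := (Finset.card_eq_iff_eq_univ _).1 (by omega)
  exact mem_reach.1 (by rw [this]; simp)

section Symmetric

set_option linter.unusedSectionVars false

variable {V β : Type} [Fintype V] [DecidableEq V] [Fintype β] [DecidableEq β]
  {G : ℕ → SimpleGraph V} {Γ : Subgroup (Equiv.Perm V)} {f : V → β}

lemma mem_fib {b : β} {x : V} : x ∈ fib f b ↔ f x = b := by simp [fib]

/-- Every snapshot induces a connected graph on the set of orbits, so an orbit can be entered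
within `card β` steps, independently of the number of vertices. -/
lemma visits_orbit (h : SymmetricSystem G Γ f) (t : ℕ) (v : V) (b : β) :
    ∃ w, f w = b ∧ Visits G t v (Fintype.card β) w {w} := by
  have hr := card_image_reach f h.conn h.surj (by
    intro t x y x' hxy e
    obtain ⟨g, hg, rfl⟩ := (h.orb x x').1 e
    exact ⟨g y, h.adj g hg t x y hxy, ((h.orb y (g y)).2 ⟨g, hg, rfl⟩).symm⟩) t v (Fintype.card β)
  have h' : #((reach G t v (Fintype.card β)).image f) ≤ Fintype.card β := Finset.card_le_univ _
  have he : (reach G t v (Fintype.card β)).image f = univ :=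
    (Finset.card_eq_iff_eq_univ _).1 (by omega)
  have hb : b ∈ (reach G t v (Fintype.card β)).image f := by rw [he]; simp
  obtain ⟨w, hw, e⟩ := Finset.mem_image.1 hb
  refine ⟨w, e, ?_⟩
  have := (mem_reach.1 hw).trans (Visits.refl _ w)
  simpa using this

/-! ### Averaging over the automorphism group -/

/-- A uniformly random element of `Γ` maps `y` to a uniformly random element of its orbit. -/
lemma card_maps_into (h : SymmetricSystem G Γ f) [Fintype Γ] (y : V) (X : Finset V)
    (hX : X ⊆ fib f (f y)) :
    #(univ.filter (fun g : Γ => (g : Equiv.Perm V) y ∈ X)) * #(fib f (f y)) =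
      Fintype.card Γ * #X := by
  have key : ∀ X : Finset V, X ⊆ fib f (f y) →
      #(univ.filter (fun g : Γ => (g : Equiv.Perm V) y ∈ X)) =
        #X * #(univ.filter (fun g : Γ => (g : Equiv.Perm V) y = y)) := by
    intro X hX
    rw [Finset.card_eq_sum_card_fiberwise (f := fun g : Γ => (g : Equiv.Perm V) y) (t := X)
      (fun g hg => by simpa using hg)]
    rw [Finset.sum_const_nat (m := #(univ.filter (fun g : Γ => (g : Equiv.Perm V) y = y)))]
    intro x hx
    obtain ⟨k, hk, e⟩ := (h.orb y x).1 (mem_fib.1 (hX hx)).symm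
    refine Finset.card_bij' (fun g _ => (⟨k, hk⟩ : Γ)⁻¹ * g) (fun g _ => (⟨k, hk⟩ : Γ) * g)
      ?_ ?_ ?_ ?_
    · intro g hg
      simp only [mem_filter, mem_univ, true_and] at hg ⊢
      simp [hg.2, ← e]
    · intro g hg
      simp only [mem_filter, mem_univ, true_and] at hg ⊢
      simp [hg, e, hx]
    · intro g _; simp
    · intro g _; simp
  have hall := key (fib f (f y)) subset_rfl
  have hu : univ.filter (fun g : Γ => (g : Equiv.Perm V) y ∈ fib f (f y)) = univ := by
    refine Finset.filter_true_of_mem fun g _ => ?_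
    exact mem_fib.2 ((h.orb y _).2 ⟨g, g.2, rfl⟩).symm
  rw [hu, Finset.card_univ] at hall
  rw [key X hX, hall]; ring

lemma sum_overlap (h : SymmetricSystem G Γ f) [Fintype Γ] (b : β) (X Y : Finset V)
    (hX : X ⊆ fib f b) (hY : Y ⊆ fib f b) :
    (∑ g : Γ, #(Y.filter (fun y => (g : Equiv.Perm V) y ∈ X))) * #(fib f b) =
      Fintype.card Γ * #X * #Y := by
  simp_rw [Finset.card_filter]
  rw [Finset.sum_comm, Finset.sum_mul]
  rw [Finset.sum_congr rfl (g := fun _ => Fintype.card Γ * #X)]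
  · simp; ring
  · intro y hy
    have hy' := mem_fib.1 (hY hy)
    have := card_maps_into h y X (by rw [hy']; exact hX)
    rw [hy'] at this
    rw [← this, Finset.card_filter]

/-- Among the automorphisms sending `c` into `R`, some one moves few elements of `Y` into `X`. -/
lemma exists_small_overlap (h : SymmetricSystem G Γ f) (b : β) (X Y R : Finset V) (c : V)
    (hX : X ⊆ fib f b) (hY : Y ⊆ fib f b) (hR : R ⊆ fib f (f c)) (hne : R.Nonempty) :
    ∃ g ∈ Γ, g c ∈ R ∧
      #(Y.filter (fun y => g y ∈ X)) * (#(fib f b) * #R) ≤ #X * #Y * #(fib f (f c)) := by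
  have : Fintype Γ := Fintype.ofFinite _
  set H := univ.filter (fun g : Γ => (g : Equiv.Perm V) c ∈ R) with hH
  have h1 : #H * #(fib f (f c)) = Fintype.card Γ * #R := card_maps_into h c R hR
  have h2 := sum_overlap h b X Y hX hY
  have hΓ : 0 < Fintype.card Γ := Fintype.card_pos
  have hHne : H.Nonempty := by
    rw [← Finset.card_pos]
    by_contra h0
    have : #H = 0 := by omega
    rw [this, zero_mul] at h1
    exact absurd h1.symm (Nat.mul_pos hΓ hne.card_pos).ne'
  obtain ⟨g, hg, hmin⟩ := Finset.exists_min_image H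
    (fun g : Γ => #(Y.filter (fun y => (g : Equiv.Perm V) y ∈ X))) hHne
  refine ⟨g, g.2, by simpa [hH] using hg, ?_⟩
  set d := #(Y.filter (fun y => (g : Equiv.Perm V) y ∈ X)) with hd
  have h3 : #H * d ≤ ∑ g : Γ, #(Y.filter (fun y => (g : Equiv.Perm V) y ∈ X)) :=
    (by simpa using Finset.card_nsmul_le_sum H _ d hmin : #H * d ≤ _).trans
      (Finset.sum_le_sum_of_subset (Finset.subset_univ H))
  have h4 : #H * d * #(fib f b) ≤ Fintype.card Γ * #X * #Y := h2 ▸ Nat.mul_le_mul_right _ h3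
  refine Nat.le_of_mul_le_mul_left ?_ hΓ
  calc Fintype.card Γ * (d * (#(fib f b) * #R))
      = (Fintype.card Γ * #R) * (d * #(fib f b)) := by ring
    _ = (#H * d * #(fib f b)) * #(fib f (f c)) := by rw [← h1]; ring
    _ ≤ (Fintype.card Γ * #X * #Y) * #(fib f (f c)) := Nat.mul_le_mul_right _ h4
    _ = _ := by ring

lemma exists_large_overlap (h : SymmetricSystem G Γ f) (b : β) (X Y : Finset V)
    (hX : X ⊆ fib f b) (hY : Y ⊆ fib f b) :
    ∃ g ∈ Γ, #X * #Y ≤ #(Y.filter (fun y => g y ∈ X)) * #(fib f b) := by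
  have : Fintype Γ := Fintype.ofFinite _
  have h2 := sum_overlap h b X Y hX hY
  have hΓ : 0 < Fintype.card Γ := Fintype.card_pos
  by_contra! hcon
  have : ∑ g : Γ, #(Y.filter (fun y => (g : Equiv.Perm V) y ∈ X)) * #(fib f b) <
      ∑ g : Γ, #X * #Y :=
    Finset.sum_lt_sum_of_nonempty ⟨1, Finset.mem_univ _⟩ fun g _ => hcon g g.2
  rw [← Finset.sum_mul, h2] at this
  simp [mul_assoc] at this

/-! ### Walks visiting many vertices of one orbit -/

lemma sum_card_fib (R : Finset V) : ∑ b : β, #(R.filter (fun x => f x = b)) = #R :=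
  (Finset.card_eq_sum_card_fiberwise (fun x _ => Finset.mem_coe.2 (Finset.mem_univ (f x)))).symm

/-- The doubling argument. Two walks of level `j` are joined by a connection of `2 ^ j * S`
steps. The connection reaches so large a fraction of some orbit that the second walk can be
replaced by an automorphic image which shares at most `2 ^ j / K` vertices of the orbit `b` with
the first. -/
lemma level (h : SymmetricSystem G Γ f) (K : ℕ) (hK : 1 ≤ K) (b : β) (S : ℕ)
    (hS : K * Fintype.card V ≤ #(fib f b) * S) (j : ℕ) (hj : ∀ i < j, K * 2 ^ i ≤ #(fib f b)) :
    ∀ t v, ∃ w X, X ⊆ fib f b ∧ Visits G t v (2 ^ j * (Fintype.card β + j * S)) w X ∧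
      #X ≤ 2 ^ j ∧ 2 ^ j * (2 * K) ≤ #X * (2 * K) + 2 ^ j * j := by
  induction j with
  | zero =>
    intro t v
    obtain ⟨w, hw, hv⟩ := visits_orbit h t v b
    exact ⟨w, {w}, by simpa [mem_fib] using hw, by simpa using hv, by simp, by simp⟩
  | succ j ih =>
    intro t v
    have IH := ih fun i hi => hj i (by omega)
    have hjN := hj j (by omega)
    set T := 2 ^ j * (Fintype.card β + j * S) with hT
    set N := #(fib f b) with hN
    obtain ⟨w, X, hXs, hXv, hXu, hXl⟩ := IH t v
    set R := reach G (t + T) w (2 ^ j * S) with hR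
    have hRcard : K * 2 ^ j * Fintype.card V ≤ N * #R := by
      rcases card_reach h.conn (t + T) w (2 ^ j * S) with hr | hr
      · exact Nat.mul_le_mul hjN hr
      · calc K * 2 ^ j * Fintype.card V = 2 ^ j * (K * Fintype.card V) := by ring
          _ ≤ 2 ^ j * (N * S) := Nat.mul_le_mul_left _ hS
          _ = N * (2 ^ j * S) := by ring
          _ ≤ N * #R := Nat.mul_le_mul_left _ (Nat.le_of_succ_le hr)
    -- By pigeonhole, `R` contains the required fraction of some orbit `a`.
    obtain ⟨a, ha⟩ : ∃ a : β, K * 2 ^ j * #(fib f a) ≤ N * #(R.filter (fun x => f x = a)) := by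
      by_contra! hcon
      have hlt := Finset.sum_lt_sum_of_nonempty (s := (univ : Finset β)) ⟨b, Finset.mem_univ _⟩
        (fun a _ => hcon a)
      rw [← Finset.mul_sum, ← Finset.mul_sum, sum_card_fib] at hlt
      have hu : ∑ a : β, #(fib f a) = Fintype.card V := by
        have := sum_card_fib (f := f) (univ : Finset V)
        simpa [fib] using this
      rw [hu] at hlt
      omega
    obtain ⟨c, rfl⟩ := h.surj a
    set Rc := R.filter (fun x => f x = f c) with hRc
    have hcpos : 0 < #(fib f (f c)) := Finset.card_pos.2 ⟨c, mem_fib.2 rfl⟩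
    have hKpos : 0 < K * 2 ^ j := by positivity
    have hRne : Rc.Nonempty := by
      rw [← Finset.card_pos]
      by_contra h0
      have h0' : #Rc = 0 := by omega
      rw [h0', mul_zero] at ha
      have := Nat.mul_pos hKpos hcpos
      omega
    obtain ⟨w', Y, hYs, hYv, hYu, hYl⟩ := IH (t + T + 2 ^ j * S) c
    obtain ⟨g, hg, hgc, hov⟩ := exists_small_overlap h b X Y Rc c hXs hYs
      (fun x hx => mem_fib.2 (Finset.mem_filter.1 hx).2) hRne
    set D := #(Y.filter (fun y => g y ∈ X)) with hD
    have hDK : D * K ≤ 2 ^ j := by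
      have h1 : D * (K * 2 ^ j) * #(fib f (f c)) ≤ (2 ^ j * 2 ^ j) * #(fib f (f c)) :=
        calc D * (K * 2 ^ j) * #(fib f (f c)) = D * (K * 2 ^ j * #(fib f (f c))) := by ring
          _ ≤ D * (N * #Rc) := Nat.mul_le_mul_left _ ha
          _ ≤ #X * #Y * #(fib f (f c)) := hov
          _ ≤ _ := Nat.mul_le_mul_right _ (Nat.mul_le_mul hXu hYu)
      have h2 := Nat.le_of_mul_le_mul_right h1 hcpos
      rw [← mul_assoc] at h2
      exact Nat.le_of_mul_le_mul_right h2 (by positivity)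
    have hconn : Visits G (t + T) w (2 ^ j * S) (g c) ∅ :=
      mem_reach.1 (Finset.mem_filter.1 hgc).1
    have hwalk := (hXv.trans hconn).trans
      (by simpa [add_assoc] using hYv.image g (h.adj g hg))
    refine ⟨g w', X ∪ Y.image g, ?_, ?_, ?_, ?_⟩
    · refine Finset.union_subset hXs fun x hx => ?_
      obtain ⟨y, hy, rfl⟩ := Finset.mem_image.1 hx
      exact mem_fib.2 (((h.orb y (g y)).2 ⟨g, hg, rfl⟩).symm.trans (mem_fib.1 (hYs hy)))
    · refine Visits.longer (hwalk.mono (by simp)) ?_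
      rw [hT, pow_succ]
      nlinarith [Nat.zero_le (2 ^ j * S)]
    · calc #(X ∪ Y.image g) ≤ #X + #(Y.image g) := Finset.card_union_le _ _
        _ ≤ 2 ^ j + 2 ^ j := Nat.add_le_add hXu (Finset.card_image_le.trans hYu)
        _ = 2 ^ (j + 1) := by ring
    · have hcard : #X + #Y ≤ #(X ∪ Y.image g) + D := by
        have e1 := Finset.card_union_add_card_inter X (Y.image g)
        have e2 : #(Y.image g) = #Y := Finset.card_image_of_injective _ g.injective
        have e3 : #(X ∩ Y.image g) ≤ D := by
          rw [hD, ← Finset.card_image_of_injective (Y.filter (fun y => g y ∈ X)) g.injective]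
          refine Finset.card_le_card fun x hx => ?_
          obtain ⟨hx1, hx2⟩ := Finset.mem_inter.1 hx
          obtain ⟨y, hy, rfl⟩ := Finset.mem_image.1 hx2
          exact Finset.mem_image_of_mem g (Finset.mem_filter.2 ⟨hy, hx1⟩)
        omega
      have hcard' := Nat.mul_le_mul_right (2 * K) hcard
      rw [pow_succ]
      nlinarith

/-- The level `j` is chosen so that `2 ^ j` is within a factor `2 * K` of the orbit size. -/
lemma dense_walk (h : SymmetricSystem G Γ f) (K : ℕ) (hK : 1 ≤ K) (hn : Fintype.card V ≤ 2 ^ K)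
    (b : β) (t : ℕ) (v : V) :
    ∃ w X, X ⊆ fib f b ∧
      Visits G t v (#(fib f b) * Fintype.card β + K * (K + 1) * Fintype.card V) w X ∧
      #(fib f b) ≤ #X * (4 * K) := by
  set N := #(fib f b) with hN
  set n := Fintype.card V with hn'
  set r := Fintype.card β
  have hNn : N ≤ n := Finset.card_le_univ _
  have hNpos : 0 < N := by
    obtain ⟨x, hx⟩ := h.surj b
    exact Finset.card_pos.2 ⟨x, mem_fib.2 hx⟩
  set J := Nat.log 2 (N / K) with hJ
  have hup : N < 2 * K * 2 ^ J := by
    have := Nat.lt_pow_succ_log_self (b := 2) (by norm_num) (N / K)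
    have := (Nat.div_lt_iff_lt_mul (by omega)).1 this
    rw [← hJ, pow_succ] at this
    linarith
  have hlow : 2 ^ J ≤ N := by
    by_cases h0 : N / K = 0
    · rw [hJ, h0]; simpa using Nat.succ_le_of_lt hNpos
    · exact (Nat.pow_log_le_self 2 h0).trans (Nat.div_le_self _ _)
  have hJK : J ≤ K := (Nat.pow_le_pow_iff_right (by norm_num : 1 < 2)).1
    ((hlow.trans hNn).trans hn)
  have hj : ∀ i < J, K * 2 ^ i ≤ N := by
    intro i hi
    have h0 : N / K ≠ 0 := by
      intro h0
      rw [hJ, h0] at hi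
      simp at hi
    have h1 : 2 ^ i ≤ N / K :=
      (Nat.pow_le_pow_right (by norm_num) hi.le).trans (Nat.pow_log_le_self 2 h0)
    calc K * 2 ^ i ≤ K * (N / K) := Nat.mul_le_mul_left _ h1
      _ ≤ N := Nat.mul_div_le _ _
  obtain ⟨w, X, hX, hv, -, hl⟩ := level h K hK b (K * n / N + 1)
    (Nat.lt_mul_div_succ _ hNpos).le J hj t v
  refine ⟨w, X, hX, hv.longer ?_, ?_⟩
  · have h1 : N * (K * n / N + 1) ≤ (K + 1) * n := by
      have := Nat.mul_div_le (K * n) N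
      rw [mul_add]
      linarith
    calc 2 ^ J * (r + J * (K * n / N + 1)) ≤ N * (r + K * (K * n / N + 1)) := by gcongr
      _ = N * r + K * (N * (K * n / N + 1)) := by ring
      _ ≤ N * r + K * ((K + 1) * n) := by gcongr
      _ = N * r + K * (K + 1) * n := by ring
  · have : 2 ^ J * J ≤ 2 ^ J * K := Nat.mul_le_mul_left _ hJK
    nlinarith

/-! ### Exploring one orbit, then all orbits -/

/-- In each round some automorphic image of a dense walk visits at least a `1 / (4 * K)`
fraction of the vertices of the orbit that are still unvisited. -/
lemma orbit_rounds (h : SymmetricSystem G Γ f) (K : ℕ) (hK : 1 ≤ K)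
    (hn : Fintype.card V ≤ 2 ^ K) (b : β) (k : ℕ) (t : ℕ) (v : V) :
    ∃ w A, Visits G t v (k * (Fintype.card V + (#(fib f b) * Fintype.card β
        + K * (K + 1) * Fintype.card V))) w A ∧
      (#(fib f b \ A) : ℝ) ≤ #(fib f b) * (1 - 1 / (4 * K)) ^ k := by
  induction k with
  | zero => exact ⟨v, ∅, by simpa using Visits.wait t v 0, by simp⟩
  | succ k ih =>
    obtain ⟨w, A, hv, hA⟩ := ih
    set N := #(fib f b) with hN
    set L := N * Fintype.card β + K * (K + 1) * Fintype.card V with hL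
    set U := fib f b \ A with hU
    obtain ⟨w', Y, hY, hYv, hYc⟩ :=
      dense_walk h K hK hn b (t + k * (Fintype.card V + L) + Fintype.card V) v
    obtain ⟨g, hg, hov⟩ := exists_large_overlap h b U Y Finset.sdiff_subset hY
    have hwalk := (hv.trans (visits_all h.conn _ w (g v))).trans
      (by simpa [add_assoc] using hYv.image g (h.adj g hg))
    refine ⟨g w', A ∪ Y.image g, ?_, ?_⟩
    · refine Visits.longer (hwalk.mono (by simp)) (le_of_eq ?_)
      ring
    · set D := #(Y.filter (fun y => g y ∈ U)) with hD
      have hNpos : 0 < N := by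
        obtain ⟨x, hx⟩ := h.surj b
        exact Finset.card_pos.2 ⟨x, mem_fib.2 hx⟩
      have hDU : #U ≤ D * (4 * K) := by
        refine Nat.le_of_mul_le_mul_right ?_ hNpos
        calc #U * N ≤ #U * (#Y * (4 * K)) := Nat.mul_le_mul_left _ hYc
          _ = #U * #Y * (4 * K) := by ring
          _ ≤ D * N * (4 * K) := Nat.mul_le_mul_right _ hov
          _ = D * (4 * K) * N := by ring
      have hcard : #(fib f b \ (A ∪ Y.image g)) + D ≤ #U := by
        rw [hD, ← Finset.card_image_of_injective (Y.filter (fun y => g y ∈ U)) g.injective,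
          ← Finset.card_union_of_disjoint]
        · refine Finset.card_le_card (Finset.union_subset ?_ ?_)
          · exact Finset.sdiff_subset_sdiff subset_rfl Finset.subset_union_left
          · intro x hx
            obtain ⟨y, hy, rfl⟩ := Finset.mem_image.1 hx
            exact (Finset.mem_filter.1 hy).2
        · rw [Finset.disjoint_left]
          intro x hx hx'
          obtain ⟨y, hy, rfl⟩ := Finset.mem_image.1 hx'
          exact (Finset.mem_sdiff.1 hx).2 (Finset.mem_union_right _
            (Finset.mem_image_of_mem g (Finset.mem_filter.1 hy).1))
      have hK' : (1 : ℝ) ≤ K := by exact_mod_cast hK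
      have hcard' : (#(fib f b \ (A ∪ Y.image g)) : ℝ) + D ≤ #U := by exact_mod_cast hcard
      have hDU' : (#U : ℝ) ≤ D * (4 * K) := by exact_mod_cast hDU
      have hDU2 : (#U : ℝ) * (1 / (4 * K)) ≤ D := by
        rw [mul_one_div, div_le_iff₀ (by positivity)]
        exact hDU'
      have hq : (0 : ℝ) ≤ 1 - 1 / (4 * K) := by
        rw [sub_nonneg, div_le_one (by positivity)]
        linarith
      calc (#(fib f b \ (A ∪ Y.image g)) : ℝ) ≤ #U * (1 - 1 / (4 * K)) := by linarith
        _ ≤ (N * (1 - 1 / (4 * K)) ^ k) * (1 - 1 / (4 * K)) := by gcongr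
        _ = _ := by ring

lemma orbit_explored (h : SymmetricSystem G Γ f) (K : ℕ) (hK : 1 ≤ K)
    (hn : Fintype.card V ≤ 2 ^ K) (b : β) (t : ℕ) (v : V) :
    ∃ w A, Visits G t v (4 * K * K * (Fintype.card V + (#(fib f b) * Fintype.card β
        + K * (K + 1) * Fintype.card V))) w A ∧ fib f b ⊆ A := by
  obtain ⟨w, A, hv, hA⟩ := orbit_rounds h K hK hn b (4 * K * K) t v
  refine ⟨w, A, hv, ?_⟩
  have hK' : (1 : ℝ) ≤ K := by exact_mod_cast hK
  have hN : (#(fib f b) : ℝ) ≤ 2 ^ K := by exact_mod_cast (Finset.card_le_univ _).trans hn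
  have hq : (0 : ℝ) ≤ 1 - 1 / (4 * K) := by
    rw [sub_nonneg, div_le_one (by positivity)]
    linarith
  have h1 : (1 - 1 / (4 * K) : ℝ) ^ (4 * K * K) ≤ Real.exp (-1) ^ K := by
    calc (1 - 1 / (4 * K) : ℝ) ^ (4 * K * K) ≤ Real.exp (-(1 / (4 * K))) ^ (4 * K * K) := by
          gcongr
          have := Real.add_one_le_exp (-(1 / (4 * K) : ℝ))
          linarith
      _ = Real.exp (-1) ^ K := by
          rw [pow_mul, ← Real.exp_nat_mul]
          congr 2
          push_cast
          field_simp
  have h2 : (#(fib f b \ A) : ℝ) < 1 := by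
    have he : 2 * Real.exp (-1) < 1 := by
      have := Real.exp_one_gt_d9
      rw [Real.exp_neg, ← div_eq_mul_inv, div_lt_one (Real.exp_pos 1)]
      linarith
    calc (#(fib f b \ A) : ℝ) ≤ #(fib f b) * (1 - 1 / (4 * K)) ^ (4 * K * K) := hA
      _ ≤ 2 ^ K * Real.exp (-1) ^ K := by gcongr
      _ = (2 * Real.exp (-1)) ^ K := by rw [mul_pow]
      _ < 1 := pow_lt_one₀ (by positivity) he (by omega)
  have h3 : #(fib f b \ A) = 0 := by
    have : #(fib f b \ A) < 1 := by exact_mod_cast h2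
    omega
  exact Finset.sdiff_eq_empty_iff_subset.1 (Finset.card_eq_zero.1 h3)

lemma orbits_explored (h : SymmetricSystem G Γ f) (K : ℕ) (hK : 1 ≤ K)
    (hn : Fintype.card V ≤ 2 ^ K) (B : Finset β) (t : ℕ) (v : V) :
    ∃ w A, Visits G t v (∑ b ∈ B, 4 * K * K * (Fintype.card V + (#(fib f b) * Fintype.card β
        + K * (K + 1) * Fintype.card V))) w A ∧ ∀ b ∈ B, fib f b ⊆ A := by
  induction B using Finset.induction_on generalizing t v with
  | empty => exact ⟨v, ∅, by simpa using Visits.wait t v 0, by simp⟩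
  | insert b B hb ih =>
    obtain ⟨w, A, hv, hA⟩ := orbit_explored h K hK hn b t v
    obtain ⟨w', A', hv', hA'⟩ := ih _ w
    refine ⟨w', A ∪ A', ?_, ?_⟩
    · rw [Finset.sum_insert hb]
      exact hv.trans hv'
    · intro a ha
      rcases Finset.mem_insert.1 ha with rfl | ha
      · exact hA.trans Finset.subset_union_left
      · exact (hA' a ha).trans Finset.subset_union_right

lemma all_explored (h : SymmetricSystem G Γ f) (K : ℕ) (hK : 1 ≤ K)
    (hn : Fintype.card V ≤ 2 ^ K) (t : ℕ) (v : V) :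
    ∃ w, Visits G t v (16 * K ^ 4 * Fintype.card β * Fintype.card V) w univ := by
  obtain ⟨w, A, hv, hA⟩ := orbits_explored h K hK hn univ t v
  refine ⟨w, (hv.mono fun x _ => hA (f x) (Finset.mem_univ _) (mem_fib.2 rfl)).longer ?_⟩
  have hu : ∑ b : β, #(fib f b) = Fintype.card V := by
    simpa [fib] using sum_card_fib (f := f) (univ : Finset V)
  rw [← Finset.mul_sum, Finset.sum_add_distrib, Finset.sum_add_distrib, ← Finset.sum_mul, hu]
  simp only [Finset.sum_const, Finset.card_univ, smul_eq_mul]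
  set r := Fintype.card β
  set n := Fintype.card V
  calc 4 * K * K * (r * n + (n * r + r * (K * (K + 1) * n)))
      = 4 * K ^ 2 * (2 + K * (K + 1)) * r * n := by ring
    _ ≤ 4 * K ^ 2 * (4 * K ^ 2) * r * n := by gcongr; nlinarith
    _ = 16 * K ^ 4 * r * n := by ring

end Symmetric

/-! ### Passage to the given temporal graph -/

/-- The snapshots of `𝒢`, continued by complete graphs outside its lifetime. Both connectedness
and the automorphism group are unaffected. -/
def extend {V : Type} [Fintype V] (𝒢 : TemporalGraph V) (t : ℕ) : SimpleGraph V :=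
  if 1 ≤ t ∧ t ≤ 𝒢.lifetime then 𝒢.snap t else ⊤

/-- The automorphism group of `𝒢`. -/
def autGroup {V : Type} [Fintype V] (𝒢 : TemporalGraph V) : Subgroup (Equiv.Perm V) where
  carrier := {σ | 𝒢.IsAut σ}
  one_mem' := fun t _ _ u v => Iff.rfl
  mul_mem' := by
    intro a b ha hb t h1 h2 u v
    rw [hb t h1 h2 u v, ha t h1 h2 (b u) (b v)]
    rfl
  inv_mem' := by
    intro a ha t h1 h2 u v
    have := ha t h1 h2 (a⁻¹ u) (a⁻¹ v)
    simpa using this.symm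

lemma orbit_eq_iff {V : Type} [Fintype V] (𝒢 : TemporalGraph V) (x y : V) :
    𝒢.orbit x = 𝒢.orbit y ↔ ∃ g ∈ autGroup 𝒢, g x = y := by
  constructor
  · intro h
    have : y ∈ 𝒢.orbit y := ⟨1, (autGroup 𝒢).one_mem, rfl⟩
    rw [← h] at this
    exact this
  · rintro ⟨g, hg, rfl⟩
    ext z
    constructor
    · rintro ⟨k, hk, rfl⟩
      exact ⟨k * g⁻¹, (autGroup 𝒢).mul_mem hk ((autGroup 𝒢).inv_mem hg), by simp⟩
    · rintro ⟨k, hk, rfl⟩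
      exact ⟨k * g, (autGroup 𝒢).mul_mem hk hg, rfl⟩

lemma symmetricSystem {V : Type} [Fintype V] [Nonempty V] (𝒢 : TemporalGraph V)
    (hc : 𝒢.IsConnectedTG) :
    SymmetricSystem (extend 𝒢) (autGroup 𝒢) (Set.rangeFactorization 𝒢.orbit) where
  conn t := by
    unfold extend
    split_ifs with h
    · exact hc t h.1 h.2
    · exact SimpleGraph.connected_top
  adj g hg t u v := by
    unfold extend
    split_ifs with h
    · exact (hg t h.1 h.2 u v).1
    · simp
  orb x y := by
    rw [← orbit_eq_iff]
    exact Subtype.ext_iff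
  surj := Set.rangeFactorization_surjective

end TemporalExploration

/-- Corollary 4.8: for every fixed `ε > 0` there is a constant `C > 0`
such that any connected temporal graph with `n ≥ 2` vertices, orbit number `r`, and
lifetime at least `1 + C·r·n^{1+ε}` can be fully explored from any start vertex by a
temporal walk starting at time step `1` and spanning at most `C·r·n^{1+ε}` time steps. -/
theorem temporal_exploration (ε : ℝ) (hε : 0 < ε) :
    ∃ C : ℝ, 0 < C ∧
      ∀ (V : Type) [Fintype V], ∀ 𝒢 : TemporalGraph V, 𝒢.IsConnectedTG →
      ∀ n r : ℕ, n = Fintype.card V → 2 ≤ n → r = 𝒢.orbitNumber →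
      (1 : ℝ) + C * r * (n : ℝ) ^ ((1 : ℝ) + ε) ≤ (𝒢.lifetime : ℝ) →
      ∀ u : V, ∃ t' : ℕ,
        (t' : ℝ) - 1 ≤ C * r * (n : ℝ) ^ ((1 : ℝ) + ε) ∧
        ∃ W : ℕ → V, 𝒢.IsWalk W 1 t' ∧ W 1 = u ∧
          TemporalGraph.visited W 1 t' = Set.univ := by
  classical
  have hδ : (0 : ℝ) < ε / 4 := by positivity
  refine ⟨16 * (4 / (ε / 4)) ^ 4, by positivity, ?_⟩
  intro V _ 𝒢 hc n r hn hn2 hr hl u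
  have : Nonempty V := ⟨u⟩
  set K := Nat.log 2 n + 1 with hK
  have hnK : Fintype.card V ≤ 2 ^ K := by
    rw [← hn]
    exact (Nat.lt_pow_succ_log_self (by norm_num) n).le
  obtain ⟨w, W, h1, h2, -, h4⟩ := TemporalExploration.all_explored
    (TemporalExploration.symmetricSystem 𝒢 hc) K (by omega) hnK 1 u
  have hβ : Fintype.card (Set.range 𝒢.orbit) = r := by
    rw [hr, TemporalGraph.orbitNumber, Set.ncard_eq_toFinset_card', Set.toFinset_card]
  rw [hβ, ← hn] at h1 h4
  set T := 16 * K ^ 4 * r * n with hT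
  have hnpos : (0 : ℝ) < n := by exact_mod_cast (by omega : 0 < n)
  -- `K` is at most `4 * log n`, since `n ≥ 2` and `log 2 ≥ 1 / 2`.
  have hKn : (K : ℝ) ≤ 4 / (ε / 4) * (n : ℝ) ^ (ε / 4) := by
    have hlog1 : 1 ≤ Nat.log 2 n := Nat.log_pos (by norm_num) hn2
    have hlog2 : (Nat.log 2 n : ℝ) * Real.log 2 ≤ Real.log n := by
      rw [← Real.log_pow]
      refine Real.log_le_log (by positivity) ?_
      exact_mod_cast Nat.pow_log_le_self 2 (by omega : n ≠ 0)
    have hl2 := Real.log_two_gt_d9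
    have hlog1' : (1 : ℝ) ≤ Nat.log 2 n := by exact_mod_cast hlog1
    have hle : (Nat.log 2 n : ℝ) * (1 / 2) ≤ Nat.log 2 n * Real.log 2 := by gcongr; linarith
    have hlog3 := Real.log_le_rpow_div hnpos.le hδ
    have hKe : (K : ℝ) = Nat.log 2 n + 1 := by rw [hK]; push_cast; rfl
    calc (K : ℝ) ≤ 4 * Real.log n := by linarith
      _ ≤ 4 * ((n : ℝ) ^ (ε / 4) / (ε / 4)) := by gcongr
      _ = _ := by ring
  have hpow : ((n : ℝ) ^ (ε / 4)) ^ 4 * n = (n : ℝ) ^ (1 + ε) := by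
    rw [← Real.rpow_natCast, ← Real.rpow_mul hnpos.le, Real.rpow_add hnpos, Real.rpow_one,
      mul_comm]
    congr 2
    push_cast
    ring
  have hTle : (T : ℝ) ≤ 16 * (4 / (ε / 4)) ^ 4 * r * (n : ℝ) ^ (1 + ε) := by
    rw [hT]
    push_cast
    calc (16 : ℝ) * K ^ 4 * r * n
        ≤ 16 * (4 / (ε / 4) * (n : ℝ) ^ (ε / 4)) ^ 4 * r * n := by gcongr
      _ = 16 * (4 / (ε / 4)) ^ 4 * r * (((n : ℝ) ^ (ε / 4)) ^ 4 * n) := by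
          rw [mul_pow]; ring
      _ = _ := by rw [hpow]
  have hlife : 1 + T ≤ 𝒢.lifetime := by
    have : (1 : ℝ) + T ≤ 𝒢.lifetime := by linarith
    exact_mod_cast this
  refine ⟨1 + T, by push_cast; linarith, W, ⟨le_rfl, by omega, hlife, ?_⟩, h2, ?_⟩
  · intro s hs hs'
    have := h1 s hs hs'
    rwa [TemporalExploration.extend, if_pos ⟨hs, by omega⟩] at this
  · refine Set.eq_univ_of_forall fun x => ?_
    obtain ⟨s, hs, hs', e⟩ := h4 x (Finset.mem_univ x)
    exact ⟨s, ⟨hs, hs'⟩, e⟩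
end

section
/- There exists a constant c > 0 with the following property. For every even integer n ≥ 4 and every integer r with 1 ≤ r ≤ n, there exists a connected temporal graph 𝒢 on n vertices with lifetime at least n² whose orbit number |𝒢/Aut(𝒢)| equals r, such that every temporal walk starting at time step 1 that visits all n vertices spans at least c·r·n time steps. -/
/-!
For `r ≥ 2` every snapshot is a star. During the first `n²` time steps the centre of the star
cycles through the `k = ⌊r/2⌋` vertices `0, …, k - 1`. A walk standing at a vertex `a ≥ k` can only
leave it for the current centre, which becomes a centre again only `k` steps later; until then the
walk cannot reach another vertex `b ≥ k` (`rotating_gap`). Visits to the `n - k` distinct vertices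
`≥ k` are thus pairwise at least `k` steps apart, so an exploration spans at least
`k (n - k - 1) ≥ r n / 12` steps (`rotating_lower_bound`).

After time `n²` there follow `r - 1` stars, centred at `0, …, r - 2` in turn. They force
automorphisms to fix each of these vertices, while every permutation that does so is an
automorphism of all snapshots; the orbits are therefore `r - 1` singletons and the set of all the
remaining vertices (`starTG_orbit`). For `r = 1` all snapshots are complete graphs.
-/

open scoped BigOperators

namespace TemporalGraph

/-- The centre of the star at time step `t`: it rotates through `0, …, r / 2 - 1` up to time `n²`,
and is `0, 1, 2, …` in turn afterwards. -/
def center (n r t : ℕ) : ℕ := if t ≤ n ^ 2 then t % (r / 2) else t - (n ^ 2 + 1)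

/-- The temporal graph of the lower bound: its snapshots are stars with centres `center n r t`,
or complete graphs if `r = 1`. -/
def starTG (n r : ℕ) : TemporalGraph (Fin n) where
  lifetime := n ^ 2 + (r - 1)
  snap t :=
    { Adj := fun u v => u ≠ v ∧ (r = 1 ∨ (u : ℕ) = center n r t ∨ (v : ℕ) = center n r t)
      symm := ⟨fun u v h => ⟨h.1.symm, by tauto⟩⟩
      loopless := ⟨fun u h => h.1 rfl⟩ }

variable {n r : ℕ}

lemma center_lt (hr : 2 ≤ r) {t : ℕ} (ht : t ≤ n ^ 2 + (r - 1)) : center n r t < r - 1 := by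
  unfold center
  split_ifs with h
  · have := Nat.mod_lt t (show 0 < r / 2 by omega)
    omega
  · omega

lemma starTG_connected (hn : 4 ≤ n) (hr : 1 ≤ r) (hrn : r ≤ n) : (starTG n r).IsConnectedTG := by
  intro t _ ht
  obtain ⟨c, hc⟩ : ∃ c : Fin n, r = 1 ∨ (c : ℕ) = center n r t := by
    rcases Nat.lt_or_ge r 2 with h | h
    · exact ⟨⟨0, by omega⟩, Or.inl (by omega)⟩
    · have := center_lt h ht
      exact ⟨⟨center n r t, by omega⟩, Or.inr rfl⟩
  refine SimpleGraph.connected_iff_exists_forall_reachable _ |>.2 ⟨c, fun v => ?_⟩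
  by_cases h : c = v
  · subst h
    exact SimpleGraph.Reachable.refl _
  · refine SimpleGraph.Adj.reachable (show c ≠ v ∧ _ from ⟨h, ?_⟩)
    tauto

/-- An automorphism fixes each vertex that is the centre of one of the last `r - 1` stars. -/
lemma starTG_fixes (hn : 4 ≤ n) {σ : Equiv.Perm (Fin n)}
    (hσ : (starTG n r).IsAut σ) {j : Fin n} (hj : (j : ℕ) < r - 1) : σ j = j := by
  by_contra hne
  have hc : center n r (n ^ 2 + 1 + j) = j := by
    unfold center
    rw [if_neg (by omega)]
    omega
  obtain ⟨w, hw⟩ : ∃ w : Fin n, w ∉ ({j, σ j} : Finset (Fin n)) := by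
    by_contra! h
    have h1 : Finset.univ ⊆ ({j, σ j} : Finset (Fin n)) := fun x _ => h x
    have h2 := Finset.card_le_card h1
    have h3 := Finset.card_le_two (a := j) (b := σ j)
    rw [Finset.card_univ, Fintype.card_fin] at h2
    omega
  simp only [Finset.mem_insert, Finset.mem_singleton, not_or] at hw
  have hy : j ≠ σ.symm w := by
    rintro h
    exact hw.2 (by rw [h]; simp)
  have h := (hσ (n ^ 2 + 1 + j) (by omega) (by simp only [starTG]; omega) j (σ.symm w)).1
    ⟨hy, Or.inr (Or.inl hc.symm)⟩
  rw [Equiv.apply_symm_apply] at h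
  obtain ⟨-, h | h | h⟩ := h
  · omega
  · exact hne (Fin.ext (h.trans hc))
  · exact hw.1 (Fin.ext (h.trans hc))

/-- A permutation fixing `0, …, r - 2`, in particular every possible centre, is an automorphism. -/
lemma starTG_isAut (hr : 1 ≤ r) {σ : Equiv.Perm (Fin n)}
    (hσ : ∀ j : Fin n, (j : ℕ) < r - 1 → σ j = j) : (starTG n r).IsAut σ := by
  intro t _ ht u v
  by_cases h1 : r = 1
  · simp [starTG, h1]
  have hc : center n r t < r - 1 := center_lt (by omega) ht
  have key : ∀ x : Fin n, ((σ x : Fin n) : ℕ) = center n r t ↔ (x : ℕ) = center n r t := by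
    intro x
    constructor
    · intro h
      have := σ.injective (hσ (σ x) (by omega))
      rwa [this] at h
    · intro h
      rw [hσ x (by omega), h]
  simp [starTG, key]

/-- The orbits are the fibres of `v ↦ min v (r - 1)`. -/
lemma starTG_orbit (hn : 4 ≤ n) (hr : 1 ≤ r) (u : Fin n) :
    (starTG n r).orbit u = {v : Fin n | min (v : ℕ) (r - 1) = min (u : ℕ) (r - 1)} := by
  ext v
  constructor
  · rintro ⟨σ, hσ, rfl⟩
    show min ((σ u : Fin n) : ℕ) (r - 1) = min (u : ℕ) (r - 1)
    by_cases h : (u : ℕ) < r - 1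
    · rw [starTG_fixes hn hσ h]
    · by_cases h' : ((σ u : Fin n) : ℕ) < r - 1
      · rw [σ.injective (starTG_fixes hn hσ h')]
      · omega
  · intro (h : min (v : ℕ) (r - 1) = min (u : ℕ) (r - 1))
    refine ⟨Equiv.swap u v, starTG_isAut hr fun j hj => ?_, Equiv.swap_apply_left u v⟩
    by_cases huv : u = v
    · simp [huv]
    · have : (u : ℕ) ≠ v := fun h => huv (Fin.ext h)
      apply Equiv.swap_apply_of_ne_of_ne
      · rintro rfl
        omega
      · rintro rfl
        omega

lemma starTG_orbitNumber (hn : 4 ≤ n) (hr : 1 ≤ r) (hrn : r ≤ n) :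
    (starTG n r).orbitNumber = r := by
  have himg : Set.range (starTG n r).orbit =
      (fun i : ℕ => {v : Fin n | min (v : ℕ) (r - 1) = i}) '' (Finset.range r : Set ℕ) := by
    ext S
    constructor
    · rintro ⟨u, rfl⟩
      refine ⟨min (u : ℕ) (r - 1), ?_, (starTG_orbit hn hr u).symm⟩
      simp only [Finset.coe_range, Set.mem_Iio]
      omega
    · rintro ⟨i, hi, rfl⟩
      simp only [Finset.coe_range, Set.mem_Iio] at hi
      refine ⟨⟨i, by omega⟩, ?_⟩
      rw [starTG_orbit hn hr]
      have : min i (r - 1) = i := by omega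
      simp [this]
  unfold orbitNumber
  rw [himg, Set.InjOn.ncard_image, Set.ncard_coe_finset, Finset.card_range]
  intro i hi j hj hij
  simp only [Finset.coe_range, Set.mem_Iio] at hi hj
  have hmem : (⟨i, by omega⟩ : Fin n) ∈ {v : Fin n | min (v : ℕ) (r - 1) = j} := by
    rw [← show {v : Fin n | min (v : ℕ) (r - 1) = i} =
      {v : Fin n | min (v : ℕ) (r - 1) = j} from hij]
    show min i (r - 1) = i
    omega
  have : min i (r - 1) = j := hmem
  omega

/-- Within `r / 2` steps after being at a vertex `a` that is not in the rotation, a walk is either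
still at `a` or at a vertex which was the centre in the meantime. -/
lemma rotating_confined (hr : 2 ≤ r) {W : ℕ → Fin n} {t' : ℕ} (hW : (starTG n r).IsWalk W 1 t')
    (ht' : t' ≤ n ^ 2) {s : ℕ} (hs : 1 ≤ s) (ha : r / 2 ≤ (W s : ℕ)) (d : ℕ)
    (hd : d ≤ r / 2) (hst : s + d ≤ t') :
    W (s + d) = W s ∨ ∃ e < d, (W (s + d) : ℕ) = (s + e) % (r / 2) := by
  have hk : 0 < r / 2 := by omega
  induction d with
  | zero => exact Or.inl rfl
  | succ d ih =>
    have hcen : center n r (s + d) = (s + d) % (r / 2) := by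
      unfold center
      rw [if_pos (by omega)]
    have hnc : (W (s + d) : ℕ) ≠ center n r (s + d) := by
      rw [hcen]
      rcases ih (by omega) (by omega) with h | ⟨e, he, h⟩
      · have := Nat.mod_lt (s + d) hk
        rw [h]
        omega
      · rw [h]
        intro hmod
        -- `e < d < r / 2`, so the times `s + e` and `s + d` have different residues
        have h1 : e ≡ d [MOD r / 2] := Nat.ModEq.add_left_cancel' s hmod
        have h2 := Nat.ModEq.eq_of_lt_of_lt h1 (by omega) (by omega)
        omega
    rcases hW.2.2.2 (s + d) (by omega) (by omega) with h | ⟨-, h | h | h⟩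
    · rw [← add_assoc, h]
      rcases ih (by omega) (by omega) with h | ⟨e, he, h⟩
      · exact Or.inl h
      · exact Or.inr ⟨e, by omega, h⟩
    · omega
    · exact absurd h hnc
    · exact Or.inr ⟨d, by omega, by rw [← add_assoc, h, hcen]⟩

lemma rotating_gap (hr : 2 ≤ r) {W : ℕ → Fin n} {t' : ℕ} (hW : (starTG n r).IsWalk W 1 t')
    (ht' : t' ≤ n ^ 2) {s u : ℕ} (hs : 1 ≤ s) (hsu : s ≤ u) (hu : u ≤ t')
    (ha : r / 2 ≤ (W s : ℕ)) (hb : r / 2 ≤ (W u : ℕ)) (hne : W s ≠ W u) : s + r / 2 ≤ u := by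
  by_contra! hlt
  have h := rotating_confined hr hW ht' hs ha (u - s) (by omega) (by omega)
  rw [Nat.add_sub_cancel' hsu] at h
  rcases h with h | ⟨e, -, h⟩
  · exact hne h.symm
  · have := Nat.mod_lt (s + e) (show 0 < r / 2 by omega)
    omega

lemma rotating_lower_bound (hr : 2 ≤ r) (hrn : r ≤ n) {W : ℕ → Fin n} {t' : ℕ}
    (hW : (starTG n r).IsWalk W 1 t') (ht' : t' ≤ n ^ 2) (hv : visited W 1 t' = Set.univ) :
    r / 2 * (n - r / 2 - 1) ≤ t' - 1 := by
  have hk : 0 < r / 2 := by omega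
  have hex : ∀ v : Fin n, ∃ s, (1 ≤ s ∧ s ≤ t') ∧ W s = v := by
    intro v
    have : v ∈ visited W 1 t' := hv ▸ Set.mem_univ v
    exact this
  choose τ hτ hWτ using hex
  -- Visiting times at least `r / 2` apart lie in different blocks of `r / 2` consecutive steps.
  have hblock : ∀ x y : ℕ, 1 ≤ x → x + r / 2 ≤ y → (x - 1) / (r / 2) < (y - 1) / (r / 2) := by
    intro x y hx hxy
    have h1 : (x - 1 + r / 2) / (r / 2) = (x - 1) / (r / 2) + 1 := Nat.add_div_right _ hk
    have h2 : (x - 1 + r / 2) / (r / 2) ≤ (y - 1) / (r / 2) := Nat.div_le_div_right (by omega)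
    omega
  let f : Fin (n - r / 2) → Fin n := fun i => ⟨r / 2 + i, by omega⟩
  have hgap : ∀ i j, i ≠ j → τ (f i) ≤ τ (f j) → τ (f i) + r / 2 ≤ τ (f j) := by
    intro i j hij hle
    refine rotating_gap hr hW ht' (hτ _).1 hle (hτ _).2 ?_ ?_ ?_
    · rw [hWτ]
      exact Nat.le_add_right _ _
    · rw [hWτ]
      exact Nat.le_add_right _ _
    · rw [hWτ, hWτ]
      intro h
      have := congrArg Fin.val h
      simp only [f] at this
      exact hij (Fin.ext (by omega))
  have hcard := Finset.card_le_card_of_injOn (s := Finset.univ)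
    (t := Finset.range ((t' - 1) / (r / 2) + 1)) (fun i => (τ (f i) - 1) / (r / 2))
    (by
      intro i _
      have : (τ (f i) - 1) / (r / 2) ≤ (t' - 1) / (r / 2) :=
        Nat.div_le_div_right (Nat.sub_le_sub_right (hτ _).2 1)
      simp only [Finset.coe_range, Set.mem_Iio]
      omega)
    (by
      intro i _ j _ hij
      by_contra hne
      simp only at hij
      rcases le_total (τ (f i)) (τ (f j)) with h | h
      · have := hblock _ _ (hτ _).1 (hgap i j hne h)
        omega
      · have := hblock _ _ (hτ _).1 (hgap j i (Ne.symm hne) h)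
        omega)
  rw [Finset.card_univ, Fintype.card_fin, Finset.card_range] at hcard
  calc r / 2 * (n - r / 2 - 1) ≤ r / 2 * ((t' - 1) / (r / 2)) :=
        Nat.mul_le_mul_left _ (by omega)
    _ ≤ t' - 1 := Nat.mul_div_le _ _

lemma card_le_of_visited {W : ℕ → Fin n} {t' : ℕ} (hv : visited W 1 t' = Set.univ) : n ≤ t' := by
  have h : (Finset.univ : Finset (Fin n)) ⊆ (Finset.Icc 1 t').image W := by
    intro v _
    have : v ∈ visited W 1 t' := hv ▸ Set.mem_univ v
    obtain ⟨s, hs, rfl⟩ := this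
    exact Finset.mem_image_of_mem _ (Finset.mem_Icc.2 hs)
  have := (Finset.card_le_card h).trans Finset.card_image_le
  simpa using this

lemma starTG_lower_bound (hn : 4 ≤ n) (hr : 1 ≤ r) (hrn : r ≤ n) {W : ℕ → Fin n} {t' : ℕ}
    (hW : (starTG n r).IsWalk W 1 t') (hv : visited W 1 t' = Set.univ) :
    r * n ≤ 12 * (t' - 1) := by
  have hcard := card_le_of_visited hv
  rcases Nat.lt_or_ge r 2 with h | h
  · obtain rfl : r = 1 := by omega
    omega
  rcases Nat.lt_or_ge (n ^ 2) t' with h' | h'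
  · have : r * n ≤ n ^ 2 := by
      rw [sq]
      exact Nat.mul_le_mul_right n hrn
    omega
  · have h1 := rotating_lower_bound h hrn hW h' hv
    calc r * n ≤ (3 * (r / 2)) * (4 * (n - r / 2 - 1)) :=
          Nat.mul_le_mul (by omega) (by omega)
      _ = 12 * (r / 2 * (n - r / 2 - 1)) := by ring
      _ ≤ 12 * (t' - 1) := Nat.mul_le_mul_left _ h1

end TemporalGraph

/-- Lemma 6.1: there is a constant `c > 0` such that for every even
`n ≥ 4` and every `1 ≤ r ≤ n`, there is a connected temporal graph on `n` vertices
with lifetime at least `n²` and orbit number exactly `r`, such that every temporal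
walk starting at time step `1` that visits all vertices spans at least `c·r·n`
time steps. -/
theorem texp_lower_bound_rn :
    ∃ c : ℝ, 0 < c ∧
      ∀ n : ℕ, 4 ≤ n → Even n → ∀ r : ℕ, 1 ≤ r → r ≤ n →
      ∃ 𝒢 : TemporalGraph (Fin n),
        n ^ 2 ≤ 𝒢.lifetime ∧ 𝒢.IsConnectedTG ∧ 𝒢.orbitNumber = r ∧
        ∀ (t' : ℕ) (W : ℕ → Fin n), 𝒢.IsWalk W 1 t' →
          TemporalGraph.visited W 1 t' = Set.univ →
          c * r * n ≤ (t' : ℝ) - 1 := by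
  refine ⟨1 / 12, by norm_num, fun n hn _ r hr hrn => ⟨TemporalGraph.starTG n r,
    Nat.le_add_right _ _, TemporalGraph.starTG_connected hn hr hrn,
    TemporalGraph.starTG_orbitNumber hn hr hrn, fun t' W hW hv => ?_⟩⟩
  have h := TemporalGraph.starTG_lower_bound hn hr hrn hW hv
  have h1 : 1 ≤ t' := hW.2.1
  have h2 : ((r * n : ℕ) : ℝ) ≤ ((12 * (t' - 1) : ℕ) : ℝ) := by exact_mod_cast h
  push_cast [Nat.cast_sub h1] at h2
  linarith
end

section
/- Let m > 10 be an odd integer, n = 2^m − 1, and K = ⌊n/16⌋. Define the temporal graph 𝒢 on vertex set ℤ_n as follows: during phase 1 (time steps 1 through K) each snapshot is the circulant cycle C_0 in which vertex u is adjacent to (u+1) mod n and (u−1) mod n; during phase i for each 2 ≤ i ≤ (m−7)/2 (the next K time steps each) each snapshot is the circulant cycle C_i in which u is adjacent to (u + 2^{2i}) mod n and (u − 2^{2i}) mod n. Then for any two move sequences d₁, d₂ : {1, …, K·(m−7)/2} → {−1, 0, +1} there exist start vertices u, v ∈ ℤ_n such that the positions P₁(t) = u + Σ_{s ≤ t} d₁(s)·2^{2·i(s)}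 mod n and P₂(t) = v + Σ_{s ≤ t} d₂(s)·2^{2·i(s)} mod n (where i(s) denotes the index of the circulant cycle used at time step s, with i(s) = 0 in phase 1) satisfy P₁(t) ≠ P₂(t) for every time step t with 0 ≤ t ≤ K·(m−7)/2. Consequently, two label-oblivious agents on 𝒢 require at least K·(m−7)/2 = Ω(n log n) time steps to meet. -/
/-!
The two agents meet at time `t` exactly when `v - u` equals the accumulated displacement
difference `D t`, so it suffices to find `x : ZMod n` outside the range of `D`.

Within one phase with shift `2 ^ r` the difference changes by at most `2` units of `2 ^ r` per step,
so its values lie in an arc `{a + j * 2 ^ r : |j| ≤ 2 * K}`; since `2 ^ m = 1` in `ZMod n`, phase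
`1` may be taken to have `r = m`, and phase `i ≥ 2` has `r = 2 * i`. A single `x` avoiding one arc
for every `r` with `4 ≤ r ≤ m` is built bit by bit (`exists_avoiding_residue`). Multiplication by
`2 ^ (m - r)` rotates the `m`-bit expansion so that bit `r - 1` becomes the leading one. Two numbers
that agree on the bits below `r - 1` and differ in bit `r - 1` are thus, after the rotation, about
`n / 2` apart, whereas the rotated arc has diameter `4 * K < n / 4`. Hence (`not_both_in_arc`) at
least one of the two values of bit `r - 1` keeps `x` off the arc, whatever the higher bits are.
-/

open scoped BigOperators

/-- The phase of time step `s` in the lower-bound construction with phase duration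
`K`: time steps `1, …, K` form phase `1`, the next `K` time steps phase `2`, etc. -/
def lbPhase (K s : ℕ) : ℕ := (s - 1) / K + 1

/-- The exponent of the shift at time step `s`: in phase `1` the snapshot is the
cycle `C₀` with shift `2⁰ = 1`; in phase `i ≥ 2` it is the circulant cycle `Cᵢ`
with shift `2^{2i}`. -/
def lbShiftExp (K s : ℕ) : ℕ := if lbPhase K s = 1 then 0 else 2 * lbPhase K s

/-- The position of an agent with start vertex `u ∈ ℤ_n` and move sequence
`d : time steps → {-1, 0, 1}` after time step `t`. -/
def lbPos (n : ℕ) (u : ZMod n) (d : ℕ → ℤ) (K t : ℕ) : ZMod n :=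
  u + ∑ s ∈ Finset.Icc 1 t, (d s : ZMod n) * (2 : ZMod n) ^ lbShiftExp K s

/-- Two numbers below `2 ^ m` whose residues modulo `2 ^ (R + 1)` differ exactly in bit `R` are too
far apart to lie on a common arc of radius `2 * K` and step `2 ^ (R + 1)`. -/
lemma not_both_in_arc {m n K R : ℕ} (hn : n = 2 ^ m - 1) (hK : K = n / 16)
    (hR : 3 ≤ R) (hRm : R + 1 ≤ m) (a : ZMod n) (x y k j j' : ℤ)
    (hx0 : 0 ≤ x) (hx : x < 2 ^ m) (hy0 : 0 ≤ y) (hy : y < 2 ^ m)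
    (hyx : y - x = 2 ^ R + 2 ^ (R + 1) * k)
    (hj : |j| ≤ 2 * K) (hj' : |j'| ≤ 2 * K)
    (hxa : (x : ZMod n) = a + j * 2 ^ (R + 1))
    (hya : (y : ZMod n) = a + j' * 2 ^ (R + 1)) : False := by
  obtain ⟨p, rfl⟩ : ∃ p, m = R + 1 + p := ⟨m - (R + 1), by omega⟩
  have hpow : (2 : ℤ) ^ (R + 1 + p) = 16 * (2 ^ (R - 3) * 2 ^ p) := by
    obtain ⟨c, rfl⟩ : ∃ c, R = c + 3 := ⟨R - 3, by omega⟩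
    simp only [Nat.add_sub_cancel]; ring
  have hpowN : 2 ^ (R + 1 + p) = 16 * (2 ^ (R - 3) * 2 ^ p) := by exact_mod_cast hpow
  have hnz : (n : ℤ) = 2 ^ (R + 1 + p) - 1 := by
    have : 1 ≤ 2 ^ (R + 1 + p) := Nat.one_le_two_pow
    rw [hn]; push_cast [this]; rfl
  have htwo : (2 : ZMod n) ^ (R + 1 + p) = 1 := by
    have h : (((n : ℤ)) : ZMod n) = 0 := by simp
    rw [hnz] at h; push_cast at h
    exact sub_eq_zero.mp h
  -- Rotating the relation between `x` and `y` by `2 ^ p` turns the steps of the arc into units.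
  have hcong : ((2 ^ (R + p) + k - (j' - j) : ℤ) : ZMod n) = 0 := by
    have h1 : ((y - x : ℤ) : ZMod n) = (j' - j) * 2 ^ (R + 1) := by
      push_cast; rw [hxa, hya]; ring
    rw [hyx] at h1; push_cast at h1 ⊢
    linear_combination 2 ^ p * h1 + ((j' - j) - k : ZMod n) * htwo
  have hdvd : (n : ℤ) ∣ 2 ^ (R + p) + k - (j' - j) := (ZMod.intCast_zmod_eq_zero_iff_dvd _ _).mp hcong
  have hRpos : (0 : ℤ) < 2 ^ R := by positivity
  have hk : |k| ≤ 2 ^ p := by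
    have e : (2 : ℤ) ^ (R + 1 + p) = 2 ^ R * (2 * 2 ^ p) := by ring
    have e2 : y - x = 2 ^ R * (2 * k + 1) := by rw [hyx]; ring
    have u1 : 2 ^ R * (2 * k + 1) < (2 : ℤ) ^ R * (2 * 2 ^ p) := by rw [← e, ← e2]; linarith
    have u2 : (2 : ℤ) ^ R * (-(2 * 2 ^ p)) < 2 ^ R * (2 * k + 1) := by
      rw [mul_neg, ← e, ← e2]; linarith
    have := lt_of_mul_lt_mul_left u1 hRpos.le
    have := lt_of_mul_lt_mul_left u2 hRpos.le
    rw [abs_le]; constructor <;> omega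
  have hhalf : (2 : ℤ) ^ (R + p) = 8 * (2 ^ (R - 3) * 2 ^ p) := by
    have : (2 : ℤ) ^ (R + 1 + p) = 2 * 2 ^ (R + p) := by ring
    omega
  have hple : (2 : ℤ) ^ p ≤ 2 ^ (R - 3) * 2 ^ p :=
    le_mul_of_one_le_left (by positivity) (one_le_pow₀ (by norm_num))
  have hppos : (0 : ℤ) < 2 ^ p := by positivity
  rw [abs_le] at hj hj' hk
  rw [hhalf] at hdvd
  rw [hpow] at hnz
  generalize (2 : ℤ) ^ (R - 3) * 2 ^ p = Q at *
  generalize (2 : ℤ) ^ p = P at *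
  have hKQ : (K : ℤ) = Q - 1 := by omega
  have := Int.le_of_dvd (by omega) hdvd
  omega

/-- Given one arc of radius `2 * K` and step `2 ^ r` for each `r` with `4 ≤ r ≤ R`, some residue
modulo `2 ^ R` has all its representatives below `2 ^ m` off all of these arcs. -/
lemma exists_avoiding_residue {m n K : ℕ} (hn : n = 2 ^ m - 1) (hK : K = n / 16)
    (a : ℕ → ZMod n) (R : ℕ) (hR : R ≤ m) :
    ∃ l : ℤ, 0 ≤ l ∧ l < 2 ^ R ∧ ∀ x : ℤ, 0 ≤ x → x < 2 ^ m → (∃ k, x = l + 2 ^ R * k) →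
      ∀ r, 4 ≤ r → r ≤ R → ∀ j : ℤ, |j| ≤ 2 * K → (x : ZMod n) ≠ a r + j * 2 ^ r := by
  induction R with
  | zero =>
    refine ⟨0, le_rfl, by norm_num, ?_⟩
    intro x _ _ _ r h4 h0
    omega
  | succ R ih =>
    obtain ⟨l, hl0, hl, hav⟩ := ih (by omega)
    have hpos : (0 : ℤ) < 2 ^ R := by positivity
    by_contra hcon
    push Not at hcon
    obtain ⟨x, hx0, hx, ⟨k, hk⟩, r, hr4, hrR, j, hj, hxj⟩ := hcon l hl0 (by rw [pow_succ]; linarith)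
    obtain ⟨y, hy0, hy, ⟨k', hk'⟩, r', hr4', hrR', j', hj', hyj⟩ :=
      hcon (l + 2 ^ R) (by linarith) (by rw [pow_succ]; linarith)
    -- By the choice of `l`, both candidates can only fail on the new arc `r = R + 1`.
    have hr : r = R + 1 := by
      by_contra hne
      exact hav x hx0 hx ⟨2 * k, by rw [hk]; ring⟩ r hr4 (by omega) j hj hxj
    have hr' : r' = R + 1 := by
      by_contra hne
      exact hav y hy0 hy ⟨1 + 2 * k', by rw [hk']; ring⟩ r' hr4' (by omega) j' hj' hyj
    subst hr hr'
    exact not_both_in_arc hn hK (by omega) hR (a (R + 1)) x y (k' - k) j j' hx0 hx hy0 hy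
      (by rw [hk, hk']; ring) hj hj' hxj hyj

/-- During phase `q + 1` the displacement difference stays on an arc around its value at the end of
phase `q`. -/
lemma diff_in_phase {n K : ℕ} (e : ℕ → ℤ) (he : ∀ s, |e s| ≤ 2) (q i : ℕ) (hi : i ≤ K) :
    ∃ j : ℤ, |j| ≤ 2 * i ∧ ∑ s ∈ Finset.Icc 1 (q * K + i), (e s : ZMod n) * 2 ^ lbShiftExp K s =
      ∑ s ∈ Finset.Icc 1 (q * K), (e s : ZMod n) * 2 ^ lbShiftExp K s +
        j * 2 ^ (if q = 0 then 0 else 2 * (q + 1)) := by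
  induction i with
  | zero => exact ⟨0, by simp, by simp⟩
  | succ i ih =>
    obtain ⟨j, hj, hs⟩ := ih (by omega)
    refine ⟨j + e (q * K + (i + 1)), ?_, ?_⟩
    · have := abs_add_le j (e (q * K + (i + 1)))
      have := he (q * K + (i + 1))
      push_cast; linarith
    · have hexp : lbShiftExp K (q * K + (i + 1)) = if q = 0 then 0 else 2 * (q + 1) := by
        have : (q * K + (i + 1) - 1) / K = q := by
          rw [← add_assoc, Nat.add_sub_cancel, mul_comm, Nat.mul_add_div (by omega),
            Nat.div_eq_of_lt (by omega), add_zero]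
        simp only [lbShiftExp, lbPhase, this, Nat.add_eq_right]
      rw [← add_assoc, Finset.sum_Icc_succ_top (by omega), hs, add_assoc (q * K) i 1, hexp]
      push_cast; ring

/-- core of Theorem 6.2: in the single-orbit circulant lower-bound
construction (`n = 2^m - 1`, phase duration `K = ⌊n/16⌋`, `(m-7)/2` phases), for any
two move sequences `d₁, d₂` with values in `{-1, 0, +1}` there are start vertices
`u, v ∈ ℤ_n` such that the two agents' positions differ at every time step
`t ≤ K·(m-7)/2`; hence two label-oblivious agents need `Ω(n log n)` steps to meet. -/
theorem rendezvous_lower_bound_circulant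
    (m : ℕ) (hm : 10 < m) (hmodd : Odd m)
    (n : ℕ) (hn : n = 2 ^ m - 1)
    (K : ℕ) (hK : K = n / 16)
    (numPhases : ℕ) (hphases : numPhases = (m - 7) / 2)
    (d₁ d₂ : ℕ → ℤ)
    (hd₁ : ∀ s, d₁ s = -1 ∨ d₁ s = 0 ∨ d₁ s = 1)
    (hd₂ : ∀ s, d₂ s = -1 ∨ d₂ s = 0 ∨ d₂ s = 1) :
    ∃ u v : ZMod n, ∀ t ≤ K * numPhases,
      lbPos n u d₁ K t ≠ lbPos n v d₂ K t := by
  have he : ∀ s, |d₁ s - d₂ s| ≤ 2 := by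
    intro s
    rw [abs_le]
    rcases hd₁ s with h | h | h <;> rcases hd₂ s with h' | h' | h' <;> rw [h, h'] <;> norm_num
  have hpow : 2 ^ 11 ≤ 2 ^ m := Nat.pow_le_pow_right (by norm_num) (by omega)
  have hKpos : 0 < K := by omega
  have htwo : (2 : ZMod n) ^ m = 1 := by
    have h : ((n + 1 : ℕ) : ZMod n) = 1 := by simp
    rw [show n + 1 = 2 ^ m by omega] at h
    exact_mod_cast h
  set D : ℕ → ZMod n := fun t =>
    ∑ s ∈ Finset.Icc 1 t, ((d₁ s - d₂ s : ℤ) : ZMod n) * 2 ^ lbShiftExp K s with hD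
  obtain ⟨x, hx0, hx, hav⟩ := exists_avoiding_residue hn hK
    (fun r => if r = m then D 0 else D ((r / 2 - 1) * K)) m le_rfl
  refine ⟨0, (x : ZMod n), fun t ht heq => ?_⟩
  have hxD : (x : ZMod n) = D t := by
    simp only [lbPos, hD, Int.cast_sub, sub_mul, Finset.sum_sub_distrib] at heq ⊢
    linear_combination -heq
  -- `t = q * K + i` with `i ≤ K` and `q < numPhases`; `t = 0` is counted to the first phase.
  obtain ⟨q, i, hi, hq, rfl⟩ : ∃ q i, i ≤ K ∧ q < numPhases ∧ t = q * K + i := by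
    rcases Nat.eq_zero_or_pos t with h0 | hpos
    · exact ⟨0, 0, by omega, by omega, by simp [h0]⟩
    · have h1 := Nat.div_add_mod (t - 1) K
      have h2 := Nat.mod_lt (t - 1) hKpos
      refine ⟨(t - 1) / K, (t - 1) % K + 1, by omega, ?_, by rw [mul_comm]; omega⟩
      exact Nat.div_lt_of_lt_mul (by omega)
  obtain ⟨j, hj, hs⟩ := diff_in_phase (n := n) _ he q i hi
  have hjK : |j| ≤ 2 * K := hj.trans (by exact_mod_cast Nat.mul_le_mul_left 2 hi)
  rcases Nat.eq_zero_or_pos q with rfl | hqpos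
  · refine hav x hx0 hx ⟨0, by ring⟩ m (by omega) le_rfl j hjK ?_
    rw [if_pos rfl, hxD, htwo]
    simpa [hD] using hs
  · refine hav x hx0 hx ⟨0, by ring⟩ (2 * (q + 1)) (by omega) (by omega) j hjK ?_
    rw [if_neg (by omega), hxD, show 2 * (q + 1) / 2 - 1 = q by omega]
    simpa only [hD, if_neg hqpos.ne'] using hs
end

section
/- There exists a constant c > 0 such that for infinitely many n there is a connected temporal graph 𝒢 on n vertices with lifetime at least n² whose orbit number |𝒢/Aut(𝒢)| equals 1, such that every temporal walk in 𝒢 that visits all n vertices spans at least c·n·log n time steps. -/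
/-!
The vertex set is `ZMod n` with `n = 4 ^ m + 1`. Time is cut into phases of length `T = n / 8`, and
in phase `q` the snapshot is the cycle in which `u` and `v` are adjacent iff `4 ^ j * (v - u) = ± 1`,
where `j = q % m`. As `4 ^ j` is a unit modulo the odd number `n`, every snapshot is connected, and
all translations are automorphisms, so there is a single orbit.

During a phase of index `j`, the quantity `4 ^ j * W s` moves by at most `1` per time step, so it
stays within distance `T` of a fixed residue `α j` (`exists_center`). A walk spanning fewer than
`(m - 1) * T` time steps meets at most `m` consecutive phases, so each index `j < m` occurs for at
most one phase. Because the multipliers `4 ^ j` are lacunary, a nested-interval argument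
(`exists_avoiding`) produces an `x` for which `4 ^ j * x` is at distance more than `T` from `α j`
for every `j < m`; this vertex is not visited. Hence an exploration spans at least `(m - 1) * T`
time steps, which is of order `n * log n`.
-/

open scoped BigOperators

/-- The cycle on `ZMod n` in which multiplication by `a` turns edges into differences `± 1`. -/
def dilatedCycle (n : ℕ) (a : ZMod n) : SimpleGraph (ZMod n) where
  Adj u v := u ≠ v ∧ (a * (v - u) = 1 ∨ a * (v - u) = -1)
  symm := ⟨by
    rintro u v ⟨h, h'⟩
    refine ⟨h.symm, ?_⟩
    have : a * (u - v) = -(a * (v - u)) := by ring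
    rcases h' with h' | h' <;> rw [this, h'] <;> simp⟩
  loopless := ⟨fun _ h => h.1 rfl⟩

/-- The temporal graph on `ZMod n` of lifetime `n ^ 2` whose snapshots run cyclically through the
dilated cycles with multipliers `4 ^ 0, …, 4 ^ (m - 1)`, each kept for `T` time steps. -/
def phaseGraph (n m T : ℕ) [NeZero n] : TemporalGraph (ZMod n) where
  lifetime := n ^ 2
  snap s := dilatedCycle n (4 ^ (s / T % m))

lemma dilatedCycle_connected (n : ℕ) (a g : ZMod n) (h : a * g = 1) :
    (dilatedCycle n a).Connected := by
  have key : ∀ (u : ZMod n) (k : ℕ), (dilatedCycle n a).Reachable u (u + k * g) := by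
    intro u k
    induction k with
    | zero => simp
    | succ k ih =>
      refine ih.trans ?_
      by_cases he : u + k * g = u + (k + 1 : ℕ) * g
      · rw [← he]
      · refine SimpleGraph.Adj.reachable ⟨he, Or.inl ?_⟩
        push_cast
        linear_combination h
  have : Nonempty (ZMod n) := ⟨0⟩
  refine ⟨fun u v => ?_⟩
  obtain ⟨z, hz⟩ := ZMod.intCast_surjective (a * (v - u))
  rcases Int.eq_nat_or_neg z with ⟨k, rfl | rfl⟩
  · have := key u k
    have e : u + (k : ZMod n) * g = v := by
      push_cast at hz
      rw [hz]
      linear_combination (v - u) * h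
    rwa [e] at this
  · have := key v k
    have e : v + (k : ZMod n) * g = u := by
      push_cast at hz
      linear_combination (-g) * hz - (v - u) * h
    rw [e] at this
    exact this.symm

lemma phaseGraph_orbitNumber (n m T : ℕ) [NeZero n] : (phaseGraph n m T).orbitNumber = 1 := by
  have h : ∀ u, (phaseGraph n m T).orbit u = Set.univ := by
    intro u
    refine Set.eq_univ_of_forall fun v => ⟨Equiv.addRight (v - u), ?_, by simp⟩
    intro t _ _ x y
    simp [phaseGraph, dilatedCycle]
  have : Set.range (phaseGraph n m T).orbit = {Set.univ} := by
    ext S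
    simp [h, eq_comm]
  rw [TemporalGraph.orbitNumber, this, Set.ncard_singleton]

/-- The nested-interval argument: after treating the multipliers `4 ^ 0, …, 4 ^ (i - 1)`, an
interval of length `2 * n / 4 ^ i` is left in which all integers avoid all the arcs. Multiplied by
`4 ^ i` it has length `2 * n`, so it contains a whole gap between two consecutive lifts of the
`i`-th arc, and the middle half of this gap is the next interval. -/
lemma exists_avoiding_interval (n T : ℕ) (hn : 0 < n) (hT : 4 * T < n) (α : ℕ → ℤ) (i : ℕ) :
    ∃ a : ℝ, ∀ x : ℤ, a ≤ x → (x : ℝ) ≤ a + 2 * n / 4 ^ i →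
      ∀ j < i, ∀ d k : ℤ, |d| ≤ T → 4 ^ j * x ≠ α j + d + k * n := by
  induction i with
  | zero => exact ⟨0, by simp⟩
  | succ i ih =>
    obtain ⟨a, ha⟩ := ih
    have hn' : (0 : ℝ) < n := by exact_mod_cast hn
    have hT' : 4 * (T : ℝ) < n := by exact_mod_cast hT
    have hT0 : (0 : ℝ) ≤ T := by positivity
    set P : ℝ := 4 ^ i with hP
    have hP0 : 0 < P := by positivity
    obtain ⟨k, hk1, hk2⟩ : ∃ k : ℤ, P * a - α i ≤ k * n ∧ (k : ℝ) * n < P * a - α i + n := by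
      refine ⟨⌈(P * a - α i) / n⌉, ?_, ?_⟩
      · exact (div_le_iff₀ hn').1 (Int.le_ceil _)
      · have := Int.ceil_lt_add_one ((P * a - α i) / n)
        have h2 := mul_lt_mul_of_pos_right this hn'
        rwa [add_mul, div_mul_cancel₀ _ hn'.ne', one_mul] at h2
    refine ⟨(α i + k * n + n / 4) / P, fun x hx1 hx2 => ?_⟩
    have h1 : α i + k * n + n / 4 ≤ P * x := by
      rw [div_le_iff₀ hP0] at hx1
      linarith
    have h2 : P * x ≤ α i + k * n + 3 * n / 4 := by
      have e : (α i + k * n + n / 4) / P + 2 * n / 4 ^ (i + 1)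
          = (α i + k * n + 3 * n / 4) / P := by
        rw [pow_succ, ← hP]
        field_simp
        ring
      rw [e, le_div_iff₀ hP0] at hx2
      linarith
    intro j hj d k' hd
    rcases Nat.lt_succ_iff_lt_or_eq.1 hj with hj | rfl
    · refine ha x ?_ ?_ j hj d k' hd
      · refine le_of_mul_le_mul_left ?_ hP0
        linarith
      · refine le_of_mul_le_mul_left ?_ hP0
        rw [mul_add, mul_div_cancel₀ _ hP0.ne']
        linarith
    · intro he
      have he' : P * x = α j + d + k' * n := by
        rw [hP]
        exact_mod_cast he
      obtain ⟨hd1, hd2⟩ := abs_le.1 hd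
      have hd1' : -(T : ℝ) ≤ d := by exact_mod_cast hd1
      have hd2' : (d : ℝ) ≤ T := by exact_mod_cast hd2
      -- `k' - k` would be an integer strictly between `0` and `1`
      have l1 : (k : ℝ) < k' := by
        refine lt_of_mul_lt_mul_right ?_ hn'.le
        linarith
      have l2 : (k' : ℝ) < k + 1 := by
        refine lt_of_mul_lt_mul_right ?_ hn'.le
        linarith
      have l1' : k < k' := by exact_mod_cast l1
      have l2' : k' < k + 1 := by exact_mod_cast l2
      omega

/-- Any family of `m` arcs of radius `T < n / 4`, pulled back along the multipliers `4 ^ j`, leaves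
a residue uncovered when `4 ^ m ≤ n`. -/
lemma exists_avoiding (n m T : ℕ) (hn : 4 ^ m ≤ n) (hT : 4 * T < n) (α : ℕ → ℤ) :
    ∃ x : ZMod n, ∀ j < m, ∀ d : ℤ, |d| ≤ T → 4 ^ j * x ≠ (α j : ZMod n) + (d : ZMod n) := by
  have hn0 : 0 < n := lt_of_lt_of_le (by positivity) hn
  obtain ⟨a, ha⟩ := exists_avoiding_interval n T hn0 hT α m
  refine ⟨(⌈a⌉ : ℤ), fun j hj d hd he => ?_⟩
  have hlen : (1 : ℝ) ≤ 2 * n / 4 ^ m := by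
    rw [le_div_iff₀ (by positivity)]
    have : (4 : ℝ) ^ m ≤ n := by exact_mod_cast hn
    linarith [(Nat.cast_nonneg n : (0 : ℝ) ≤ n)]
  have he' : ((4 ^ j * ⌈a⌉ - (α j + d) : ℤ) : ZMod n) = 0 := by
    push_cast
    rw [he, sub_self]
  obtain ⟨k, hk⟩ := (ZMod.intCast_zmod_eq_zero_iff_dvd _ n).1 he'
  refine ha ⌈a⌉ (Int.le_ceil a) ?_ j hj d k hd (by linarith)
  linarith [Int.ceil_lt_add_one a]

/-- While all snapshots have the multiplier `4 ^ j`, the value `4 ^ j * W s` drifts by at most one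
per time step. -/
lemma drift (n m T : ℕ) [NeZero n] (W : ℕ → ZMod n) (t t' j s₀ : ℕ)
    (hW : (phaseGraph n m T).IsWalk W t t') (h0 : t ≤ s₀) (r : ℕ) (hr : s₀ + r ≤ t')
    (hj : ∀ s, s₀ ≤ s → s < s₀ + r → s / T % m = j) :
    ∃ d : ℤ, |d| ≤ r ∧ 4 ^ j * W (s₀ + r) = 4 ^ j * W s₀ + (d : ZMod n) := by
  induction r with
  | zero => exact ⟨0, by simp⟩
  | succ r ih =>
    obtain ⟨d, hd, he⟩ := ih (by omega) (fun s h1 h2 => hj s h1 (by omega))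
    have hd' := abs_le.1 hd
    rcases hW.2.2.2 (s₀ + r) (by omega) (by omega) with h | h
    · refine ⟨d, by push_cast; omega, ?_⟩
      rw [← he, ← h]
      rfl
    · have hs := hj (s₀ + r) (by omega) (by omega)
      simp only [phaseGraph, dilatedCycle, hs] at h
      rcases h.2 with h | h
      · refine ⟨d + 1, by rw [abs_le]; push_cast; omega, ?_⟩
        push_cast
        change 4 ^ j * W (s₀ + r + 1) = _
        linear_combination h + he
      · refine ⟨d - 1, by rw [abs_le]; push_cast; omega, ?_⟩
        push_cast
        change 4 ^ j * W (s₀ + r + 1) = _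
        linear_combination h + he

/-- A walk spanning fewer than `(m - 1) * T` time steps meets at most one phase of index `j`, and
in it `4 ^ j * W s` stays within distance `T` of a fixed residue. -/
lemma exists_center (n m T : ℕ) [NeZero n] (hT : 0 < T) (W : ℕ → ZMod n) (t t' : ℕ)
    (hW : (phaseGraph n m T).IsWalk W t t') (hlt : t' < t + (m - 1) * T) (j : ℕ) :
    ∃ α : ℤ, ∀ s, t ≤ s → s ≤ t' → s / T % m = j →
      ∃ d : ℤ, |d| ≤ T ∧ 4 ^ j * W s = (α : ZMod n) + (d : ZMod n) := by
  by_cases hex : ∃ s, t ≤ s ∧ s ≤ t' ∧ s / T % m = j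
  · obtain ⟨s₁, h1, h2, h3⟩ := hex
    set q := s₁ / T with hq
    have hm : 0 < m := by
      rcases Nat.eq_zero_or_pos m with rfl | h
      · have := hW.2.1
        simp at hlt
        omega
      · exact h
    have range : ∀ s, t ≤ s → s ≤ t' → t / T ≤ s / T ∧ s / T ≤ t / T + (m - 1) := by
      intro s hs hs'
      refine ⟨Nat.div_le_div_right hs, ?_⟩
      rw [← Nat.add_mul_div_right _ _ hT]
      exact Nat.div_le_div_right (by omega)
    have uniq : ∀ s, t ≤ s → s ≤ t' → s / T % m = j → s / T = q := by
      intro s hs hs' hsj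
      have r1 := range s hs hs'
      have r2 := range s₁ h1 h2
      rw [← hq] at r2
      have hc : s / T ≡ q [MOD m] := hsj.trans h3.symm
      refine Nat.ModEq.eq_of_abs_lt hc ?_
      rw [abs_lt]
      omega
    obtain ⟨α, hα⟩ := ZMod.intCast_surjective (4 ^ j * W (max t (q * T)))
    refine ⟨α, fun s hs hs' hsj => ?_⟩
    have hsq := uniq s hs hs' hsj
    have hlow : q * T ≤ s := by
      rw [← hsq]
      exact Nat.div_mul_le_self s T
    have hup : s < q * T + T := by
      rw [← hsq]
      exact Nat.lt_div_mul_add hT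
    obtain ⟨r, hr⟩ := Nat.exists_eq_add_of_le (max_le hs hlow)
    have hrT : r ≤ T := by
      have := le_max_right t (q * T)
      omega
    obtain ⟨d, hd, he⟩ := drift n m T W t t' j (max t (q * T)) hW (le_max_left _ _) r (by omega) (by
      intro u hu1 hu2
      have hu : u / T = q := by
        have := le_max_right t (q * T)
        refine Nat.div_eq_of_lt_le (by omega) ?_
        rw [Nat.succ_mul]
        omega
      rw [hu, h3])
    refine ⟨d, hd.trans (by exact_mod_cast hrT), ?_⟩
    rw [hr, he, hα]
  · exact ⟨0, fun s h1 h2 h3 => (hex ⟨s, h1, h2, h3⟩).elim⟩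

lemma exploration_span (n m T : ℕ) [NeZero n] (hm : 0 < m) (hn : 4 ^ m ≤ n) (hT : 0 < T)
    (hTn : 4 * T < n) (t t' : ℕ) (W : ℕ → ZMod n) (hW : (phaseGraph n m T).IsWalk W t t')
    (hv : TemporalGraph.visited W t t' = Set.univ) : t + (m - 1) * T ≤ t' := by
  by_contra! hlt
  choose α hα using exists_center n m T hT W t t' hW hlt
  obtain ⟨x, hx⟩ := exists_avoiding n m T hn hTn α
  have hxv : x ∈ TemporalGraph.visited W t t' := hv ▸ Set.mem_univ x
  obtain ⟨s, ⟨hs, hs'⟩, rfl⟩ := hxv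
  obtain ⟨d, hd, he⟩ := hα _ s hs hs' rfl
  exact hx _ (Nat.mod_lt _ hm) d hd he

lemma phaseGraph_connected (m T : ℕ) (hm : 0 < m) :
    (phaseGraph (4 ^ m + 1) m T).IsConnectedTG := by
  intro t _ _
  -- `4 * 4 ^ (m - 1) = -1`, so `4` is a unit
  have h4 : (4 : ZMod (4 ^ m + 1)) * (-4 ^ (m - 1)) = 1 := by
    have h0 : ((4 ^ m + 1 : ℕ) : ZMod (4 ^ m + 1)) = 0 := ZMod.natCast_self _
    push_cast at h0
    have e : (4 : ZMod (4 ^ m + 1)) ^ m = 4 * 4 ^ (m - 1) := by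
      rw [← pow_succ', Nat.sub_add_cancel hm]
    linear_combination -h0 + e
  refine dilatedCycle_connected _ _ ((-4 ^ (m - 1)) ^ (t / T % m)) ?_
  rw [← mul_pow, h4, one_pow]

/-- Corollary 6.3: there is a constant `c > 0` such that for infinitely
many `n` there is a connected temporal graph on `n` vertices with lifetime at least
`n²` and orbit number `1`, in which every temporal walk visiting all vertices spans at
least `c·n·log₂ n` time steps. -/
theorem texp_lower_bound_nlogn :
    ∃ c : ℝ, 0 < c ∧
      ∀ N : ℕ, ∃ n : ℕ, N ≤ n ∧
        ∃ 𝒢 : TemporalGraph (Fin n),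
          n ^ 2 ≤ 𝒢.lifetime ∧ 𝒢.IsConnectedTG ∧ 𝒢.orbitNumber = 1 ∧
          ∀ (t t' : ℕ) (W : ℕ → Fin n), 𝒢.IsWalk W t t' →
            TemporalGraph.visited W t t' = Set.univ →
            c * n * Real.logb 2 n ≤ (t' : ℝ) - (t : ℝ) := by
  refine ⟨1 / 100, by norm_num, fun N => ?_⟩
  obtain ⟨m, hm2, hmN⟩ : ∃ m : ℕ, 2 ≤ m ∧ N ≤ m := ⟨max 2 N, le_max_left _ _, le_max_right _ _⟩
  have hpow : m < 4 ^ m := Nat.lt_pow_self (by norm_num)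
  have h16 : 16 ≤ 4 ^ m := (by norm_num : 16 = 4 ^ 2) ▸ Nat.pow_le_pow_right (by norm_num) hm2
  refine ⟨4 ^ m + 1, by omega, phaseGraph (4 ^ m + 1) m ((4 ^ m + 1) / 8), le_rfl,
    phaseGraph_connected m _ (by omega), phaseGraph_orbitNumber _ _ _, fun t t' W hW hv => ?_⟩
  have hspan := exploration_span (4 ^ m + 1) m ((4 ^ m + 1) / 8) (by omega) (by omega) (by omega)
    (by omega) t t' W hW hv
  set n := 4 ^ m + 1 with hn
  have hT : n ≤ 16 * (n / 8) := by omega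
  have hT' : (n : ℝ) ≤ 16 * (n / 8 : ℕ) := by exact_mod_cast hT
  have hspan' : (t : ℝ) + ((m : ℝ) - 1) * (n / 8 : ℕ) ≤ t' := by
    have : ((t + (m - 1) * (n / 8) : ℕ) : ℝ) ≤ t' := by exact_mod_cast hspan
    rw [Nat.cast_add, Nat.cast_mul, Nat.cast_sub (by omega)] at this
    simpa using this
  have hlog : Real.logb 2 n ≤ 3 * m := by
    rw [Real.logb_le_iff_le_rpow (by norm_num) (by positivity)]
    have h8 : n ≤ 2 ^ (3 * m) := by
      have : 4 ^ m * 2 ≤ 4 ^ m * 2 ^ m := Nat.mul_le_mul_left _ (Nat.le_self_pow (by omega) 2)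
      have e : 2 ^ (3 * m) = 4 ^ m * 2 ^ m := by
        rw [← Nat.mul_pow, pow_mul]
        norm_num
      omega
    have : (n : ℝ) ≤ 2 ^ (3 * m) := by exact_mod_cast h8
    exact_mod_cast this
  have hm2' : (2 : ℝ) ≤ m := by exact_mod_cast hm2
  have hn0 : (0 : ℝ) ≤ n := by positivity
  have b1 : 1 / 100 * (n : ℝ) * Real.logb 2 n ≤ 1 / 100 * n * (3 * m) :=
    mul_le_mul_of_nonneg_left hlog (by positivity)
  have b2 : ((m : ℝ) - 1) * n ≤ (m - 1) * (16 * (n / 8 : ℕ)) :=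
    mul_le_mul_of_nonneg_left hT' (by linarith)
  have b3 : (m : ℝ) / 2 * n ≤ (m - 1) * n := mul_le_mul_of_nonneg_right (by linarith) hn0
  have b4 : 0 ≤ (m : ℝ) * n := by positivity
  linarith
end
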